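/- arXiv:2012.06529 — 4 statements merged into one kernel-verified Lean document; each statement's English description precedes it below -/
import Mathlib

section
/- Let Φ be a uniformly contracting C^{1+γ} smooth IFS on a compact interval I (γ > 0), with two maps having distinct fixed points, let p be a strictly positive probability vector, and assume Λ_c = {0}. Then for every ε > 0 there exists M (depending only on ε, p, Φ) such that for all k, h, h' > 0 with min(h, k−h) ≥ M and every cell A_η of the partition 𝒜^h, there exists a measurable subset Ā ⊆ A_η with: (i) ℙ(Ā) ≥ (1−ε)·ℙ(A_η); (ii) ℙ(𝒜_k^{h,h'}(ξ)) > 0 for every ξ ∈ Ā; (iii) for every ξ ∈ Ā and every subinterval J ⊆ [kχ, kχ+D'], |ℙ_{𝒜_k^{h,h'}(ξ)}({ω : S_{τ_k(ω)}(ω) ∈ J}) − Γ_{𝒜_k^{h,h'}(ξ)}(J)| ≤ ε. -/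
/-!
The derivative cocycle `c` turns `S_m` into a walk with increments in a compact subset of
`(0, ∞)`, and the theorem is a uniform renewal theorem for the overshoot of this walk over the level
`kχ`, conditioned on the first letters and on the tail seen just before the crossing. The estimate
holds for every `ξ` in the cell, so `Ā` can be taken to be the whole cell `A_η`.

Read backwards from the last letter to the first, the walk is the Markov chain
`(ω, s) ↦ (aω, s - c(a, ω))` on `Ω × ℝ`, with transition operator `TT` (`transfer`). The crossing of
the level `t` happens at exactly one step, so the probability of crossing with prescribed prefix,
tail and landing interval is a potential `∑ TT^i F` of an indicator function of the time variable,
up to a bounded Lipschitz recentring that accounts for the dependence of the prefix sum on the tail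
(`wsum_lip`, `passage_indicator`). It remains to show that such potentials converge, uniformly over
the recentring, to the length of the interval divided by `χ`.

* `liouville`: bounded uniformly continuous harmonic functions of the chain are constant. By a
  maximum principle on limits of translates (`period_le`), the holonomy of every loop at a fixed
  point `aaa⋯` is a period of each of them. If these holonomies were contained in some `t ℤ`, the
  holonomy function `ψ` would give a Lipschitz `φ = exp (2π i ψ / t)` that puts `2π / t ≠ 0` into
  `Λ_c`; this is where `Λ_c = {0}` enters. Otherwise the periods are dense, a harmonic function does
  not depend on time, and it is constant because the walk contracts the symbolic metric.
* `pot_osc`: potentials of hat functions are bounded and equicontinuous (`visits`, `TT_pow_lip`),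
  limits of their translates are harmonic, hence constant, and a maximum principle makes this
  uniform for large times.
* `pot_ident`: the constant is forced to be the length divided by `χ` by `S_m / m → χ` almost surely,
  which gives `renewal_hat` and, by approximation of intervals by sums of hats, `renewal_interval`.
* `overshoot`: integrating `renewal_interval` over the tail in `A_η'` gives the limit law `Γ`.
* Bounded distortion (`ContrIFS.distortion`) gives the regularity of `c` and shows that on a cell of
  `𝒜^h` the walk is at height at most `hχ` plus a constant (`fwd_tauT_le`), so that `k - h` large
  leaves enough room for the renewal theorem.
-/

open MeasureTheory Filter Set
open scoped ENNReal Topology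

noncomputable section

/-- `wordComp f ω m = f_{ω 0} ∘ f_{ω 1} ∘ ⋯ ∘ f_{ω (m-1)}`. -/
def wordComp {ι : Type*} (f : ι → ℝ → ℝ) (ω : ℕ → ι) : ℕ → ℝ → ℝ
  | 0 => id
  | m + 1 => wordComp f ω m ∘ f (ω m)

/-- Prepend a symbol to an infinite word. -/
def prepend {ι : Type*} (a : ι) (ω : ℕ → ι) : ℕ → ι := fun m =>
  match m with
  | 0 => a
  | k + 1 => ω k

/-- The metric `d_ρ` on the symbolic space. -/
def dMet {ι : Type*} (ρ : ℝ) (ω ω' : ℕ → ι) : ℝ :=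
  haveI := Classical.propDecidable (ω = ω')
  if ω = ω' then 0 else ρ ^ sInf {m : ℕ | ω m ≠ ω' m}

/-- `κ`-Hölder continuity with respect to the metric `d_ρ`. -/
def IsHolderW {ι : Type*} (κ ρ : ℝ) (φ : (ℕ → ι) → ℂ) : Prop :=
  ∃ H : ℝ, ∀ ω ω', ‖φ ω - φ ω'‖ ≤ H * dMet ρ ω ω' ^ κ

/-- The derivative cocycle `c(a, ω) = -log |f_a'(x_ω)|`. -/
def derivCocycle {ι : Type*} (f : ι → ℝ → ℝ) (xc : (ℕ → ι) → ℝ) (a : ι) (ω : ℕ → ι) : ℝ :=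
  -Real.log |deriv (f a) (xc ω)|

/-- The set `Λ_c` of periods of the derivative cocycle. -/
def LambdaC {ι : Type*} (f : ι → ℝ → ℝ) (xc : (ℕ → ι) → ℝ) (ρ κ : ℝ) : Set ℝ :=
  {θ | ∃ (φ : (ℕ → ι) → ℂ) (u : ℂ), IsHolderW κ ρ φ ∧ (∀ ω, ‖φ ω‖ = 1) ∧ ‖u‖ = 1 ∧
    ∀ (a : ι) (ω : ℕ → ι),
      φ (prepend a ω) = u * Complex.exp (-(((θ * derivCocycle f xc a ω : ℝ) : ℂ)) * Complex.I) * φ ω}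

/-- The left shift on the symbolic space. -/
def shift {ι : Type*} (ω : ℕ → ι) : ℕ → ι := fun i => ω (i + 1)

/-- The random walk `S_m(ω) = -log |f'_{ω|m}(x_{σ^m ω})|`. -/
def Sw {ι : Type*} (f : ι → ℝ → ℝ) (xc : (ℕ → ι) → ℝ) (m : ℕ) (ω : ℕ → ι) : ℝ :=
  -Real.log |deriv (wordComp f ω m) (xc (shift^[m] ω))|

/-- `S̃_m(ω) = -log max_{x ∈ I} |f'_{ω|m}(x)|`. -/
def Swt {ι : Type*} (f : ι → ℝ → ℝ) (a b : ℝ) (m : ℕ) (ω : ℕ → ι) : ℝ :=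
  -Real.log (sSup {s : ℝ | ∃ x ∈ Set.Icc a b, s = |deriv (wordComp f ω m) x|})

/-- The random variable `τ_k(ω) = min {m : S_m(ω) ≥ kχ}`. -/
def tauS {ι : Type*} (f : ι → ℝ → ℝ) (xc : (ℕ → ι) → ℝ) (χ k : ℝ) (ω : ℕ → ι) : ℕ :=
  sInf {m : ℕ | k * χ ≤ Sw f xc m ω}

/-- The stopping time `τ̃_h(ω) = min {m : S̃_m(ω) ≥ hχ}`. -/
def tauT {ι : Type*} (f : ι → ℝ → ℝ) (a b : ℝ) (χ h : ℝ) (ω : ℕ → ι) : ℕ :=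
  sInf {m : ℕ | h * χ ≤ Swt f a b m ω}

/-- The cell of the partition `𝒜^h` containing `ξ`, i.e. the cylinder `A_{ξ|τ̃_h(ξ)}`. -/
def cellA {ι : Type*} (f : ι → ℝ → ℝ) (a b χ h : ℝ) (ξ : ℕ → ι) : Set (ℕ → ι) :=
  {ω | ∀ i < tauT f a b χ h ξ, ω i = ξ i}

/-- The cell `𝒜_k^{h,h'}(ξ) = A_{k,η,η'}` of the partition `𝒜_k^{h,h'}` containing `ξ`. -/
def cell2 {ι : Type*} (f : ι → ℝ → ℝ) (xc : (ℕ → ι) → ℝ) (a b χ k h h' : ℝ)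
    (ξ : ℕ → ι) : Set (ℕ → ι) :=
  {ω | ω ∈ cellA f a b χ h ξ ∧
    shift^[tauS f xc χ k ω - 1] ω ∈ cellA f a b χ h' (shift^[tauS f xc χ k ξ - 1] ξ)}

/-- `X₁(ω) = -log |f'_{ω₁}(x_{σω})|`. -/
def Xone {ι : Type*} (f : ι → ℝ → ℝ) (xc : (ℕ → ι) → ℝ) (ω : ℕ → ι) : ℝ :=
  -Real.log |deriv (f (ω 0)) (xc (shift ω))|

/-- The value `Γ_{A_{k,η,η'}}(J)` of the limiting distribution on a set `J ⊆ ℝ`,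
where `B = A_{η'}`. -/
def GammaVal {ι : Type*} [MeasurableSpace ι] (P : MeasureTheory.Measure (ℕ → ι))
    (f : ι → ℝ → ℝ) (xc : (ℕ → ι) → ℝ) (B : Set (ℕ → ι)) (χ k : ℝ) (J : Set ℝ) : ℝ :=
  (∫ ω in B, (MeasureTheory.volume (Set.Icc (k * χ) (k * χ + Xone f xc ω) ∩ J)).toReal ∂P) /
    (∫ ω in B, Xone f xc ω ∂P)

/-- Conditional probability `ℙ_B(A)` as a real number. -/
def condP {ι : Type*} [MeasurableSpace ι] (P : MeasureTheory.Measure (ℕ → ι))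
    (B A : Set (ℕ → ι)) : ℝ :=
  (P (B ∩ A)).toReal / (P B).toReal

/-! ### The symbolic metric and finite words -/

section Symbolic

variable {ι : Type*}

theorem dMet_nonneg {ρ : ℝ} (hρ : 0 ≤ ρ) (ω ω' : ℕ → ι) : 0 ≤ dMet ρ ω ω' := by
  unfold dMet
  split_ifs
  · exact le_rfl
  · positivity

theorem dMet_le {ρ : ℝ} (h0 : 0 ≤ ρ) (h1 : ρ ≤ 1) {m : ℕ} {ω ω' : ℕ → ι}
    (h : ∀ i < m, ω i = ω' i) : dMet ρ ω ω' ≤ ρ ^ m := by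
  unfold dMet
  split_ifs with he
  · positivity
  · apply pow_le_pow_of_le_one h0 h1
    have hne : {m : ℕ | ω m ≠ ω' m}.Nonempty := by
      by_contra hcon
      rw [not_nonempty_iff_eq_empty] at hcon
      apply he
      funext i
      by_contra hi
      have : i ∈ {m : ℕ | ω m ≠ ω' m} := hi
      rw [hcon] at this
      exact this
    apply le_csInf hne
    intro j hj
    by_contra hlt
    exact hj (h j (not_le.mp hlt))

theorem dMet_le_one {ρ : ℝ} (h0 : 0 ≤ ρ) (h1 : ρ ≤ 1) (ω ω' : ℕ → ι) : dMet ρ ω ω' ≤ 1 := by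
  simpa using dMet_le h0 h1 (m := 0) (ω := ω) (ω' := ω') (by simp)

theorem dMet_prepend_le {ρ : ℝ} (h0 : 0 ≤ ρ) (h1 : ρ ≤ 1) (a : ι) (ω ω' : ℕ → ι) :
    dMet ρ (prepend a ω) (prepend a ω') ≤ ρ * dMet ρ ω ω' := by
  by_cases he : ω = ω'
  · subst he
    simp [dMet]
  · have hr : dMet ρ ω ω' = ρ ^ sInf {m : ℕ | ω m ≠ ω' m} := by
      simp [dMet, he]
    rw [hr, ← pow_succ']
    apply dMet_le h0 h1
    intro i hi
    cases i with
    | zero => rfl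
    | succ j =>
      by_contra hne
      have hj : j ∈ {m : ℕ | ω m ≠ ω' m} := hne
      have := Nat.sInf_le hj
      omega

theorem tendsto_dMet {α : Type*} {l : Filter α} {ρ : ℝ} (h0 : 0 ≤ ρ) (h1 : ρ < 1)
    [TopologicalSpace ι] [DiscreteTopology ι] {u : α → ℕ → ι} {ω : ℕ → ι}
    (hu : Tendsto u l (𝓝 ω)) : Tendsto (fun x => dMet ρ (u x) ω) l (𝓝 0) := by
  have key : ∀ m : ℕ, ∀ᶠ x in l, ∀ i < m, u x i = ω i := by
    intro m
    have : ∀ i ∈ Finset.range m, ∀ᶠ x in l, u x i = ω i := by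
      intro i _
      have hi : Tendsto (fun x => u x i) l (𝓝 (ω i)) := (tendsto_pi_nhds.mp hu) i
      rw [nhds_discrete] at hi
      exact tendsto_pure.mp hi
    have h2 := (Filter.eventually_all_finset (Finset.range m)).mpr this
    filter_upwards [h2] with x hx i hi
    exact hx i (Finset.mem_range.mpr hi)
  rw [Metric.tendsto_nhds]
  intro ε hε
  obtain ⟨m, hm⟩ := exists_pow_lt_of_lt_one hε h1
  filter_upwards [key m] with x hx
  rw [Real.dist_eq, sub_zero, abs_of_nonneg (dMet_nonneg h0 _ _)]
  exact lt_of_le_of_lt (dMet_le h0 h1.le hx) hm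

/-- Prepend a finite word to an infinite word. -/
def cat (u : List ι) (ω : ℕ → ι) : ℕ → ι := u.foldr prepend ω

/-- The prefix of length `m` of an infinite word. -/
def pre : ℕ → (ℕ → ι) → List ι
  | 0, _ => []
  | m + 1, ω => ω 0 :: pre m (shift ω)

theorem cat_nil (ω : ℕ → ι) : cat [] ω = ω := rfl

theorem cat_cons (a : ι) (u : List ι) (ω : ℕ → ι) : cat (a :: u) ω = prepend a (cat u ω) := rfl

theorem cat_append (u v : List ι) (ω : ℕ → ι) : cat (u ++ v) ω = cat u (cat v ω) := by
  simp [cat]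

theorem cat_pre_apply (m : ℕ) (ξ ω : ℕ → ι) : ∀ i < m, cat (pre m ξ) ω i = ξ i := by
  induction m generalizing ξ with
  | zero => intro i hi; omega
  | succ m ih =>
    intro i hi
    cases i with
    | zero => rfl
    | succ j => exact ih (shift ξ) j (by omega)

theorem pre_congr (m : ℕ) (ξ ω : ℕ → ι) (h : ∀ i < m, ω i = ξ i) : pre m ω = pre m ξ := by
  induction m generalizing ξ ω with
  | zero => rfl
  | succ m ih =>
    simp only [pre]
    rw [h 0 (by omega), ih (shift ξ) (shift ω) (fun i hi => h (i + 1) (by omega))]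

theorem prepend_shift (ω : ℕ → ι) : prepend (ω 0) (shift ω) = ω := by
  funext i
  cases i <;> rfl

theorem shift_prepend (a : ι) (ω : ℕ → ι) : shift (prepend a ω) = ω := rfl

theorem cat_pre_shift (m : ℕ) (ω : ℕ → ι) : cat (pre m ω) (shift^[m] ω) = ω := by
  induction m generalizing ω with
  | zero => rfl
  | succ m ih =>
    rw [Function.iterate_succ_apply, pre, cat_cons, ih, prepend_shift]

theorem length_pre (m : ℕ) (ω : ℕ → ι) : (pre m ω).length = m := by
  induction m generalizing ω with
  | zero => rfl
  | succ m ih => simp [pre, ih]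

theorem dMet_cat_le {ρ : ℝ} (h0 : 0 ≤ ρ) (h1 : ρ ≤ 1) (u : List ι) (ω ω' : ℕ → ι) :
    dMet ρ (cat u ω) (cat u ω') ≤ ρ ^ u.length * dMet ρ ω ω' := by
  induction u with
  | nil => simp [cat_nil]
  | cons a u ih =>
    rw [cat_cons, cat_cons, List.length_cons, pow_succ']
    calc _ ≤ ρ * dMet ρ (cat u ω) (cat u ω') := dMet_prepend_le h0 h1 _ _ _
      _ ≤ ρ * (ρ ^ u.length * dMet ρ ω ω') := by gcongr
      _ = _ := by ring

/-- The cocycle `c` summed along a finite word `u` ending at `ω`. -/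
def wsum (c : ι → (ℕ → ι) → ℝ) : List ι → (ℕ → ι) → ℝ
  | [], _ => 0
  | a :: u, ω => c a (cat u ω) + wsum c u ω

theorem wsum_append (c : ι → (ℕ → ι) → ℝ) (u v : List ι) (ω : ℕ → ι) :
    wsum c (u ++ v) ω = wsum c u (cat v ω) + wsum c v ω := by
  induction u with
  | nil => simp [wsum]
  | cons a u ih =>
    simp only [List.cons_append, wsum, ih, cat_append]
    ring

end Symbolic

/-! ### The weighted skew-product operator -/

/-- The standing assumptions on the weights `q` and the cocycle `c`: the weights form a positive
probability vector, `c` takes values in `[D, E]` with `D > 0`, and `c` is Lipschitz for `d_ρ`. The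
Lipschitz constant is written as `C * (1 - ρ)`, so that sums of `c` along words are `C`-Lipschitz
uniformly in the word. -/
structure Sys {n : ℕ} (q : Fin n → ℝ) (c : Fin n → (ℕ → Fin n) → ℝ) (D E ρ C : ℝ) : Prop where
  q_pos : ∀ a, 0 < q a
  q_sum : ∑ a, q a = 1
  D_pos : 0 < D
  c_lb : ∀ a ω, D ≤ c a ω
  c_ub : ∀ a ω, c a ω ≤ E
  ρ_pos : 0 < ρ
  ρ_lt : ρ < 1
  C_nn : 0 ≤ C
  c_lip : ∀ a ω ω', |c a ω - c a ω'| ≤ C * (1 - ρ) * dMet ρ ω ω'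

/-- The Markov operator of the backward walk `(ω, s) ↦ (aω, s - c(a, ω))`, the letter `a` being
chosen with probability `q a`. -/
def TT {n : ℕ} (q : Fin n → ℝ) (c : Fin n → (ℕ → Fin n) → ℝ) :
    Module.End ℝ ((ℕ → Fin n) → ℝ → ℝ) where
  toFun F := fun ω s => ∑ a, q a * F (prepend a ω) (s - c a ω)
  map_add' F G := by
    funext ω s
    simp [mul_add, Finset.sum_add_distrib]
  map_smul' r F := by
    funext ω s
    simp only [Pi.smul_apply, smul_eq_mul, RingHom.id_apply, Finset.mul_sum]
    exact Finset.sum_congr rfl fun a _ => by ring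

section Operator

variable {n : ℕ} {q : Fin n → ℝ} {c : Fin n → (ℕ → Fin n) → ℝ} {D E ρ C : ℝ}

theorem TT_apply (F : (ℕ → Fin n) → ℝ → ℝ) (ω : ℕ → Fin n) (s : ℝ) :
    TT q c F ω s = ∑ a, q a * F (prepend a ω) (s - c a ω) := rfl

theorem TT_pow_succ (m : ℕ) (F : (ℕ → Fin n) → ℝ → ℝ) :
    (TT q c ^ (m + 1)) F = TT q c ((TT q c ^ m) F) := by
  rw [pow_succ', Module.End.mul_apply]

theorem TT_pow_succ' (m : ℕ) (F : (ℕ → Fin n) → ℝ → ℝ) :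
    (TT q c ^ (m + 1)) F = (TT q c ^ m) (TT q c F) := by
  rw [pow_succ, Module.End.mul_apply]

theorem TT_mono (hq : ∀ a, 0 ≤ q a) {F G : (ℕ → Fin n) → ℝ → ℝ} (h : F ≤ G) :
    TT q c F ≤ TT q c G := by
  intro ω s
  rw [TT_apply, TT_apply]
  exact Finset.sum_le_sum fun a _ => mul_le_mul_of_nonneg_left (h _ _) (hq a)

theorem TT_pow_mono (hq : ∀ a, 0 ≤ q a) (m : ℕ) {F G : (ℕ → Fin n) → ℝ → ℝ} (h : F ≤ G) :
    (TT q c ^ m) F ≤ (TT q c ^ m) G := by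
  induction m with
  | zero => simpa using h
  | succ m ih =>
    rw [TT_pow_succ, TT_pow_succ]
    exact TT_mono hq ih

theorem TT_pow_nonneg (hq : ∀ a, 0 ≤ q a) (m : ℕ) {F : (ℕ → Fin n) → ℝ → ℝ} (h : 0 ≤ F) :
    0 ≤ (TT q c ^ m) F := by
  have := TT_pow_mono (c := c) hq m h
  rwa [map_zero] at this

/-- The walk moves down by at least `D` at each step, so a function vanishing below `α` is not
seen by the `i`-th step from below `α + i D`. -/
theorem TT_pow_supp (hS : Sys q c D E ρ C) {α : ℝ} {F : (ℕ → Fin n) → ℝ → ℝ}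
    (hF : ∀ ω s, s < α → F ω s = 0) (i : ℕ) :
    ∀ ω s, s < α + i * D → (TT q c ^ i) F ω s = 0 := by
  induction i with
  | zero => intro ω s hs; simpa using hF ω s (by simpa using hs)
  | succ i ih =>
    intro ω s hs
    rw [TT_pow_succ, TT_apply]
    apply Finset.sum_eq_zero
    intro a _
    rw [ih, mul_zero]
    have := hS.c_lb a ω
    push_cast at hs
    linarith

theorem TT_pow_trans (t : ℝ) (F : (ℕ → Fin n) → ℝ → ℝ) (i : ℕ) (ω : ℕ → Fin n) (s : ℝ) :
    (TT q c ^ i) (fun ω s => F ω (s + t)) ω s = (TT q c ^ i) F ω (s + t) := by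
  induction i generalizing ω s with
  | zero => rfl
  | succ i ih =>
    rw [TT_pow_succ, TT_pow_succ, TT_apply, TT_apply]
    refine Finset.sum_congr rfl fun a _ => ?_
    rw [ih, show s - c a ω + t = s + t - c a ω by ring]

/-- The indicator of the time window `[α, β]`. -/
def win (n : ℕ) (α β : ℝ) : (ℕ → Fin n) → ℝ → ℝ := fun _ s => if α ≤ s ∧ s ≤ β then 1 else 0

theorem win_nonneg (α β : ℝ) : 0 ≤ win n α β := by
  intro ω s
  simp only [win, Pi.zero_apply]
  split_ifs <;> norm_num

/-- The expected number of visits to a window is bounded: the window is dominated by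
`Φ - TT Φ` for a bounded `Φ ≥ 0`, and the sum telescopes. -/
theorem visits (hS : Sys q c D E ρ C) {α β : ℝ} (hαβ : α ≤ β) (N : ℕ) (ω : ℕ → Fin n) (s : ℝ) :
    ∑ i ∈ Finset.range N, (TT q c ^ i) (win n α β) ω s ≤ (β - α) / D + 1 := by
  have hD := hS.D_pos
  have hq : ∀ a, 0 ≤ q a := fun a => (hS.q_pos a).le
  set Φ : (ℕ → Fin n) → ℝ → ℝ := fun _ s => (max (min s β) (α - D) - (α - D)) / D with hΦ
  have hΦ0 : 0 ≤ Φ := by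
    intro ω s
    simp only [hΦ, Pi.zero_apply]
    apply div_nonneg _ hD.le
    linarith [le_max_right (min s β) (α - D)]
  have hΦ1 : ∀ ω s, Φ ω s ≤ (β - α) / D + 1 := by
    intro ω s
    simp only [hΦ]
    rw [div_add_one hD.ne']
    gcongr
    have : max (min s β) (α - D) ≤ β := max_le (min_le_right _ _) (by linarith)
    linarith
  have hwin : win n α β ≤ Φ - TT q c Φ := by
    intro ω s
    rw [Pi.sub_apply, Pi.sub_apply, TT_apply]
    have h1 : Φ ω s - ∑ a, q a * Φ (prepend a ω) (s - c a ω) =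
        ∑ a, q a * (Φ ω s - Φ (prepend a ω) (s - c a ω)) := by
      simp only [mul_sub, Finset.sum_sub_distrib, ← Finset.sum_mul, hS.q_sum, one_mul]
    rw [h1]
    have h2 : win n α β ω s = ∑ a, q a * win n α β ω s := by
      rw [← Finset.sum_mul, hS.q_sum, one_mul]
    rw [h2]
    refine Finset.sum_le_sum fun a _ => mul_le_mul_of_nonneg_left ?_ (hq a)
    have hc := hS.c_lb a ω
    simp only [win, hΦ]
    rw [← sub_div, le_div_iff₀ hD]
    split_ifs with hs
    · rw [min_eq_left hs.2, min_eq_left (by linarith), max_eq_left (by linarith)]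
      rcases le_total (s - c a ω) (α - D) with h | h
      · rw [max_eq_right h]; linarith
      · rw [max_eq_left h]; linarith
    · have : max (min (s - c a ω) β) (α - D) ≤ max (min s β) (α - D) := by
        gcongr
        linarith
      linarith
  have hsum : ∀ N : ℕ, ∑ i ∈ Finset.range N, (TT q c ^ i) (Φ - TT q c Φ) ω s =
      Φ ω s - (TT q c ^ N) Φ ω s := by
    intro N
    induction N with
    | zero => simp
    | succ N ih =>
      rw [Finset.sum_range_succ, ih, map_sub, ← TT_pow_succ', Pi.sub_apply, Pi.sub_apply]
      ring
  calc _ ≤ ∑ i ∈ Finset.range N, (TT q c ^ i) (Φ - TT q c Φ) ω s :=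
        Finset.sum_le_sum fun i _ => TT_pow_mono hq i hwin ω s
    _ = Φ ω s - (TT q c ^ N) Φ ω s := hsum N
    _ ≤ Φ ω s := by
        have := TT_pow_nonneg (c := c) hq N hΦ0 ω s
        simp only [Pi.zero_apply] at this
        linarith
    _ ≤ _ := hΦ1 ω s

/-- If `F` has a modulus of continuity and vanishes outside a window, the iterates of `F` keep this
modulus, weighted by the probability of visiting the window. -/
theorem TT_pow_lip (hS : Sys q c D E ρ C) {L : ℝ} {F W : (ℕ → Fin n) → ℝ → ℝ}
    (hL : 0 ≤ L) (hW : 0 ≤ W)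
    (hF : ∀ ω ω' s s', |F ω s - F ω' s'| ≤
      L * (|s - s'| + C * dMet ρ ω ω') * (W ω s + W ω' s')) (i : ℕ) :
    ∀ ω ω' s s', |(TT q c ^ i) F ω s - (TT q c ^ i) F ω' s'| ≤
      L * (|s - s'| + C * dMet ρ ω ω') * ((TT q c ^ i) W ω s + (TT q c ^ i) W ω' s') := by
  have hq : ∀ a, 0 ≤ q a := fun a => (hS.q_pos a).le
  induction i with
  | zero => simpa using hF
  | succ i ih =>
    intro ω ω' s s'
    have hWi := TT_pow_nonneg (c := c) hq i hW
    rw [TT_pow_succ, TT_pow_succ]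
    simp only [TT_apply]
    rw [← Finset.sum_sub_distrib, ← Finset.sum_add_distrib, Finset.mul_sum]
    refine (Finset.abs_sum_le_sum_abs _ _).trans (Finset.sum_le_sum fun a _ => ?_)
    rw [← mul_sub, abs_mul, abs_of_nonneg (hq a), ← mul_add]
    have h1 := ih (prepend a ω) (prepend a ω') (s - c a ω) (s' - c a ω')
    have h2 : |s - c a ω - (s' - c a ω')| + C * dMet ρ (prepend a ω) (prepend a ω') ≤
        |s - s'| + C * dMet ρ ω ω' := by
      have e1 : |s - c a ω - (s' - c a ω')| ≤ |s - s'| + |c a ω - c a ω'| := by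
        rw [show s - c a ω - (s' - c a ω') = (s - s') - (c a ω - c a ω') by ring]
        exact abs_sub _ _
      have e2 := hS.c_lip a ω ω'
      have e3 := mul_le_mul_of_nonneg_left
        (dMet_prepend_le hS.ρ_pos.le hS.ρ_lt.le a ω ω') hS.C_nn
      nlinarith
    have h3 : 0 ≤ (TT q c ^ i) W (prepend a ω) (s - c a ω) +
        (TT q c ^ i) W (prepend a ω') (s' - c a ω') := add_nonneg (hWi _ _) (hWi _ _)
    calc _ ≤ q a * (L * (|s - s'| + C * dMet ρ ω ω') *
          ((TT q c ^ i) W (prepend a ω) (s - c a ω) +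
            (TT q c ^ i) W (prepend a ω') (s' - c a ω'))) := by
          refine mul_le_mul_of_nonneg_left (h1.trans ?_) (hq a)
          gcongr
      _ = _ := by ring

/-- Sums of the cocycle along a word have bounded distortion. -/
theorem wsum_lip (hS : Sys q c D E ρ C) (u : List (Fin n)) (ω ω' : ℕ → Fin n) :
    |wsum c u ω - wsum c u ω'| ≤ C * dMet ρ ω ω' := by
  have hd := dMet_nonneg hS.ρ_pos.le ω ω'
  have hlt := hS.ρ_lt
  have hpos := hS.ρ_pos
  have hC := hS.C_nn
  have key : |wsum c u ω - wsum c u ω'| ≤ C * (1 - ρ ^ u.length) * dMet ρ ω ω' := by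
    induction u with
    | nil => simp [wsum]
    | cons a u ih =>
      simp only [wsum, List.length_cons]
      have h1 := hS.c_lip a (cat u ω) (cat u ω')
      have h2 := dMet_cat_le hpos.le hlt.le u ω ω'
      have h3 : C * (1 - ρ) * dMet ρ (cat u ω) (cat u ω') ≤
          C * (1 - ρ) * (ρ ^ u.length * dMet ρ ω ω') :=
        mul_le_mul_of_nonneg_left h2 (mul_nonneg hC (by linarith))
      have h4 := abs_add_le (c a (cat u ω) - c a (cat u ω')) (wsum c u ω - wsum c u ω')
      rw [show c a (cat u ω) + wsum c u ω - (c a (cat u ω') + wsum c u ω') =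
        (c a (cat u ω) - c a (cat u ω')) + (wsum c u ω - wsum c u ω') by ring]
      calc _ ≤ C * (1 - ρ) * (ρ ^ u.length * dMet ρ ω ω') +
            C * (1 - ρ ^ u.length) * dMet ρ ω ω' := by linarith
        _ = _ := by ring
  refine key.trans ?_
  have : 0 ≤ ρ ^ u.length := by positivity
  have := mul_nonneg (mul_nonneg hC this) hd
  nlinarith

end Operator

/-! ### Bounded harmonic functions are constant -/

/-- Bounded functions on `Ω × ℝ` that are harmonic for the backward walk, with a prescribed bound
`B` and a prescribed modulus of continuity. -/
structure Harm {n : ℕ} (q : Fin n → ℝ) (c : Fin n → (ℕ → Fin n) → ℝ) (ρ C B L : ℝ)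
    (G : (ℕ → Fin n) → ℝ → ℝ) : Prop where
  bdd : ∀ ω s, |G ω s| ≤ B
  lip : ∀ ω ω' s s', |G ω s - G ω' s'| ≤ L * (|s - s'| + C * dMet ρ ω ω')
  eq : ∀ ω s, G ω s = TT q c G ω s

theorem exists_ulim {B : ℝ} {u : ℕ → ℝ} (h : ∀ j, |u j| ≤ B) :
    ∃ x, Tendsto u (hyperfilter ℕ) (𝓝 x) := by
  have hc : IsCompact (Icc (-B) B) := isCompact_Icc
  obtain ⟨x, -, hx⟩ := hc.ultrafilter_le_nhds ((hyperfilter ℕ).map u) (by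
    rw [le_principal_iff]
    exact Filter.Eventually.of_forall (f := (hyperfilter ℕ : Filter ℕ)) fun j => abs_le.mp (h j))
  exact ⟨x, hx⟩

theorem exists_ulim_word {n : ℕ} (u : ℕ → ℕ → Fin n) :
    ∃ x, Tendsto u (hyperfilter ℕ) (𝓝 x) := by
  obtain ⟨x, -, hx⟩ := (isCompact_univ (X := ℕ → Fin n)).ultrafilter_le_nhds
    ((hyperfilter ℕ).map u) (by simp)
  exact ⟨x, hx⟩

theorem exists_ulim_fun {n : ℕ} {B : ℝ} {G : ℕ → (ℕ → Fin n) → ℝ → ℝ}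
    (h : ∀ j ω s, |G j ω s| ≤ B) :
    ∃ H : (ℕ → Fin n) → ℝ → ℝ, ∀ ω s, Tendsto (fun j => G j ω s) (hyperfilter ℕ) (𝓝 (H ω s)) := by
  choose H hH using fun ω s => exists_ulim (u := fun j => G j ω s) (fun j => h j ω s)
  exact ⟨H, hH⟩

section Liouville

variable {n : ℕ} {q : Fin n → ℝ} {c : Fin n → (ℕ → Fin n) → ℝ} {D E ρ C B L : ℝ}

theorem ulim_moving (h0 : 0 ≤ ρ) (h1 : ρ < 1) {G : ℕ → (ℕ → Fin n) → ℝ → ℝ}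
    {H : (ℕ → Fin n) → ℝ → ℝ}
    (hlip : ∀ j ω ω' s s', |G j ω s - G j ω' s'| ≤ L * (|s - s'| + C * dMet ρ ω ω'))
    (hH : ∀ ω s, Tendsto (fun j => G j ω s) (hyperfilter ℕ) (𝓝 (H ω s)))
    {w : ℕ → ℕ → Fin n} {ω : ℕ → Fin n} (hw : Tendsto w (hyperfilter ℕ) (𝓝 ω))
    {t : ℕ → ℝ} {s : ℝ} (ht : Tendsto t (hyperfilter ℕ) (𝓝 s)) :
    Tendsto (fun j => G j (w j) (t j)) (hyperfilter ℕ) (𝓝 (H ω s)) := by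
  have hd := tendsto_dMet h0 h1 hw
  have ht' : Tendsto (fun j => |t j - s|) (hyperfilter ℕ) (𝓝 0) := by
    have := (ht.sub_const s).abs
    simpa using this
  have hz : Tendsto (fun j => L * (|t j - s| + C * dMet ρ (w j) ω)) (hyperfilter ℕ) (𝓝 0) := by
    have := (ht'.add (hd.const_mul C)).const_mul L
    simpa using this
  have hdiff : Tendsto (fun j => G j (w j) (t j) - G j ω s) (hyperfilter ℕ) (𝓝 0) :=
    squeeze_zero_norm (fun j => by simpa using hlip j (w j) ω (t j) s) hz
  simpa using hdiff.add (hH ω s)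

theorem harm_ulim {G : ℕ → (ℕ → Fin n) → ℝ → ℝ} {H : (ℕ → Fin n) → ℝ → ℝ}
    (hb : ∀ j ω s, |G j ω s| ≤ B)
    (hlip : ∀ j ω ω' s s', |G j ω s - G j ω' s'| ≤ L * (|s - s'| + C * dMet ρ ω ω'))
    (heq : ∀ ω s, ∀ᶠ j in (hyperfilter ℕ : Filter ℕ), G j ω s = TT q c (G j) ω s)
    (hH : ∀ ω s, Tendsto (fun j => G j ω s) (hyperfilter ℕ) (𝓝 (H ω s))) :
    Harm q c ρ C B L H where
  bdd ω s := le_of_tendsto (hH ω s).abs (Eventually.of_forall fun j => hb j ω s)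
  lip ω ω' s s' := le_of_tendsto ((hH ω s).sub (hH ω' s')).abs
    (Eventually.of_forall fun j => hlip j ω ω' s s')
  eq ω s := by
    have h1 : Tendsto (fun j => TT q c (G j) ω s) (hyperfilter ℕ) (𝓝 (TT q c H ω s)) := by
      simp only [TT_apply]
      exact tendsto_finsetSum _ fun a _ => (hH _ _).const_mul (q a)
    have h2 : Tendsto (fun j => TT q c (G j) ω s) (hyperfilter ℕ) (𝓝 (H ω s)) :=
      (hH ω s).congr' (heq ω s)
    exact tendsto_nhds_unique h2 h1

theorem harm_trans {G : (ℕ → Fin n) → ℝ → ℝ} (hG : Harm q c ρ C B L G) (t : ℝ) :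
    Harm q c ρ C B L (fun ω s => G ω (s + t)) where
  bdd ω s := hG.bdd _ _
  lip ω ω' s s' := by
    have := hG.lip ω ω' (s + t) (s' + t)
    rwa [add_sub_add_right_eq_sub] at this
  eq ω s := by
    have := TT_pow_trans (q := q) (c := c) t G 1 ω s
    rw [pow_one] at this
    rw [this]
    exact hG.eq _ _

theorem harm_neg {G : (ℕ → Fin n) → ℝ → ℝ} (hG : Harm q c ρ C B L G) :
    Harm q c ρ C B L (-G) where
  bdd ω s := by simpa using hG.bdd ω s
  lip ω ω' s s' := by
    have := hG.lip ω ω' s s'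
    rw [abs_sub_comm] at this
    simpa [neg_add_eq_sub] using this
  eq ω s := by
    rw [map_neg]
    simp [← hG.eq ω s]

/-- Maximum principle: an increment attaining its upper bound at a point attains it along the
whole backward tree of that point. -/
theorem attain_word (hS : Sys q c D E ρ C) {G : (ℕ → Fin n) → ℝ → ℝ}
    (hG : Harm q c ρ C B L G) {r η : ℝ} (hle : ∀ ω s, G ω (s + r) - G ω s ≤ η)
    {ω : ℕ → Fin n} {s : ℝ} (h : G ω (s + r) - G ω s = η) (u : List (Fin n)) :
    G (cat u ω) (s - wsum c u ω + r) - G (cat u ω) (s - wsum c u ω) = η := by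
  induction u with
  | nil => simpa [cat_nil, wsum] using h
  | cons a u ih =>
    set y := cat u ω
    set t := s - wsum c u ω
    have h1 : ∑ b, q b * (G (prepend b y) (t - c b y + r) - G (prepend b y) (t - c b y)) =
        ∑ b, q b * η := by
      rw [← Finset.sum_mul, hS.q_sum, one_mul, ← ih, hG.eq y (t + r), hG.eq y t, TT_apply,
        TT_apply, ← Finset.sum_sub_distrib]
      refine Finset.sum_congr rfl fun b _ => ?_
      rw [show t + r - c b y = t - c b y + r by ring]
      ring
    have h2 := (Finset.sum_eq_sum_iff_of_le (fun b _ =>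
      mul_le_mul_of_nonneg_left (hle (prepend b y) (t - c b y)) (hS.q_pos b).le)).mp h1 a
        (Finset.mem_univ a)
    have h3 := mul_left_cancel₀ (hS.q_pos a).ne' h2
    rw [cat_cons]
    simp only [wsum]
    rw [show s - (c a (cat u ω) + wsum c u ω) = t - c a y by simp only [t, y]; ring]
    exact h3

theorem cat_replicate_const (a : Fin n) (j : ℕ) :
    cat (List.replicate j a) (fun _ => a) = fun _ => a := by
  induction j with
  | zero => rfl
  | succ j ih =>
    rw [List.replicate_succ, cat_cons, ih]
    funext i
    cases i <;> rfl

theorem tendsto_cat_replicate (a : Fin n) (y : ℕ → Fin n) :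
    Tendsto (fun j => cat (List.replicate j a) y) atTop (𝓝 fun _ => a) := by
  rw [tendsto_pi_nhds]
  intro i
  apply tendsto_const_nhds.congr'
  filter_upwards [eventually_gt_atTop i] with j hj
  have : List.replicate j a = pre j (fun _ => a) := by
    clear hj
    induction j with
    | zero => rfl
    | succ j ih => rw [List.replicate_succ, ih]; rfl
  rw [this, cat_pre_apply j _ _ i hj]

/-- The holonomy `r` of the loop that goes down along a word `u` from the fixed point `x = aaa⋯`
and returns to `x` along powers of `a` is a period of every bounded harmonic function. If the
increment over `r` had a positive supremum `η`, limits of translates would attain `η` at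
`(x, 0), (x, -r), …, (x, -N r)` for every `N`, contradicting boundedness. -/
theorem period_le (hS : Sys q c D E ρ C) (a : Fin n) {ψ : (ℕ → Fin n) → ℝ}
    (hψ : ∀ y, Tendsto (fun j => wsum c (List.replicate j a) y -
      wsum c (List.replicate j a) (fun _ => a)) (hyperfilter ℕ) (𝓝 (ψ y)))
    (u : List (Fin n)) {G₀ : (ℕ → Fin n) → ℝ → ℝ} (hG₀ : Harm q c ρ C B L G₀)
    (ω₀ : ℕ → Fin n) (s₀ : ℝ) :
    G₀ ω₀ (s₀ + (ψ (cat u fun _ => a) + wsum c u fun _ => a)) - G₀ ω₀ s₀ ≤ 0 := by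
  have hρ0 := hS.ρ_pos.le
  have hρ1 := hS.ρ_lt
  set x : ℕ → Fin n := fun _ => a with hx
  set r := ψ (cat u x) + wsum c u x with hr
  by_contra hcon
  rw [not_le] at hcon
  set S : Set ℝ := {y | ∃ G ω s, Harm q c ρ C B L G ∧ y = G ω (s + r) - G ω s} with hSdef
  have hbd : BddAbove S := by
    refine ⟨2 * B, ?_⟩
    rintro y ⟨G, ω, s, hG, rfl⟩
    have h1 := abs_le.mp (hG.bdd ω (s + r))
    have h2 := abs_le.mp (hG.bdd ω s)
    linarith
  set η := sSup S with hη
  have hle : ∀ G, Harm q c ρ C B L G → ∀ ω s, G ω (s + r) - G ω s ≤ η :=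
    fun G hG ω s => le_csSup hbd ⟨G, ω, s, hG, rfl⟩
  have hηpos : 0 < η := lt_of_lt_of_le hcon (hle G₀ hG₀ ω₀ s₀)
  have hne : S.Nonempty := ⟨_, G₀, ω₀, s₀, hG₀, rfl⟩
  -- a limit of translates and an attaining point for the supremum
  obtain ⟨G₁, ω₁, hG₁, hat₁⟩ : ∃ G ω, Harm q c ρ C B L G ∧ G ω (0 + r) - G ω 0 = η := by
    have hseq : ∀ j : ℕ, ∃ G ω, Harm q c ρ C B L G ∧ η - 1 / ((j : ℝ) + 1) ≤ G ω (0 + r) - G ω 0 := by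
      intro j
      have hj : η - 1 / ((j : ℝ) + 1) < η := by
        have : (0 : ℝ) < 1 / ((j : ℝ) + 1) := by positivity
        linarith
      obtain ⟨y, ⟨G, ω, s, hG, rfl⟩, hy⟩ := exists_lt_of_lt_csSup hne hj
      refine ⟨fun ω t => G ω (t + s), ω, harm_trans hG s, ?_⟩
      simp only [zero_add]
      rw [add_comm r s]
      exact hy.le
    choose Gs ws hGs hws using hseq
    obtain ⟨H, hH⟩ := exists_ulim_fun (G := Gs) (fun j ω s => (hGs j).bdd ω s)
    obtain ⟨ω, hω⟩ := exists_ulim_word ws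
    have hHarm : Harm q c ρ C B L H := harm_ulim (fun j => (hGs j).bdd) (fun j => (hGs j).lip)
      (fun ω s => Eventually.of_forall fun j => (hGs j).eq ω s) hH
    refine ⟨H, ω, hHarm, le_antisymm (hle H hHarm ω 0) ?_⟩
    have hm := fun s => ulim_moving hρ0 hρ1 (fun j => (hGs j).lip) hH hω (tendsto_const_nhds (x := s))
    have h1 := (hm (0 + r)).sub (hm 0)
    have h2 : Tendsto (fun j : ℕ => η - 1 / ((j : ℝ) + 1)) (hyperfilter ℕ) (𝓝 (η - 0)) :=
      (tendsto_const_nhds.sub tendsto_one_div_add_atTop_nhds_zero_nat).mono_left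
        Nat.hyperfilter_le_atTop
    rw [sub_zero] at h2
    exact le_of_tendsto_of_tendsto h2 h1 (Eventually.of_forall hws)
  have hgood : ∀ N : ℕ, ∃ G, Harm q c ρ C B L G ∧
      ∀ i : ℕ, i ≤ N → G x (-(i * r) + r) - G x (-(i * r)) = η := by
    intro N
    induction N with
    | zero =>
      set Gs : ℕ → (ℕ → Fin n) → ℝ → ℝ :=
        fun j ω s => G₁ ω (s + -wsum c (List.replicate j a) ω₁) with hGsdef
      have hGs : ∀ j, Harm q c ρ C B L (Gs j) := fun j => harm_trans hG₁ _
      obtain ⟨H, hH⟩ := exists_ulim_fun (G := Gs) (fun j ω s => (hGs j).bdd ω s)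
      have hHarm : Harm q c ρ C B L H := harm_ulim (fun j => (hGs j).bdd) (fun j => (hGs j).lip)
        (fun ω s => Eventually.of_forall fun j => (hGs j).eq ω s) hH
      refine ⟨H, hHarm, ?_⟩
      intro i hi
      obtain rfl : i = 0 := by omega
      have hω := (tendsto_cat_replicate a ω₁).mono_left Nat.hyperfilter_le_atTop
      have hm := fun s => ulim_moving hρ0 hρ1 (fun j => (hGs j).lip) hH hω
        (tendsto_const_nhds (x := s))
      have h1 := (hm (0 + r)).sub (hm 0)
      have h2 : ∀ j, Gs j (cat (List.replicate j a) ω₁) (0 + r) -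
          Gs j (cat (List.replicate j a) ω₁) 0 = η := by
        intro j
        have := attain_word hS hG₁ (hle G₁ hG₁) hat₁ (List.replicate j a)
        simp only [hGsdef]
        rw [← this]
        congr 2
        ring
      have h3 := tendsto_nhds_unique (tendsto_const_nhds.congr fun j => (h2 j).symm) h1
      simpa using h3.symm
    | succ N ih =>
      obtain ⟨G, hG, hGat⟩ := ih
      set Gs : ℕ → (ℕ → Fin n) → ℝ → ℝ :=
        fun j ω s => G ω (s + -wsum c (List.replicate j a) x) with hGsdef
      have hGs : ∀ j, Harm q c ρ C B L (Gs j) := fun j => harm_trans hG _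
      obtain ⟨H, hH⟩ := exists_ulim_fun (G := Gs) (fun j ω s => (hGs j).bdd ω s)
      have hHarm : Harm q c ρ C B L H := harm_ulim (fun j => (hGs j).bdd) (fun j => (hGs j).lip)
        (fun ω s => Eventually.of_forall fun j => (hGs j).eq ω s) hH
      refine ⟨H, hHarm, ?_⟩
      intro i hi
      rcases Nat.lt_or_ge i (N + 1) with hlt | hge
      · have h1 := (hH x (-(i * r) + r)).sub (hH x (-(i * r)))
        have h2 : ∀ j, Gs j x (-(i * r) + r) - Gs j x (-(i * r)) = η := by
          intro j
          have := attain_word hS hG (hle G hG) (hGat i (by omega)) (List.replicate j a)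
          rw [cat_replicate_const] at this
          simp only [hGsdef]
          rw [← this]
          congr 2
          ring
        exact (tendsto_nhds_unique (tendsto_const_nhds.congr fun j => (h2 j).symm) h1).symm
      · obtain rfl : i = N + 1 := by omega
        have hω := (tendsto_cat_replicate a (cat u x)).mono_left Nat.hyperfilter_le_atTop
        have hlim := hψ (cat u x)
        have ht : Tendsto (fun j => -((N : ℝ) * r) - (wsum c (List.replicate j a) (cat u x) -
            wsum c (List.replicate j a) x) - wsum c u x) (hyperfilter ℕ)
            (𝓝 (-((N + 1 : ℕ) * r))) := by
          have := (hlim.const_sub (-((N : ℝ) * r))).sub_const (wsum c u x)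
          convert this using 2
          rw [hr]; push_cast; ring
        have e1 := ulim_moving hρ0 hρ1 (fun j => (hGs j).lip) hH hω ht
        have e2 := ulim_moving hρ0 hρ1 (fun j => (hGs j).lip) hH hω (ht.add_const r)
        have h2 : ∀ j, Gs j (cat (List.replicate j a) (cat u x))
            (-((N : ℝ) * r) - (wsum c (List.replicate j a) (cat u x) -
            wsum c (List.replicate j a) x) - wsum c u x + r) -
            Gs j (cat (List.replicate j a) (cat u x))
            (-((N : ℝ) * r) - (wsum c (List.replicate j a) (cat u x) -
            wsum c (List.replicate j a) x) - wsum c u x) = η := by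
          intro j
          have := attain_word hS hG (hle G hG) (hGat N le_rfl) (List.replicate j a ++ u)
          rw [cat_append, wsum_append] at this
          simp only [hGsdef]
          rw [← this]
          congr 2 <;> ring
        exact (tendsto_nhds_unique (tendsto_const_nhds.congr fun j => (h2 j).symm)
          (e2.sub e1)).symm
  obtain ⟨N, hN⟩ := exists_nat_gt (2 * B / η)
  obtain ⟨G, hG, hGat⟩ := hgood N
  have htel : ∀ M : ℕ, M ≤ N → G x 0 - G x (-(M * r)) = M * η := by
    intro M
    induction M with
    | zero => intro _; simp
    | succ M ih =>
      intro hM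
      have h1 := ih (by omega)
      have h2 := hGat (M + 1) hM
      rw [show -(((M + 1 : ℕ) : ℝ) * r) + r = -(M * r) by push_cast; ring] at h2
      push_cast at h2 ⊢
      linarith
  have h1 := htel N le_rfl
  have h2 := abs_le.mp (hG.bdd x 0)
  have h3 := abs_le.mp (hG.bdd x (-(N * r)))
  rw [div_lt_iff₀ hηpos] at hN
  linarith

theorem tendsto_cat_pre (x ω : ℕ → Fin n) :
    Tendsto (fun j => cat (pre j ω) x) atTop (𝓝 ω) := by
  rw [tendsto_pi_nhds]
  intro i
  apply tendsto_const_nhds.congr'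
  filter_upwards [eventually_gt_atTop i] with j hj
  rw [cat_pre_apply j _ _ i hj]

/-- The common periods of all bounded harmonic functions with given constants. -/
def periods (q : Fin n → ℝ) (c : Fin n → (ℕ → Fin n) → ℝ) (ρ C B L : ℝ) : AddSubgroup ℝ where
  carrier := {r | ∀ G, Harm q c ρ C B L G → ∀ ω s, G ω (s + r) = G ω s}
  zero_mem' := by intro G _ ω s; rw [add_zero]
  add_mem' := by
    intro r t hr ht G hG ω s
    rw [← add_assoc, ht G hG, hr G hG]
  neg_mem' := by
    intro r hr G hG ω s
    have := hr G hG ω (s + -r)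
    rw [neg_add_cancel_right] at this
    exact this.symm

/-- Liouville property. The closed group of common periods is either dense, and then harmonic
functions depend on `ω` only, or contained in some `t ℤ`; in the latter case all loop holonomies
lie in `t ℤ`, so that `exp (2π i ψ / t)` solves the cohomological equation excluded by `hΛ`. -/
theorem liouville (hS : Sys q c D E ρ C) (a : Fin n)
    (hΛ : ∀ (θ : ℝ) (ψ : (ℕ → Fin n) → ℝ), (∀ y z, |ψ y - ψ z| ≤ C * dMet ρ y z) →
      (∀ b y, Complex.exp ((θ * ψ (prepend b y) : ℝ) * Complex.I) =
        Complex.exp (-((θ * c b y : ℝ) : ℂ) * Complex.I) *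
          Complex.exp ((θ * ψ y : ℝ) * Complex.I)) → θ = 0)
    {G : (ℕ → Fin n) → ℝ → ℝ} (hG : Harm q c ρ C B L G) : ∃ k, ∀ ω s, G ω s = k := by
  have hρ0 := hS.ρ_pos.le
  have hρ1 := hS.ρ_lt
  set x : ℕ → Fin n := fun _ => a with hx
  obtain ⟨ψ, hψ⟩ : ∃ ψ : (ℕ → Fin n) → ℝ, ∀ y, Tendsto (fun j => wsum c (List.replicate j a) y -
      wsum c (List.replicate j a) (fun _ => a)) (hyperfilter ℕ) (𝓝 (ψ y)) := by
    choose ψ hψ using fun y => exists_ulim (B := C) (u := fun j =>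
      wsum c (List.replicate j a) y - wsum c (List.replicate j a) x) (fun j => by
        refine (wsum_lip hS _ _ _).trans ?_
        exact mul_le_of_le_one_right hS.C_nn (dMet_le_one hρ0 hρ1.le _ _))
    exact ⟨ψ, hψ⟩
  have hψlip : ∀ y z, |ψ y - ψ z| ≤ C * dMet ρ y z := by
    intro y z
    refine le_of_tendsto ((hψ y).sub (hψ z)).abs (Eventually.of_forall fun j => ?_)
    have := wsum_lip hS (List.replicate j a) y z
    rwa [show ∀ A B X : ℝ, A - X - (B - X) = A - B by intros; ring]
  have hmem : ∀ u : List (Fin n), ψ (cat u x) + wsum c u x ∈ periods q c ρ C B L := by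
    intro u H hH ω s
    have h1 := period_le hS a hψ u hH ω s
    have h2 := period_le hS a hψ u (harm_neg hH) ω s
    simp only [Pi.neg_apply] at h2
    change H ω (s + (ψ (cat u x) + wsum c u x)) - H ω s ≤ 0 at h1
    change -H ω (s + (ψ (cat u x) + wsum c u x)) - -H ω s ≤ 0 at h2
    linarith
  have hind : ∀ ω s, G ω s = G ω 0 := by
    rcases AddSubgroup.dense_or_cyclic (periods q c ρ C B L) with hd | ⟨t, ht⟩
    · intro ω s
      have hcont : Continuous (G ω) := by
        have : LipschitzWith (Real.toNNReal L) (G ω) := by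
          apply LipschitzWith.of_dist_le_mul
          intro s s'
          rw [Real.dist_eq, Real.dist_eq]
          have h := hG.lip ω ω s s'
          have h0 : dMet ρ ω ω = 0 := by simp [dMet]
          rw [h0, mul_zero, add_zero] at h
          exact h.trans (mul_le_mul_of_nonneg_right (Real.le_coe_toNNReal L) (abs_nonneg _))
        exact this.continuous
      have : Set.EqOn (G ω) (fun _ => G ω 0) (periods q c ρ C B L : Set ℝ) := by
        intro r hr
        have := hr G hG ω 0
        rwa [zero_add] at this
      exact congrFun (Continuous.ext_on hd hcont continuous_const this) s
    · exfalso
      -- a nonzero `t₁` with all holonomies in `t₁ ℤ`; for `t = 0` any `t₁` works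
      obtain ⟨t₁, hne_zero, hmult⟩ : ∃ t₁ : ℝ, t₁ ≠ 0 ∧ ∀ u : List (Fin n), ∃ m : ℤ,
          ψ (cat u x) + wsum c u x = m * t₁ := by
        have hz : ∀ u : List (Fin n), ∃ m : ℤ, ψ (cat u x) + wsum c u x = m * t := by
          intro u
          have := hmem u
          rw [ht, AddSubgroup.mem_closure_singleton] at this
          obtain ⟨m, hm⟩ := this
          exact ⟨m, by rw [← hm, zsmul_eq_mul]⟩
        by_cases h0 : t = 0
        · refine ⟨1, one_ne_zero, fun u => ⟨0, ?_⟩⟩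
          obtain ⟨m, hm⟩ := hz u
          rw [hm, h0]; simp
        · exact ⟨t, h0, hz⟩
      set θ := 2 * Real.pi / t₁ with hθ
      have hθ0 : θ ≠ 0 := div_ne_zero (by positivity) hne_zero
      apply hθ0
      have hone : ∀ u : List (Fin n), Complex.exp ((θ * ψ (cat u x) : ℝ) * Complex.I) *
          Complex.exp ((θ * wsum c u x : ℝ) * Complex.I) = 1 := by
        intro u
        obtain ⟨m, hm⟩ := hmult u
        rw [← Complex.exp_add, Complex.exp_eq_one_iff]
        refine ⟨m, ?_⟩
        rw [← add_mul, ← Complex.ofReal_add, ← mul_add, hm, hθ]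
        rw [show 2 * Real.pi / t₁ * (m * t₁) = m * (2 * Real.pi) by field_simp]
        push_cast; ring
      have hcψ : ∀ {w : ℕ → ℕ → Fin n} {y}, Tendsto w atTop (𝓝 y) →
          Tendsto (fun j => ψ (w j)) atTop (𝓝 (ψ y)) := by
        intro w y hw
        have h1 := (tendsto_dMet hρ0 hρ1 hw).const_mul C
        rw [mul_zero] at h1
        have h2 : Tendsto (fun j => ψ (w j) - ψ y) atTop (𝓝 0) :=
          squeeze_zero_norm (fun j => by simpa using hψlip (w j) y) h1
        simpa using h2.add_const (ψ y)
      have hcc : ∀ (b : Fin n) {w : ℕ → ℕ → Fin n} {y}, Tendsto w atTop (𝓝 y) →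
          Tendsto (fun j => c b (w j)) atTop (𝓝 (c b y)) := by
        intro b w y hw
        have h1 := (tendsto_dMet hρ0 hρ1 hw).const_mul (C * (1 - ρ))
        rw [mul_zero] at h1
        have h2 : Tendsto (fun j => c b (w j) - c b y) atTop (𝓝 0) :=
          squeeze_zero_norm (fun j => by simpa using hS.c_lip b (w j) y) h1
        simpa using h2.add_const (c b y)
      refine hΛ θ ψ hψlip fun b y => ?_
      have hw := tendsto_cat_pre x y
      have hw' : Tendsto (fun j => prepend b (cat (pre j y) x)) atTop (𝓝 (prepend b y)) := by
        rw [tendsto_pi_nhds] at hw ⊢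
        intro i
        cases i with
        | zero => exact tendsto_const_nhds
        | succ i => exact hw i
      have hexp : ∀ {v : ℕ → ℝ} {z : ℝ}, Tendsto v atTop (𝓝 z) →
          Tendsto (fun j => Complex.exp ((θ * v j : ℝ) * Complex.I)) atTop
            (𝓝 (Complex.exp ((θ * z : ℝ) * Complex.I))) := by
        intro v z hv
        have hc : Continuous fun z : ℝ => Complex.exp ((θ * z : ℝ) * Complex.I) := by fun_prop
        exact (hc.tendsto z).comp hv
      have l1 := (hexp (hcψ hw')).mul (hexp (hcc b hw))
      have l2 := hexp (hcψ hw)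
      have hfin := tendsto_nhds_unique_of_eventuallyEq l1 l2 (Eventually.of_forall fun j => ?_)
      · rw [← hfin, neg_mul, Complex.exp_neg]
        field_simp [Complex.exp_ne_zero]
      · have h1 := hone (b :: pre j y)
        have h2 := hone (pre j y)
        rw [cat_cons] at h1
        simp only [wsum] at h1
        rw [mul_add, Complex.ofReal_add, add_mul, Complex.exp_add, ← mul_assoc, ← h2] at h1
        exact mul_right_cancel₀ (Complex.exp_ne_zero _) h1
  refine ⟨G x 0, fun ω s => ?_⟩
  rw [hind]
  have hind' : ∀ ω, G ω 0 = ∑ b, q b * G (prepend b ω) 0 := by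
    intro ω
    rw [hG.eq ω 0, TT_apply]
    exact Finset.sum_congr rfl fun b _ => by rw [hind]
  have hL : 0 ≤ L := by
    have h := (abs_nonneg _).trans (hG.lip x x 1 0)
    have h0 : dMet ρ x x = 0 := by simp [dMet]
    rw [h0] at h
    simpa using h
  have hLC : 0 ≤ L * C := mul_nonneg hL hS.C_nn
  have hcontr : ∀ m : ℕ, ∀ ω ω', |G ω 0 - G ω' 0| ≤ L * C * ρ ^ m * dMet ρ ω ω' := by
    intro m
    induction m with
    | zero =>
      intro ω ω'
      have h := hG.lip ω ω' 0 0
      simp only [sub_self, abs_zero, zero_add] at h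
      rwa [pow_zero, mul_one, mul_assoc]
    | succ m ih =>
      intro ω ω'
      rw [hind' ω, hind' ω', ← Finset.sum_sub_distrib]
      refine (Finset.abs_sum_le_sum_abs _ _).trans ?_
      calc _ ≤ ∑ b, q b * (L * C * ρ ^ (m + 1) * dMet ρ ω ω') := by
            refine Finset.sum_le_sum fun b _ => ?_
            rw [← mul_sub, abs_mul, abs_of_pos (hS.q_pos b)]
            refine mul_le_mul_of_nonneg_left ((ih _ _).trans ?_) (hS.q_pos b).le
            calc _ ≤ L * C * ρ ^ m * (ρ * dMet ρ ω ω') :=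
                  mul_le_mul_of_nonneg_left (dMet_prepend_le hρ0 hρ1.le b ω ω') (by positivity)
              _ = _ := by ring
        _ = _ := by rw [← Finset.sum_mul, hS.q_sum, one_mul]
  have hlim : Tendsto (fun m : ℕ => L * C * ρ ^ m) atTop (𝓝 0) := by
    simpa using (tendsto_pow_atTop_nhds_zero_of_lt_one hρ0 hρ1).const_mul (L * C)
  have := ge_of_tendsto' hlim fun m => (hcontr m ω x).trans
    (mul_le_of_le_one_right (by positivity) (dMet_le_one hρ0 hρ1.le _ _))
  exact sub_eq_zero.mp (abs_nonpos_iff.mp this)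

end Liouville

/-! ### Hat functions and their potentials -/

/-- The piecewise linear ramp, equal to `0` on `(-∞, 0]` and to `1` on `[δ, ∞)`. -/
def ramp (δ y : ℝ) : ℝ := max 0 (min 1 (y / δ))

/-- The hat function supported on `[-δ, δ]` with peak `1` at the origin. -/
def hat (δ y : ℝ) : ℝ := ramp δ (y + δ) - ramp δ y

section Hats

variable {δ : ℝ}

theorem ramp_nonneg (δ y : ℝ) : 0 ≤ ramp δ y := le_max_left _ _

theorem ramp_le_one (δ y : ℝ) : ramp δ y ≤ 1 := max_le zero_le_one (min_le_left _ _)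

theorem ramp_mono (hδ : 0 < δ) : Monotone (ramp δ) := by
  intro y z h
  unfold ramp
  gcongr

theorem ramp_of_nonpos (hδ : 0 < δ) {y : ℝ} (hy : y ≤ 0) : ramp δ y = 0 :=
  max_eq_left ((min_le_right _ _).trans (div_nonpos_of_nonpos_of_nonneg hy hδ.le))

theorem ramp_of_ge (hδ : 0 < δ) {y : ℝ} (hy : δ ≤ y) : ramp δ y = 1 := by
  unfold ramp
  rw [min_eq_left ((one_le_div hδ).mpr hy)]
  simp

theorem ramp_lip (hδ : 0 < δ) (y z : ℝ) : |ramp δ y - ramp δ z| ≤ |y - z| / δ := by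
  unfold ramp
  have h1 := abs_max_sub_max_le_abs (min 1 (y / δ)) (min 1 (z / δ)) 0
  have h2 := abs_min_sub_min_le_max 1 (y / δ) 1 (z / δ)
  rw [max_comm (0 : ℝ), max_comm (0 : ℝ)]
  refine h1.trans (h2.trans ?_)
  rw [sub_self, abs_zero, ← sub_div, abs_div, abs_of_pos hδ]
  exact max_le (by positivity) le_rfl

theorem hat_nonneg (hδ : 0 < δ) (y : ℝ) : 0 ≤ hat δ y :=
  sub_nonneg.mpr (ramp_mono hδ (by linarith))

theorem hat_le_one (δ y : ℝ) : hat δ y ≤ 1 := by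
  unfold hat
  linarith [ramp_le_one δ (y + δ), ramp_nonneg δ y]

theorem hat_eq_zero (hδ : 0 < δ) {y : ℝ} (hy : δ ≤ |y|) : hat δ y = 0 := by
  unfold hat
  rcases le_abs.mp hy with h | h
  · rw [ramp_of_ge hδ h, ramp_of_ge hδ (by linarith), sub_self]
  · rw [ramp_of_nonpos hδ (by linarith), ramp_of_nonpos hδ (by linarith), sub_self]

theorem hat_lip (hδ : 0 < δ) (y z : ℝ) : |hat δ y - hat δ z| ≤ 2 / δ * |y - z| := by
  unfold hat
  have h1 := ramp_lip hδ (y + δ) (z + δ)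
  have h2 := ramp_lip hδ y z
  rw [add_sub_add_right_eq_sub] at h1
  rw [show ramp δ (y + δ) - ramp δ y - (ramp δ (z + δ) - ramp δ z) =
    (ramp δ (y + δ) - ramp δ (z + δ)) - (ramp δ y - ramp δ z) by ring]
  refine (abs_sub _ _).trans ?_
  rw [show 2 / δ * |y - z| = |y - z| / δ + |y - z| / δ by ring]
  linarith

theorem hat_sum (δ y : ℝ) (N : ℕ) :
    ∑ j ∈ Finset.range N, hat δ (y + j * δ) = ramp δ (y + N * δ) - ramp δ y := by
  induction N with
  | zero => simp
  | succ N ih =>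
    rw [Finset.sum_range_succ, ih]
    unfold hat
    rw [show y + N * δ + δ = y + ((N + 1 : ℕ) : ℝ) * δ by push_cast; ring]
    ring

end Hats

/-- The potential of `F` for the backward walk. -/
def pot {n : ℕ} (q : Fin n → ℝ) (c : Fin n → (ℕ → Fin n) → ℝ) (F : (ℕ → Fin n) → ℝ → ℝ)
    (ω : ℕ → Fin n) (s : ℝ) : ℝ := ∑' i, (TT q c ^ i) F ω s

/-- The hat function in the time variable, recentred by `g`. -/
def hatF {n : ℕ} (δ : ℝ) (g : (ℕ → Fin n) → ℝ) : (ℕ → Fin n) → ℝ → ℝ :=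
  fun ω s => hat δ (s - g ω)

/-- The compact family of recentring functions over which all estimates are uniform. -/
structure Fam {n : ℕ} (ρ C : ℝ) (g : (ℕ → Fin n) → ℝ) : Prop where
  bdd : ∀ ω, |g ω| ≤ C
  lip : ∀ ω ω', |g ω - g ω'| ≤ C * dMet ρ ω ω'

section Potential

variable {n : ℕ} {q : Fin n → ℝ} {c : Fin n → (ℕ → Fin n) → ℝ} {D E ρ C δ : ℝ}
  {g : (ℕ → Fin n) → ℝ}

theorem pot_eq_sum (hS : Sys q c D E ρ C) {α : ℝ} {F : (ℕ → Fin n) → ℝ → ℝ}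
    (hF : ∀ ω s, s < α → F ω s = 0) {N : ℕ} {s : ℝ} (hN : s < α + N * D) (ω : ℕ → Fin n) :
    pot q c F ω s = ∑ i ∈ Finset.range N, (TT q c ^ i) F ω s := by
  apply tsum_eq_sum
  intro i hi
  rw [Finset.mem_range, not_lt] at hi
  apply TT_pow_supp hS hF
  have : (N : ℝ) * D ≤ i * D := by
    have := hS.D_pos
    gcongr
  linarith

theorem exists_cut (hS : Sys q c D E ρ C) (α s : ℝ) : ∃ N : ℕ, s < α + N * D := by
  obtain ⟨N, hN⟩ := exists_nat_gt ((s - α) / D)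
  rw [div_lt_iff₀ hS.D_pos] at hN
  exact ⟨N, by linarith⟩

theorem pot_eq (hS : Sys q c D E ρ C) {α : ℝ} {F : (ℕ → Fin n) → ℝ → ℝ}
    (hF : ∀ ω s, s < α → F ω s = 0) (ω : ℕ → Fin n) (s : ℝ) :
    pot q c F ω s = F ω s + TT q c (pot q c F) ω s := by
  obtain ⟨N, hN⟩ := exists_cut hS α s
  have hN' : s < α + (N + 1 : ℕ) * D := by
    push_cast; linarith [hS.D_pos]
  rw [pot_eq_sum hS hF hN', Finset.sum_range_succ', TT_apply, add_comm]
  congr 1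
  simp only [TT_pow_succ, TT_apply]
  rw [Finset.sum_comm]
  refine Finset.sum_congr rfl fun a _ => ?_
  rw [pot_eq_sum hS hF (N := N) (by linarith [hS.c_lb a ω, hS.D_pos]), Finset.mul_sum]

theorem hatF_supp (hδ : 0 < δ) (hg : Fam ρ C g) (ω : ℕ → Fin n) (s : ℝ)
    (hs : ¬ (-(C + δ) ≤ s ∧ s ≤ C + δ)) : hatF δ g ω s = 0 := by
  apply hat_eq_zero hδ
  have h := abs_le.mp (hg.bdd ω)
  rw [le_abs]
  by_contra hcon
  rw [not_or, not_le, not_le] at hcon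
  exact hs ⟨by linarith, by linarith⟩

theorem hatF_supp' (hδ : 0 < δ) (hg : Fam ρ C g) (ω : ℕ → Fin n) (s : ℝ)
    (hs : s < -(C + δ)) : hatF δ g ω s = 0 :=
  hatF_supp hδ hg ω s fun h => by linarith [h.1]

theorem hatF_le_win (hδ : 0 < δ) (hg : Fam ρ C g) :
    hatF δ g ≤ win n (-(C + δ)) (C + δ) := by
  intro ω s
  unfold win
  split_ifs with h
  · exact hat_le_one _ _
  · rw [hatF_supp hδ hg ω s h]

theorem hatF_nonneg (hδ : 0 < δ) : 0 ≤ hatF δ g := fun _ _ => hat_nonneg hδ _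

theorem hatF_lip (hS : Sys q c D E ρ C) (hδ : 0 < δ) (hg : Fam ρ C g) (ω ω' : ℕ → Fin n)
    (s s' : ℝ) :
    |hatF δ g ω s - hatF δ g ω' s'| ≤ 2 / δ * (|s - s'| + C * dMet ρ ω ω') *
      (win n (-(C + δ)) (C + δ) ω s + win n (-(C + δ)) (C + δ) ω' s') := by
  have hd := mul_nonneg hS.C_nn (dMet_nonneg hS.ρ_pos.le ω ω')
  have hw1 := win_nonneg (n := n) (-(C + δ)) (C + δ) ω s
  have hw2 := win_nonneg (n := n) (-(C + δ)) (C + δ) ω' s'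
  simp only [Pi.zero_apply] at hw1 hw2
  by_cases h : (-(C + δ) ≤ s ∧ s ≤ C + δ) ∨ (-(C + δ) ≤ s' ∧ s' ≤ C + δ)
  · have h1 : 1 ≤ win n (-(C + δ)) (C + δ) ω s + win n (-(C + δ)) (C + δ) ω' s' := by
      rcases h with h | h
      · have : win n (-(C + δ)) (C + δ) ω s = 1 := by simp only [win, if_pos h]
        linarith
      · have : win n (-(C + δ)) (C + δ) ω' s' = 1 := by simp only [win, if_pos h]
        linarith
    have h2 : |s - g ω - (s' - g ω')| ≤ |s - s'| + C * dMet ρ ω ω' := by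
      rw [show s - g ω - (s' - g ω') = (s - s') - (g ω - g ω') by ring]
      exact (abs_sub _ _).trans (by linarith [hg.lip ω ω'])
    calc _ ≤ 2 / δ * |s - g ω - (s' - g ω')| := hat_lip hδ _ _
      _ ≤ 2 / δ * (|s - s'| + C * dMet ρ ω ω') := by gcongr
      _ ≤ _ := le_mul_of_one_le_right (by positivity) h1
  · rw [not_or] at h
    rw [hatF_supp hδ hg ω s h.1, hatF_supp hδ hg ω' s' h.2, sub_self, abs_zero]
    positivity

theorem pot_hatF_bdd (hS : Sys q c D E ρ C) (hδ : 0 < δ) (hg : Fam ρ C g) (ω : ℕ → Fin n) (s : ℝ) :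
    |pot q c (hatF δ g) ω s| ≤ (C + δ - -(C + δ)) / D + 1 := by
  have hq : ∀ a, 0 ≤ q a := fun a => (hS.q_pos a).le
  have hC := hS.C_nn
  obtain ⟨N, hN⟩ := exists_cut hS (-(C + δ)) s
  rw [pot_eq_sum hS (hatF_supp' hδ hg) hN, abs_of_nonneg]
  · refine le_trans (Finset.sum_le_sum fun i _ => ?_) (visits hS (by linarith) N ω s)
    exact TT_pow_mono hq i (hatF_le_win hδ hg) ω s
  · exact Finset.sum_nonneg fun i _ => TT_pow_nonneg hq i (hatF_nonneg hδ) ω s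

theorem pot_hatF_lip (hS : Sys q c D E ρ C) (hδ : 0 < δ) (hg : Fam ρ C g) (ω ω' : ℕ → Fin n)
    (s s' : ℝ) :
    |pot q c (hatF δ g) ω s - pot q c (hatF δ g) ω' s'| ≤
      2 / δ * (2 * ((C + δ - -(C + δ)) / D + 1)) * (|s - s'| + C * dMet ρ ω ω') := by
  have hC := hS.C_nn
  have hd := mul_nonneg hS.C_nn (dMet_nonneg hS.ρ_pos.le ω ω')
  obtain ⟨N, hN⟩ := exists_cut hS (-(C + δ)) (max s s')
  rw [pot_eq_sum hS (hatF_supp' hδ hg) (lt_of_le_of_lt (le_max_left _ _) hN),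
    pot_eq_sum hS (hatF_supp' hδ hg) (lt_of_le_of_lt (le_max_right _ _) hN),
    ← Finset.sum_sub_distrib]
  refine (Finset.abs_sum_le_sum_abs _ _).trans ?_
  refine (Finset.sum_le_sum fun i _ => TT_pow_lip hS (by positivity) (win_nonneg _ _)
    (hatF_lip hS hδ hg) i ω ω' s s').trans ?_
  rw [← Finset.mul_sum, Finset.sum_add_distrib]
  have h1 := visits hS (α := -(C + δ)) (β := C + δ) (by linarith) N ω s
  have h2 := visits hS (α := -(C + δ)) (β := C + δ) (by linarith) N ω' s'
  calc _ ≤ 2 / δ * (|s - s'| + C * dMet ρ ω ω') * (2 * ((C + δ - -(C + δ)) / D + 1)) := by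
        gcongr
        linarith
    _ = _ := by ring

/-- Maximum principle: once a solution of `V = TT V` is nearly constant on a time window of
length `E`, it stays so at all later times. -/
theorem max_principle (hS : Sys q c D E ρ C) {V : (ℕ → Fin n) → ℝ → ℝ} {T k ε : ℝ}
    (hV : ∀ ω s, T < s → V ω s = TT q c V ω s)
    (hT : ∀ ω s, T - E ≤ s → s ≤ T → |V ω s - k| ≤ ε) :
    ∀ ω s, T - E ≤ s → |V ω s - k| ≤ ε := by
  have key : ∀ m : ℕ, ∀ ω s, T - E ≤ s → s ≤ T + m * D → |V ω s - k| ≤ ε := by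
    intro m
    induction m with
    | zero => intro ω s h1 h2; exact hT ω s h1 (by simpa using h2)
    | succ m ih =>
      intro ω s h1 h2
      rcases le_or_gt s T with h | h
      · exact hT ω s h1 h
      · rw [hV ω s h, TT_apply]
        have hk : k = ∑ a, q a * k := by rw [← Finset.sum_mul, hS.q_sum, one_mul]
        rw [hk, ← Finset.sum_sub_distrib]
        refine (Finset.abs_sum_le_sum_abs _ _).trans ?_
        calc _ ≤ ∑ a, q a * ε := by
              refine Finset.sum_le_sum fun a _ => ?_
              rw [← mul_sub, abs_mul, abs_of_pos (hS.q_pos a)]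
              have e1 := hS.c_lb a ω
              have e2 := hS.c_ub a ω
              push_cast at h2
              exact mul_le_mul_of_nonneg_left (ih _ _ (by linarith) (by linarith))
                (hS.q_pos a).le
          _ = ε := by rw [← Finset.sum_mul, hS.q_sum, one_mul]
  intro ω s h1
  obtain ⟨m, hm⟩ := exists_cut hS T s
  exact key m ω s h1 hm.le

/-- The potentials of hat functions become asymptotically constant, uniformly over the family of
recentring functions: a limit of translated potentials is harmonic, hence constant. -/
theorem pot_osc (hS : Sys q c D E ρ C) (hδ : 0 < δ)
    (hL : ∀ (B L : ℝ) (G : (ℕ → Fin n) → ℝ → ℝ), Harm q c ρ C B L G → ∃ k, ∀ ω s, G ω s = k)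
    {ε : ℝ} (hε : 0 < ε) :
    ∃ T : ℝ, ∀ g, Fam ρ C g → ∃ k, ∀ ω s, T ≤ s → |pot q c (hatF δ g) ω s - k| ≤ ε := by
  have hρ0 := hS.ρ_pos.le
  have hρ1 := hS.ρ_lt
  have hharm : ∀ g, Fam ρ C g → ∀ ω s, C + δ < s →
      pot q c (hatF δ g) ω s = TT q c (pot q c (hatF δ g)) ω s := by
    intro g hg ω s hs
    rw [pot_eq hS (hatF_supp' hδ hg), hatF_supp hδ hg ω s (fun h => by linarith [h.2]), zero_add]
  suffices h : ∃ T : ℝ, C + δ ≤ T ∧ ∀ g, Fam ρ C g → ∃ k, ∀ ω s, T - E ≤ s → s ≤ T →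
      |pot q c (hatF δ g) ω s - k| ≤ ε by
    obtain ⟨T, hT, h⟩ := h
    refine ⟨T - E, fun g hg => ?_⟩
    obtain ⟨k, hk⟩ := h g hg
    exact ⟨k, max_principle hS (fun ω s hs => hharm g hg ω s (by linarith)) hk⟩
  by_contra hcon
  push Not at hcon
  have hseq : ∀ j : ℕ, ∃ g, Fam ρ C g ∧ ∀ k, ∃ ω s, C + δ + j - E ≤ s ∧ s ≤ C + δ + j ∧
      ε < |pot q c (hatF δ g) ω s - k| := by
    intro j
    exact hcon (C + δ + j) (by linarith [Nat.cast_nonneg (α := ℝ) j])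
  choose g hg hbad using hseq
  set Gs : ℕ → (ℕ → Fin n) → ℝ → ℝ :=
    fun j ω s => pot q c (hatF δ (g j)) ω (s + (C + δ + j)) with hGs
  have hb : ∀ j ω s, |Gs j ω s| ≤ (C + δ - -(C + δ)) / D + 1 :=
    fun j ω s => pot_hatF_bdd hS hδ (hg j) ω _
  have hlip : ∀ j ω ω' s s', |Gs j ω s - Gs j ω' s'| ≤
      2 / δ * (2 * ((C + δ - -(C + δ)) / D + 1)) * (|s - s'| + C * dMet ρ ω ω') := by
    intro j ω ω' s s'
    have := pot_hatF_lip hS hδ (hg j) ω ω' (s + (C + δ + j)) (s' + (C + δ + j))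
    rwa [add_sub_add_right_eq_sub] at this
  obtain ⟨H, hH⟩ := exists_ulim_fun hb
  have hHarm := harm_ulim (q := q) (c := c) hb hlip (fun ω s => by
    apply Nat.hyperfilter_le_atTop
    obtain ⟨N, hN⟩ := exists_nat_gt (-s)
    filter_upwards [eventually_ge_atTop N] with j hj
    have h1 : (N : ℝ) ≤ j := by exact_mod_cast hj
    have h2 := hharm (g j) (hg j) ω (s + (C + δ + j)) (by linarith)
    have h3 := TT_pow_trans (q := q) (c := c) (C + δ + j) (pot q c (hatF δ (g j))) 1 ω s
    rw [pow_one] at h3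
    simp only [hGs]
    rw [h3, h2]) hH
  obtain ⟨k, hk⟩ := hL _ _ H hHarm
  choose w t ht1 ht2 hbad' using fun j => hbad j k
  obtain ⟨ω, hω⟩ := exists_ulim_word w
  obtain ⟨s, hs⟩ := exists_ulim (B := E) (u := fun j => t j - (C + δ + j)) (fun j => by
    rw [abs_le]
    have := hS.c_lb (w 0 0) (w 0)
    have := hS.c_ub (w 0 0) (w 0)
    have := hS.D_pos
    constructor <;> linarith [ht1 j, ht2 j])
  have hlim := ulim_moving hρ0 hρ1 hlip hH hω hs
  rw [hk] at hlim
  have h1 : Tendsto (fun j => |Gs j (w j) (t j - (C + δ + j)) - k|) (hyperfilter ℕ) (𝓝 0) := by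
    have := (hlim.sub_const k).abs
    simpa using this
  have h2 : ε ≤ 0 := ge_of_tendsto' h1 fun j => by
    have := hbad' j
    simp only [hGs, sub_add_cancel]
    exact this.le
  linarith

end Potential

/-! ### Stationarity of the Bernoulli measure -/

section Stationary

variable {n : ℕ}

theorem measurable_prepend (a : Fin n) : Measurable (prepend a : (ℕ → Fin n) → ℕ → Fin n) := by
  rw [measurable_pi_iff]
  intro i
  cases i with
  | zero => exact measurable_const
  | succ j => exact measurable_pi_apply j

theorem measurable_shift : Measurable (shift : (ℕ → Fin n) → ℕ → Fin n) :=
  measurable_pi_iff.mpr fun i => measurable_pi_apply (i + 1)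

theorem measurableSet_cyl (s : Finset ℕ) (w : ℕ → Fin n) :
    MeasurableSet {ω : ℕ → Fin n | ∀ i ∈ s, ω i = w i} := by
  have : {ω : ℕ → Fin n | ∀ i ∈ s, ω i = w i} = ⋂ i ∈ s, {ω | ω i = w i} := by
    ext; simp
  rw [this]
  exact Finset.measurableSet_biInter _ fun i _ => measurable_pi_apply i (measurableSet_singleton _)

/-- The cylinder sets generate the product `σ`-algebra. -/
theorem generateFrom_cyl : (MeasurableSpace.pi : MeasurableSpace (ℕ → Fin n)) =
    MeasurableSpace.generateFrom
      {A | ∃ (s : Finset ℕ) (w : ℕ → Fin n), A = {ω | ∀ i ∈ s, ω i = w i}} := by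
  refine le_antisymm (iSup_le fun i => measurable_iff_comap_le.mp ?_)
    (MeasurableSpace.generateFrom_le ?_)
  · refine @measurable_to_countable' (Fin n) (ℕ → Fin n) _ _ (_) (fun ω => ω i) fun x => ?_
    apply MeasurableSpace.measurableSet_generateFrom
    exact ⟨{i}, fun _ => x, by ext; simp⟩
  · rintro _ ⟨s, w, rfl⟩
    exact measurableSet_cyl s w

theorem isPiSystem_cyl : IsPiSystem
    {A : Set (ℕ → Fin n) | ∃ (s : Finset ℕ) (w : ℕ → Fin n), A = {ω | ∀ i ∈ s, ω i = w i}} := by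
  rintro _ ⟨s, w, rfl⟩ _ ⟨t, v, rfl⟩ ⟨z, hz1, hz2⟩
  refine ⟨s ∪ t, z, ?_⟩
  ext ω
  simp only [mem_inter_iff, mem_ofPred_eq, Finset.mem_union] at *
  constructor
  · rintro ⟨h1, h2⟩ i (hi | hi)
    · rw [h1 i hi, hz1 i hi]
    · rw [h2 i hi, hz2 i hi]
  · intro h
    exact ⟨fun i hi => by rw [h i (Or.inl hi), hz1 i hi],
      fun i hi => by rw [h i (Or.inr hi), hz2 i hi]⟩

/-- A Bernoulli measure is the mixture of its images under the maps `ω ↦ aω`. -/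
theorem stationary {p : Fin n → ℝ≥0∞} (hp1 : ∑ i, p i = 1) {P : Measure (ℕ → Fin n)}
    [IsProbabilityMeasure P]
    (hBern : ∀ (s : Finset ℕ) (w : ℕ → Fin n),
      P {ω | ∀ i ∈ s, ω i = w i} = ∏ i ∈ s, p (w i)) :
    P = ∑ a, p a • P.map (prepend a) := by
  have hval : ∀ A, MeasurableSet A → (∑ a, p a • P.map (prepend a)) A =
      ∑ a, p a * P (prepend a ⁻¹' A) := by
    intro A hA
    simp only [Measure.finsetSum_apply, Measure.smul_apply, smul_eq_mul]
    exact Finset.sum_congr rfl fun a _ => by rw [Measure.map_apply (measurable_prepend a) hA]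
  refine ext_of_generate_finite _ generateFrom_cyl isPiSystem_cyl ?_ ?_
  · rintro _ ⟨s, w, rfl⟩
    rw [hval _ (measurableSet_cyl s w), hBern]
    have hinj : InjOn Nat.succ (Nat.succ ⁻¹' (s : Set ℕ)) := Nat.succ_injective.injOn
    set s' := s.preimage Nat.succ hinj with hs'
    have hpre : ∀ a, (0 ∈ s → a = w 0) → P (prepend a ⁻¹' {ω | ∀ i ∈ s, ω i = w i}) =
        ∏ i ∈ s', p (w (i + 1)) := by
      intro a ha
      rw [← hBern s' fun i => w (i + 1)]
      congr 1
      ext ω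
      simp only [mem_preimage, mem_ofPred_eq, hs', Finset.mem_preimage]
      constructor
      · intro h i hi
        exact h (i + 1) hi
      · intro h i hi
        cases i with
        | zero => exact ha hi
        | succ j => exact h j hi
    by_cases h0 : 0 ∈ s
    · rw [Finset.sum_eq_single (w 0)]
      · rw [hpre _ fun _ => rfl, ← Finset.mul_prod_erase s _ h0]
        congr 1
        have : s' = (s.erase 0).preimage Nat.succ Nat.succ_injective.injOn := by
          ext i; simp [hs']
        rw [this]
        symm
        apply Finset.prod_preimage Nat.succ _ _ fun i => p (w i)
        intro x hx hx'
        exfalso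
        apply hx'
        exact ⟨x - 1, Nat.succ_pred_eq_of_ne_zero (Finset.ne_of_mem_erase hx)⟩
      · intro a _ ha
        have : prepend a ⁻¹' {ω | ∀ i ∈ s, ω i = w i} = ∅ := by
          ext ω
          simp only [mem_preimage, mem_ofPred_eq, mem_empty_iff_false, iff_false]
          intro h
          exact ha (h 0 h0)
        rw [this, measure_empty, mul_zero]
      · simp
    · rw [Finset.sum_congr rfl fun a _ => by rw [hpre a fun h => absurd h h0], ← Finset.sum_mul,
        hp1, one_mul]
      symm
      apply Finset.prod_preimage Nat.succ _ _ fun i => p (w i)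
      intro x hx hx'
      exfalso
      apply hx'
      refine ⟨x - 1, Nat.succ_pred_eq_of_ne_zero ?_⟩
      rintro rfl
      exact h0 hx
  · rw [hval _ MeasurableSet.univ]
    simp [hp1]

/-- Stationarity in integrated form, for bounded measurable functions. -/
def Stat (q : Fin n → ℝ) (P : Measure (ℕ → Fin n)) : Prop :=
  ∀ (F : (ℕ → Fin n) → ℝ) (B : ℝ), Measurable F → (∀ ω, |F ω| ≤ B) →
    ∫ ω, F ω ∂P = ∑ a, q a * ∫ ω, F (prepend a ω) ∂P

theorem integrable_bdd {X : Type*} [MeasurableSpace X] {P : Measure X} [IsFiniteMeasure P]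
    {F : X → ℝ} {B : ℝ} (hF : Measurable F) (hB : ∀ ω, |F ω| ≤ B) : Integrable F P :=
  Integrable.of_bound hF.aestronglyMeasurable B (Eventually.of_forall hB)

theorem stat_of_bern {p : Fin n → ℝ≥0∞} (hp1 : ∑ i, p i = 1) {P : Measure (ℕ → Fin n)}
    [IsProbabilityMeasure P]
    (hBern : ∀ (s : Finset ℕ) (w : ℕ → Fin n),
      P {ω | ∀ i ∈ s, ω i = w i} = ∏ i ∈ s, p (w i)) :
    Stat (fun a => (p a).toReal) P := by
  intro F B hF hB
  have hpt : ∀ a, p a ≠ ∞ := fun a =>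
    ne_top_of_le_ne_top ENNReal.one_ne_top (hp1 ▸ Finset.single_le_sum (by simp) (Finset.mem_univ a))
  have hmap : ∀ a, IsProbabilityMeasure (P.map (prepend a)) := fun a =>
    Measure.isProbabilityMeasure_map (measurable_prepend a).aemeasurable
  conv_lhs => rw [stationary hp1 hBern]
  rw [integral_finsetSum_measure]
  · refine Finset.sum_congr rfl fun a _ => ?_
    rw [integral_smul_measure, integral_map (measurable_prepend a).aemeasurable
      hF.aestronglyMeasurable, smul_eq_mul]
  · intro a _
    exact (integrable_bdd hF hB).smul_measure (hpt a)

end Stationary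

/-! ### The forward walk and the transfer identity -/

/-- The forward walk `S_m(ω) = ∑_{i < m} c(ω_i, σ^{i+1} ω)`. -/
def fwd {n : ℕ} (c : Fin n → (ℕ → Fin n) → ℝ) (m : ℕ) (ω : ℕ → Fin n) : ℝ :=
  wsum c (pre m ω) (shift^[m] ω)

section Transfer

variable {n : ℕ} {q : Fin n → ℝ} {c : Fin n → (ℕ → Fin n) → ℝ} {D E ρ C : ℝ}
  {P : Measure (ℕ → Fin n)}

theorem fwd_zero (ω : ℕ → Fin n) : fwd c 0 ω = 0 := rfl

theorem fwd_prepend (m : ℕ) (a : Fin n) (ω : ℕ → Fin n) :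
    fwd c (m + 1) (prepend a ω) = c a ω + fwd c m ω := by
  unfold fwd
  rw [Function.iterate_succ_apply, shift_prepend, pre, wsum, shift_prepend, cat_pre_shift]
  rfl

theorem fwd_succ' (m : ℕ) (ω : ℕ → Fin n) :
    fwd c (m + 1) ω = c (ω 0) (shift ω) + fwd c m (shift ω) := by
  rw [← fwd_prepend, prepend_shift]

theorem fwd_succ (m : ℕ) (ω : ℕ → Fin n) :
    fwd c (m + 1) ω = fwd c m ω + c (shift^[m] ω 0) (shift (shift^[m] ω)) := by
  induction m generalizing ω with
  | zero => rw [fwd_succ', fwd_zero, fwd_zero]; simp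
  | succ m ih =>
    rw [fwd_succ' (m + 1) ω, ih, fwd_succ' m ω, Function.iterate_succ_apply]
    ring

theorem measurable_of_lip {ρ : ℝ} (h0 : 0 ≤ ρ) (h1 : ρ < 1) {g : (ℕ → Fin n) → ℝ} {L : ℝ}
    (hg : ∀ ω ω', |g ω - g ω'| ≤ L * dMet ρ ω ω') : Measurable g := by
  apply Continuous.measurable
  rw [continuous_iff_continuousAt]
  intro ω
  have h := (tendsto_dMet h0 h1 (tendsto_id (x := 𝓝 ω))).const_mul L
  rw [mul_zero] at h
  rw [ContinuousAt, tendsto_iff_dist_tendsto_zero]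
  exact squeeze_zero (fun _ => dist_nonneg) (fun ω' => hg ω' ω) h

theorem Sys.meas (hS : Sys q c D E ρ C) (a : Fin n) : Measurable (c a) :=
  measurable_of_lip hS.ρ_pos.le hS.ρ_lt (hS.c_lip a)

theorem Sys.meas_step (hS : Sys q c D E ρ C) : Measurable fun ω => c (ω 0) (shift ω) := by
  have : (fun ω : ℕ → Fin n => c (ω 0) (shift ω)) =
      fun ω => ∑ a, ({ω : ℕ → Fin n | ω 0 = a}.indicator (fun ω => c a (shift ω))) ω := by
    funext ω
    rw [Finset.sum_eq_single (ω 0)]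
    · simp
    · intro a _ ha
      simp [indicator, ha.symm]
    · simp
  rw [this]
  refine Finset.measurable_sum _ fun a _ => Measurable.indicator ?_ ?_
  · exact (hS.meas a).comp measurable_shift
  · simpa using measurableSet_cyl {0} fun _ : ℕ => a

theorem measurable_fwd (hS : Sys q c D E ρ C) (m : ℕ) : Measurable (fwd c m) := by
  induction m with
  | zero => exact measurable_const
  | succ m ih =>
    have : fwd c (m + 1) = fun ω => c (ω 0) (shift ω) + fwd c m (shift ω) :=
      funext fun ω => fwd_succ' m ω
    rw [this]
    exact hS.meas_step.add (ih.comp measurable_shift)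

theorem measurable_TT_pow (hS : Sys q c D E ρ C) {F : (ℕ → Fin n) → ℝ → (ℕ → Fin n) → ℝ}
    (hF : Measurable fun x : (ℕ → Fin n) × ℝ × (ℕ → Fin n) => F x.1 x.2.1 x.2.2) (m : ℕ) :
    Measurable fun x : (ℕ → Fin n) × ℝ × (ℕ → Fin n) =>
      (TT q c ^ m) (fun ω s => F ω s x.2.2) x.1 x.2.1 := by
  induction m with
  | zero => simpa using hF
  | succ m ih =>
    simp only [TT_pow_succ, TT_apply]
    refine Finset.measurable_sum _ fun a _ => Measurable.const_mul ?_ _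
    have h1 : Measurable fun x : (ℕ → Fin n) × ℝ × (ℕ → Fin n) =>
        (prepend a x.1, x.2.1 - c a x.1, x.2.2) :=
      ((measurable_prepend a).comp measurable_fst).prodMk
        ((measurable_snd.fst.sub ((hS.meas a).comp measurable_fst)).prodMk measurable_snd.snd)
    exact ih.comp h1

theorem TT_pow_bdd (hS : Sys q c D E ρ C) {F : (ℕ → Fin n) → ℝ → ℝ} {B : ℝ}
    (hB : ∀ ω s, |F ω s| ≤ B) (m : ℕ) : ∀ ω s, |(TT q c ^ m) F ω s| ≤ B := by
  induction m with
  | zero => simpa using hB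
  | succ m ih =>
    intro ω s
    rw [TT_pow_succ, TT_apply]
    refine (Finset.abs_sum_le_sum_abs _ _).trans ?_
    calc _ ≤ ∑ a, q a * B := Finset.sum_le_sum fun a _ => by
            rw [abs_mul, abs_of_pos (hS.q_pos a)]
            exact mul_le_mul_of_nonneg_left (ih _ _) (hS.q_pos a).le
      _ = B := by rw [← Finset.sum_mul, hS.q_sum, one_mul]

/-- Reading the first `m` letters of a random word from the last to the first turns the forward
walk into the backward walk. -/
theorem transfer [IsProbabilityMeasure P] (hS : Sys q c D E ρ C) (hst : Stat q P) (m : ℕ)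
    {F : (ℕ → Fin n) → ℝ → (ℕ → Fin n) → ℝ} {B : ℝ}
    (hF : Measurable fun x : (ℕ → Fin n) × ℝ × (ℕ → Fin n) => F x.1 x.2.1 x.2.2)
    (hB : ∀ ω s ω', |F ω s ω'| ≤ B) :
    ∫ ω, F ω (-fwd c m ω) (shift^[m] ω) ∂P =
      ∫ ω, (TT q c ^ m) (fun η s => F η s ω) ω 0 ∂P := by
  induction m generalizing F with
  | zero => simp [fwd_zero]
  | succ m ih =>
    have hm : ∀ (G : (ℕ → Fin n) → ℝ → (ℕ → Fin n) → ℝ) (j : ℕ),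
        (Measurable fun x : (ℕ → Fin n) × ℝ × (ℕ → Fin n) => G x.1 x.2.1 x.2.2) →
        Measurable fun ω => G ω (-fwd c j ω) (shift^[j] ω) := by
      intro G j hG
      exact hG.comp (measurable_id.prodMk
        ((measurable_fwd hS j).neg.prodMk (measurable_shift.iterate j)))
    have hG := measurable_TT_pow hS hF 1
    have hGB : ∀ ω s ω', |TT q c (fun η s => F η s ω') ω s| ≤ B := by
      intro ω s ω'
      simpa using TT_pow_bdd hS (fun η s => hB η s ω') 1 ω s
    simp only [pow_one] at hG
    have h1 := ih (F := fun ω s ω' => TT q c (fun η s => F η s ω') ω s) hG hGB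
    simp only [TT_pow_succ']
    rw [← h1, hst _ B (hm F (m + 1) hF) fun ω => hB _ _ _]
    simp only [TT_apply]
    rw [integral_finsetSum]
    · refine Finset.sum_congr rfl fun a _ => ?_
      rw [integral_const_mul]
      congr 1
      refine integral_congr_ae (Eventually.of_forall fun ω => ?_)
      simp only [fwd_prepend, Function.iterate_succ_apply, shift_prepend]
      congr 1
      ring
    · intro a _
      apply Integrable.const_mul
      have h2 : Measurable fun x : (ℕ → Fin n) × ℝ × (ℕ → Fin n) =>
          F (prepend a x.1) (x.2.1 - c a x.1) x.2.2 := by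
        have h3 : Measurable fun x : (ℕ → Fin n) × ℝ × (ℕ → Fin n) =>
            (prepend a x.1, x.2.1 - c a x.1, x.2.2) :=
          ((measurable_prepend a).comp measurable_fst).prodMk
            ((measurable_snd.fst.sub ((hS.meas a).comp measurable_fst)).prodMk measurable_snd.snd)
        exact hF.comp h3
      exact integrable_bdd (hm (fun ω s ω' => F (prepend a ω) (s - c a ω) ω') m h2)
        fun ω => hB _ _ _

/-- Iterating the operator on a function carried by a single cylinder of length `m`. -/
theorem TT_pow_word (m : ℕ) (ξ : ℕ → Fin n) (F : (ℕ → Fin n) → ℝ → ℝ) (ω : ℕ → Fin n) (s : ℝ) :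
    (TT q c ^ m) (fun ω s => {ω : ℕ → Fin n | ∀ i < m, ω i = ξ i}.indicator (fun ω => F ω s) ω)
      ω s = (∏ i ∈ Finset.range m, q (ξ i)) *
        F (cat (pre m ξ) ω) (s - wsum c (pre m ξ) ω) := by
  induction m generalizing ξ F with
  | zero => simp [pre, cat_nil, wsum]
  | succ m ih =>
    rw [TT_pow_succ']
    have h1 : TT q c (fun ω s => {ω : ℕ → Fin n | ∀ i < m + 1, ω i = ξ i}.indicator
        (fun ω => F ω s) ω) = fun ω s => {ω : ℕ → Fin n | ∀ i < m, ω i = shift ξ i}.indicator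
        (fun ω => q (ξ 0) * F (prepend (ξ 0) ω) (s - c (ξ 0) ω)) ω := by
      funext ω s
      rw [TT_apply, Finset.sum_eq_single (ξ 0)]
      · have : prepend (ξ 0) ω ∈ {ω : ℕ → Fin n | ∀ i < m + 1, ω i = ξ i} ↔
            ω ∈ {ω : ℕ → Fin n | ∀ i < m, ω i = shift ξ i} := by
          simp only [mem_ofPred_eq]
          constructor
          · intro h i hi
            exact h (i + 1) (by omega)
          · intro h i hi
            cases i with
            | zero => rfl
            | succ j => exact h j (by omega)
        by_cases hω : ω ∈ {ω : ℕ → Fin n | ∀ i < m, ω i = shift ξ i}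
        · rw [indicator_of_mem (this.mpr hω), indicator_of_mem hω]
        · rw [indicator_of_notMem (fun h => hω (this.mp h)), indicator_of_notMem hω, mul_zero]
      · intro a _ ha
        rw [indicator_of_notMem, mul_zero]
        intro h
        exact ha (h 0 (by omega))
      · simp
    rw [h1, ih (shift ξ) fun ω s => q (ξ 0) * F (prepend (ξ 0) ω) (s - c (ξ 0) ω),
      Finset.prod_range_succ']
    simp only [pre, cat_cons, wsum, shift]
    rw [sub_sub, add_comm (wsum c (pre m (shift ξ)) ω)]
    ring

end Transfer

/-! ### Identification of the limit of the potentials -/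

theorem continuous_ramp (δ : ℝ) : Continuous (ramp δ) := by
  unfold ramp
  fun_prop

/-- The number of terms of a sequence of asymptotic slope `χ` in `[0, N δ]`, counted with a
linear cutoff, is asymptotic to `N δ / χ`. -/
theorem renewal_count {y : ℕ → ℝ} {χ δ : ℝ} (hχ : 0 < χ) (hδ : 0 < δ)
    (hy : Tendsto (fun i : ℕ => y i / i) atTop (𝓝 χ)) {R : ℕ → ℕ}
    (hR : ∀ (N i : ℕ), y i < N * δ → i < R N) :
    Tendsto (fun N : ℕ => (∑ i ∈ Finset.range (R N),
      (ramp δ (-y i + N * δ) - ramp δ (-y i))) / (N : ℝ)) atTop (𝓝 (δ / χ)) := by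
  have hdiv : ∀ K : ℝ, Tendsto (fun N : ℕ => K / (N : ℝ)) atTop (𝓝 0) := fun K =>
    tendsto_const_div_atTop_nhds_zero_nat K
  have hcont : ContinuousAt (fun x : ℝ => δ / x) χ := continuousAt_const.div continuousAt_id hχ.ne'
  have hcont' : Tendsto (fun x : ℝ => δ / x) (𝓝 χ) (𝓝 (δ / χ)) := hcont
  rw [tendsto_order]
  constructor
  · intro l hl
    obtain ⟨x, hx1, hx2⟩ : ∃ x, l < δ / x ∧ χ < x :=
      (((hcont'.mono_left nhdsWithin_le_nhds).eventually_const_lt hl).and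
        (self_mem_nhdsWithin (s := Ioi χ))).exists
    have hx0 : 0 < x := hχ.trans hx2
    obtain ⟨i0, hi0⟩ := eventually_atTop.mp
      (((hy.eventually_lt_const hx2).and (hy.eventually_const_lt hχ)).and (eventually_gt_atTop 0))
    have hlim : Tendsto (fun N : ℕ => δ / x - (δ / x + 1 + i0) / (N : ℝ)) atTop (𝓝 (δ / x)) := by
      simpa using tendsto_const_nhds.sub (hdiv (δ / x + 1 + i0))
    filter_upwards [hlim.eventually_const_lt hx1, eventually_gt_atTop 0] with N hN hN0
    refine hN.trans_le ?_
    have hN0' : (0 : ℝ) < N := by exact_mod_cast hN0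
    rw [le_div_iff₀ hN0', sub_mul, div_mul_cancel₀ _ hN0'.ne']
    set K := ⌊((N : ℝ) - 1) * δ / x⌋₊ with hK
    have hone : ∀ i ∈ Finset.Ico i0 K, y i ≤ (N - 1) * δ ∧ 0 ≤ y i := by
      intro i hi
      rw [Finset.mem_Ico] at hi
      obtain ⟨⟨h1, h2⟩, h3⟩ := hi0 i hi.1
      have hi0' : (0 : ℝ) < i := by exact_mod_cast h3
      rw [div_lt_iff₀ hi0'] at h1
      rw [lt_div_iff₀ hi0', zero_mul] at h2
      have h4 : (i : ℝ) ≤ (N - 1) * δ / x := by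
        have : i ≤ ⌊((N : ℝ) - 1) * δ / x⌋₊ := hi.2.le
        exact (Nat.le_floor_iff' (by omega)).mp this
      rw [le_div_iff₀ hx0] at h4
      exact ⟨by linarith, h2.le⟩
    have hsub : Finset.Ico i0 K ⊆ Finset.range (R N) := by
      intro i hi
      rw [Finset.mem_range]
      apply hR
      linarith [(hone i hi).1]
    have hle : ∑ i ∈ Finset.Ico i0 K, (1 : ℝ) ≤ ∑ i ∈ Finset.range (R N),
        (ramp δ (-y i + N * δ) - ramp δ (-y i)) := by
      refine le_trans (Finset.sum_le_sum fun i hi => ?_)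
        (Finset.sum_le_sum_of_subset_of_nonneg hsub fun i _ _ => ?_)
      · rw [ramp_of_ge hδ (by linarith [(hone i hi).1]),
          ramp_of_nonpos hδ (by linarith [(hone i hi).2]), sub_zero]
      · exact sub_nonneg.mpr (ramp_mono hδ (by nlinarith))
    refine le_trans ?_ hle
    rw [Finset.sum_const, Nat.card_Ico, nsmul_eq_mul, mul_one]
    have h5 : (K : ℝ) - i0 ≤ ((K - i0 : ℕ) : ℝ) := by
      rw [sub_le_iff_le_add]
      exact_mod_cast (by omega : K ≤ (K - i0) + i0)
    have h6 : ((N : ℝ) - 1) * δ / x < K + 1 := Nat.lt_floor_add_one _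
    have h7 : ((N : ℝ) - 1) * δ / x = δ / x * N - δ / x := by ring
    linarith
  · intro u hu
    obtain ⟨x, ⟨hx1, hx0⟩, hx2⟩ : ∃ x, (δ / x < u ∧ 0 < x) ∧ x < χ :=
      ((((hcont'.mono_left nhdsWithin_le_nhds).eventually_lt_const hu).and
        ((lt_mem_nhds hχ).filter_mono nhdsWithin_le_nhds)).and
        (self_mem_nhdsWithin (s := Iio χ))).exists
    obtain ⟨i0, hi0⟩ := eventually_atTop.mp
      ((hy.eventually_const_lt hx2).and (eventually_gt_atTop 0))
    have hlim : Tendsto (fun N : ℕ => δ / x + (1 + i0) / (N : ℝ)) atTop (𝓝 (δ / x)) := by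
      simpa using tendsto_const_nhds.add (hdiv (1 + i0))
    filter_upwards [hlim.eventually_lt_const hx1, eventually_gt_atTop 0] with N hN hN0
    refine lt_of_le_of_lt ?_ hN
    have hN0' : (0 : ℝ) < N := by exact_mod_cast hN0
    rw [div_le_iff₀ hN0', add_mul, div_mul_cancel₀ _ hN0'.ne']
    set K := i0 + ⌈(N : ℝ) * δ / x⌉₊ with hK
    have hzero : ∀ i, i ∉ Finset.range K → ramp δ (-y i + N * δ) - ramp δ (-y i) = 0 := by
      intro i hi
      rw [Finset.mem_range, not_lt] at hi
      obtain ⟨h1, h3⟩ := hi0 i (by omega)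
      have hi0' : (0 : ℝ) < i := by exact_mod_cast h3
      rw [lt_div_iff₀ hi0'] at h1
      have h4 : (N : ℝ) * δ / x ≤ i := Nat.ceil_le.mp (by omega)
      rw [div_le_iff₀ hx0] at h4
      have : 0 ≤ (N : ℝ) * δ := by positivity
      rw [ramp_of_nonpos hδ (by linarith), ramp_of_nonpos hδ (by linarith), sub_zero]
    have hle : ∑ i ∈ Finset.range (R N), (ramp δ (-y i + N * δ) - ramp δ (-y i)) ≤
        ∑ i ∈ Finset.range K, (1 : ℝ) := by
      calc _ ≤ ∑ i ∈ Finset.range (R N), (if i ∈ Finset.range K then (1 : ℝ) else 0) := by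
            refine Finset.sum_le_sum fun i _ => ?_
            split_ifs with h
            · linarith [ramp_le_one δ (-y i + N * δ), ramp_nonneg δ (-y i)]
            · exact (hzero i h).le
        _ = ∑ i ∈ Finset.range (R N) ∩ Finset.range K, (1 : ℝ) := by
            rw [Finset.sum_ite_mem]
        _ ≤ _ := Finset.sum_le_sum_of_subset_of_nonneg Finset.inter_subset_right
            fun _ _ _ => zero_le_one
    refine hle.trans ?_
    rw [Finset.sum_const, Finset.card_range, nsmul_eq_mul, mul_one, hK]
    push_cast
    have h6 : ((⌈(N : ℝ) * δ / x⌉₊ : ℕ) : ℝ) < N * δ / x + 1 := Nat.ceil_lt_add_one (by positivity)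
    have h7 : (N : ℝ) * δ / x = δ / x * N := by ring
    linarith

section Ident

variable {n : ℕ} {q : Fin n → ℝ} {c : Fin n → (ℕ → Fin n) → ℝ} {D E ρ C δ χ : ℝ}
  {P : Measure (ℕ → Fin n)} {g : (ℕ → Fin n) → ℝ}

theorem fwd_lb (hS : Sys q c D E ρ C) (m : ℕ) (ω : ℕ → Fin n) : m * D ≤ fwd c m ω := by
  induction m with
  | zero => simp [fwd_zero]
  | succ m ih =>
    rw [fwd_succ]
    push_cast
    linarith [hS.c_lb (shift^[m] ω 0) (shift (shift^[m] ω))]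

/-- The asymptotic value of the potential of a hat function is dictated by the law of large
numbers. -/
theorem pot_ident [IsProbabilityMeasure P] (hS : Sys q c D E ρ C) (hst : Stat q P)
    (hχ0 : 0 < χ) (hχ : ∀ᵐ ω ∂P, Tendsto (fun m : ℕ => fwd c m ω / m) atTop (𝓝 χ))
    (hδ : 0 < δ) (hg : Fam ρ C g) {T k ε : ℝ}
    (h : ∀ ω s, T ≤ s → |pot q c (hatF δ g) ω s - k| ≤ ε) : |δ / χ - k| ≤ ε := by
  have hC := hS.C_nn
  have hD := hS.D_pos
  have hgm : Measurable g := measurable_of_lip hS.ρ_pos.le hS.ρ_lt hg.lip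
  set R : ℕ → ℕ := fun N => ⌊((N : ℝ) * δ + C) / D⌋₊ + 1 with hRdef
  have hR : ∀ N : ℕ, (N : ℝ) * δ + C < R N * D := by
    intro N
    rw [← div_lt_iff₀ hD]
    simp only [hRdef]
    push_cast
    exact Nat.lt_floor_add_one _
  have hR' : ∀ N : ℕ, (R N : ℝ) ≤ (N * δ + C) / D + 1 := by
    intro N
    simp only [hRdef]
    push_cast
    gcongr
    exact Nat.floor_le (by positivity)
  set F : ℕ → (ℕ → Fin n) → ℝ → ℝ :=
    fun N ω s => ramp δ (s - g ω + N * δ) - ramp δ (s - g ω) with hFdef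
  have hF01 : ∀ N ω s, |F N ω s| ≤ 1 := by
    intro N ω s
    rw [abs_of_nonneg]
    · simp only [hFdef]
      linarith [ramp_le_one δ (s - g ω + N * δ), ramp_nonneg δ (s - g ω)]
    · exact sub_nonneg.mpr (ramp_mono hδ (le_add_of_nonneg_right (by positivity)))
  have hFm : ∀ N, Measurable fun x : (ℕ → Fin n) × ℝ × (ℕ → Fin n) => F N x.1 x.2.1 := by
    intro N
    have h1 : Measurable fun x : (ℕ → Fin n) × ℝ × (ℕ → Fin n) => x.2.1 - g x.1 :=
      measurable_snd.fst.sub (hgm.comp measurable_fst)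
    exact ((continuous_ramp δ).measurable.comp (h1.add_const _)).sub
      ((continuous_ramp δ).measurable.comp h1)
  -- the sum of the potentials over an arithmetic progression is the potential of a long plateau
  have hsum : ∀ (N : ℕ) (ω : ℕ → Fin n), ∑ j ∈ Finset.range N, pot q c (hatF δ g) ω (j * δ) =
      ∑ i ∈ Finset.range (R N), (TT q c ^ i) (F N) ω 0 := by
    intro N ω
    have h1 : ∀ j ∈ Finset.range N, pot q c (hatF δ g) ω (j * δ) =
        ∑ i ∈ Finset.range (R N), (TT q c ^ i) (fun ω s => hatF δ g ω (s + j * δ)) ω 0 := by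
      intro j hj
      rw [pot_eq_sum hS (hatF_supp' hδ hg) (N := R N)]
      · exact Finset.sum_congr rfl fun i _ => by rw [TT_pow_trans, zero_add]
      · have hj' : ((j : ℝ) + 1) ≤ N := by exact_mod_cast Finset.mem_range.mp hj
        have := hR N
        nlinarith
    rw [Finset.sum_congr rfl h1, Finset.sum_comm]
    refine Finset.sum_congr rfl fun i _ => ?_
    have h2 : F N = ∑ j ∈ Finset.range N, fun ω s => hatF δ g ω (s + j * δ) := by
      funext ω s
      rw [Finset.sum_apply, Finset.sum_apply]
      simp only [hFdef, hatF]
      rw [← hat_sum]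
      exact Finset.sum_congr rfl fun j _ => by congr 1; ring
    rw [h2, map_sum, Finset.sum_apply, Finset.sum_apply]
  set a : ℕ → (ℕ → Fin n) → ℝ := fun N ω =>
    (∑ i ∈ Finset.range (R N), F N ω (-fwd c i ω)) / (N : ℝ) with hadef
  have hterm : ∀ N i, Measurable fun ω => F N ω (-fwd c i ω) := by
    intro N i
    exact (hFm N).comp (measurable_id.prodMk ((measurable_fwd hS i).neg.prodMk measurable_id))
  have hTm : ∀ N i, Measurable fun ω => (TT q c ^ i) (F N) ω 0 := by
    intro N i
    exact (measurable_TT_pow hS (F := fun ω s _ => F N ω s) (hFm N) i).comp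
      (measurable_id.prodMk (measurable_const.prodMk measurable_id))
  have hintegral : ∀ N : ℕ, ∫ ω, (∑ j ∈ Finset.range N, pot q c (hatF δ g) ω (j * δ)) / (N : ℝ) ∂P =
      ∫ ω, a N ω ∂P := by
    intro N
    simp only [hadef, hsum]
    rw [integral_div, integral_div, integral_finsetSum, integral_finsetSum]
    · congr 1
      refine Finset.sum_congr rfl fun i _ => ?_
      exact (transfer hS hst i (F := fun ω s _ => F N ω s) (hFm N) fun ω s _ => hF01 N ω s).symm
    · intro i _
      exact integrable_bdd (hterm N i) fun ω => hF01 _ _ _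
    · intro i _
      exact integrable_bdd (hTm N i) (TT_pow_bdd hS (hF01 N) i · 0)
  have hlim1 : Tendsto (fun N => ∫ ω, a N ω ∂P) atTop (𝓝 (δ / χ)) := by
    have hc : ∫ _, δ / χ ∂P = δ / χ := by simp
    rw [← hc]
    refine tendsto_integral_of_dominated_convergence (fun _ => (δ + C) / D + 1) (fun N => ?_)
      (integrable_const _) (fun N => Eventually.of_forall fun ω => ?_) ?_
    · exact ((Finset.measurable_sum _ fun i _ => hterm N i).div_const _).aestronglyMeasurable
    · simp only [hadef, Real.norm_eq_abs]
      rw [abs_div, Nat.abs_cast]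
      rcases Nat.eq_zero_or_pos N with rfl | hN
      · simp only [Nat.cast_zero, div_zero]
        positivity
      · have hN1 : (1 : ℝ) ≤ N := by exact_mod_cast hN
        rw [div_le_iff₀ (by linarith)]
        calc _ ≤ ∑ i ∈ Finset.range (R N), |F N ω (-fwd c i ω)| := Finset.abs_sum_le_sum_abs _ _
          _ ≤ ∑ i ∈ Finset.range (R N), (1 : ℝ) := Finset.sum_le_sum fun i _ => hF01 _ _ _
          _ = R N := by simp
          _ ≤ (N * δ + C) / D + 1 := hR' N
          _ ≤ (N * δ + N * C) / D + N := by
            gcongr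
            nlinarith
          _ = _ := by ring
    · filter_upwards [hχ] with ω hω
      have hy : Tendsto (fun i : ℕ => (fwd c i ω + g ω) / i) atTop (𝓝 χ) := by
        have := hω.add (tendsto_const_div_atTop_nhds_zero_nat (g ω))
        rw [add_zero] at this
        simpa only [add_div] using this
      have := renewal_count hχ0 hδ hy (R := R) (fun N i hi => by
        have h1 := fwd_lb hS i ω
        have h2 := abs_le.mp (hg.bdd ω)
        have h3 := hR N
        have h4 : (i : ℝ) * D < R N * D := by linarith
        exact_mod_cast lt_of_mul_lt_mul_right h4 hD.le)
      refine this.congr fun N => ?_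
      simp only [hadef, hFdef]
      congr 1
      refine Finset.sum_congr rfl fun i _ => ?_
      rw [show -(fwd c i ω + g ω) = -fwd c i ω - g ω by ring]
  -- the averages are within `ε` of `k`, up to the finitely many terms before time `T`
  set J := ⌈T / δ⌉₊ with hJ
  set B := (C + δ - -(C + δ)) / D + 1 + |k| with hBdef
  have hB0 : 0 ≤ B := by
    have : (0 : ℝ) ≤ C + δ - -(C + δ) := by linarith
    positivity
  have hε0 : 0 ≤ ε := (abs_nonneg _).trans (h (fun _ => by
    rcases n with _ | n
    · exact absurd hS.q_sum (by simp)
    · exact 0) T le_rfl)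
  have hdev : ∀ (N : ℕ) (ω : ℕ → Fin n), 0 < N →
      |(∑ j ∈ Finset.range N, pot q c (hatF δ g) ω (j * δ)) / (N : ℝ) - k| ≤ ε + J * B / N := by
    intro N ω hN
    have hN' : (0 : ℝ) < N := by exact_mod_cast hN
    have e1 : (∑ j ∈ Finset.range N, pot q c (hatF δ g) ω (j * δ)) / (N : ℝ) - k =
        (∑ j ∈ Finset.range N, (pot q c (hatF δ g) ω (j * δ) - k)) / N := by
      rw [Finset.sum_sub_distrib, Finset.sum_const, Finset.card_range, nsmul_eq_mul, sub_div,
        mul_div_cancel_left₀ _ hN'.ne']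
    rw [e1, abs_div, Nat.abs_cast, div_le_iff₀ hN', add_mul, div_mul_cancel₀ _ hN'.ne']
    refine (Finset.abs_sum_le_sum_abs _ _).trans ?_
    calc _ ≤ ∑ j ∈ Finset.range N, (ε + if j ∈ Finset.range J then B else 0) := by
          refine Finset.sum_le_sum fun j _ => ?_
          split_ifs with hj
          · have := pot_hatF_bdd hS hδ hg ω (j * δ)
            refine (abs_sub _ _).trans ?_
            linarith
          · rw [Finset.mem_range, not_lt] at hj
            rw [add_zero]
            apply h
            rw [← div_le_iff₀ hδ]
            exact Nat.ceil_le.mp hj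
      _ = ε * N + ∑ j ∈ Finset.range N ∩ Finset.range J, B := by
          rw [Finset.sum_add_distrib, Finset.sum_ite_mem]
          simp [mul_comm]
      _ ≤ ε * N + ∑ j ∈ Finset.range J, B := by
          have := Finset.sum_le_sum_of_subset_of_nonneg (f := fun _ => B)
            (Finset.inter_subset_right (s₁ := Finset.range N) (s₂ := Finset.range J))
            fun _ _ _ => hB0
          linarith
      _ = _ := by simp
  have hlim2 : Tendsto (fun N : ℕ => ε + J * B / (N : ℝ)) atTop (𝓝 ε) := by
    simpa using tendsto_const_nhds.add (tendsto_const_div_atTop_nhds_zero_nat (J * B))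
  refine le_of_tendsto_of_tendsto ((hlim1.sub_const k).abs) hlim2 ?_
  filter_upwards [eventually_gt_atTop 0] with N hN
  rw [← hintegral N]
  have hAm : Measurable fun ω =>
      (∑ j ∈ Finset.range N, pot q c (hatF δ g) ω (j * δ)) / (N : ℝ) := by
    simp only [hsum]
    exact (Finset.measurable_sum _ fun i _ => hTm N i).div_const _
  have hAi : Integrable (fun ω =>
      (∑ j ∈ Finset.range N, pot q c (hatF δ g) ω (j * δ)) / (N : ℝ)) P := by
    refine integrable_bdd (B := ε + J * B / N + |k|) hAm fun ω => ?_
    have := hdev N ω hN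
    have h2 := abs_sub_abs_le_abs_sub
      ((∑ j ∈ Finset.range N, pot q c (hatF δ g) ω (j * δ)) / (N : ℝ)) k
    linarith
  have e2 : k = ∫ _, k ∂P := by simp
  rw [e2, ← integral_sub hAi (integrable_const _)]
  refine (abs_integral_le_integral_abs).trans ?_
  calc _ ≤ ∫ _, (ε + J * B / N) ∂P := by
        refine integral_mono ((hAi.sub (integrable_const _)).abs) (integrable_const _) fun ω => ?_
        exact hdev N ω hN
    _ = _ := by simp

/-- Renewal theorem for hat functions, uniform in the recentring function. -/
theorem renewal_hat [IsProbabilityMeasure P] (hS : Sys q c D E ρ C) (hst : Stat q P)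
    (hχ0 : 0 < χ) (hχ : ∀ᵐ ω ∂P, Tendsto (fun m : ℕ => fwd c m ω / m) atTop (𝓝 χ))
    (hL : ∀ (B L : ℝ) (G : (ℕ → Fin n) → ℝ → ℝ), Harm q c ρ C B L G → ∃ k, ∀ ω s, G ω s = k)
    (hδ : 0 < δ) {ε : ℝ} (hε : 0 < ε) :
    ∃ T : ℝ, ∀ g, Fam ρ C g → ∀ ω s, T ≤ s → |pot q c (hatF δ g) ω s - δ / χ| ≤ ε := by
  obtain ⟨T, hT⟩ := pot_osc hS hδ hL (half_pos hε)
  refine ⟨T, fun g hg ω s hs => ?_⟩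
  obtain ⟨k, hk⟩ := hT g hg
  have h1 := pot_ident hS hst hχ0 hχ hδ hg hk
  have h2 := hk ω s hs
  have h3 := abs_sub_le (pot q c (hatF δ g) ω s) k (δ / χ)
  rw [abs_sub_comm] at h1
  linarith

end Ident

/-! ### The renewal theorem for intervals -/

section Intervals

variable {n : ℕ} {q : Fin n → ℝ} {c : Fin n → (ℕ → Fin n) → ℝ} {D E ρ C δ χ : ℝ}
  {P : Measure (ℕ → Fin n)} {g : (ℕ → Fin n) → ℝ}

theorem pot_mono (hS : Sys q c D E ρ C) {α α' : ℝ} {F G : (ℕ → Fin n) → ℝ → ℝ}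
    (hF : ∀ ω s, s < α → F ω s = 0) (hG : ∀ ω s, s < α' → G ω s = 0) (h : F ≤ G)
    (ω : ℕ → Fin n) (s : ℝ) : pot q c F ω s ≤ pot q c G ω s := by
  obtain ⟨N, hN⟩ := exists_cut hS (min α α') s
  rw [pot_eq_sum hS hF (N := N) (by linarith [min_le_left α α']),
    pot_eq_sum hS hG (N := N) (by linarith [min_le_right α α'])]
  exact Finset.sum_le_sum fun i _ => TT_pow_mono (fun a => (hS.q_pos a).le) i h ω s

/-- A trapezoidal function in the time variable, recentred by `g`: a sum of `N` consecutive
hats. -/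
def plateau {n : ℕ} (δ : ℝ) (g : (ℕ → Fin n) → ℝ) (N : ℕ) (b : ℝ) : (ℕ → Fin n) → ℝ → ℝ :=
  fun ω s => ramp δ (s - g ω - b + N * δ) - ramp δ (s - g ω - b)

theorem plateau_supp (hδ : 0 < δ) (hg : Fam ρ C g) (N : ℕ) (b : ℝ) (ω : ℕ → Fin n) (s : ℝ)
    (hs : s < -(C + δ) + b - N * δ) : plateau δ g N b ω s = 0 := by
  have h1 := abs_le.mp (hg.bdd ω)
  have h2 : 0 ≤ (N : ℝ) * δ := by positivity
  unfold plateau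
  rw [ramp_of_nonpos hδ (by linarith), ramp_of_nonpos hδ (by linarith), sub_zero]

theorem pot_plateau (hS : Sys q c D E ρ C) (hδ : 0 < δ) (hg : Fam ρ C g) (N : ℕ) (b : ℝ)
    (ω : ℕ → Fin n) (s : ℝ) : pot q c (plateau δ g N b) ω s =
      ∑ j ∈ Finset.range N, pot q c (hatF δ g) ω (s + (-b + j * δ)) := by
  obtain ⟨K, hK⟩ := exists_cut hS (-(C + δ) + b - N * δ) s
  rw [pot_eq_sum hS (plateau_supp hδ hg N b) hK]
  have h1 : ∀ j ∈ Finset.range N, pot q c (hatF δ g) ω (s + (-b + j * δ)) =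
      ∑ i ∈ Finset.range K, (TT q c ^ i) (fun ω s => hatF δ g ω (s + (-b + j * δ))) ω s := by
    intro j hj
    rw [pot_eq_sum hS (hatF_supp' hδ hg) (N := K)]
    · exact Finset.sum_congr rfl fun i _ => by rw [TT_pow_trans]
    · have hj' : ((j : ℝ) + 1) ≤ N := by exact_mod_cast Finset.mem_range.mp hj
      nlinarith
  rw [Finset.sum_congr rfl h1, Finset.sum_comm]
  refine Finset.sum_congr rfl fun i _ => ?_
  have h2 : plateau δ g N b = ∑ j ∈ Finset.range N, fun ω s => hatF δ g ω (s + (-b + j * δ)) := by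
    funext ω s
    rw [Finset.sum_apply, Finset.sum_apply]
    simp only [plateau, hatF]
    rw [← hat_sum]
    exact Finset.sum_congr rfl fun j _ => by congr 1; ring
  rw [h2, map_sum, Finset.sum_apply, Finset.sum_apply]

/-- The indicator of a time set `I`, recentred by `g`. -/
def indF {n : ℕ} (I : Set ℝ) (g : (ℕ → Fin n) → ℝ) : (ℕ → Fin n) → ℝ → ℝ :=
  fun ω s => I.indicator (fun _ => 1) (s - g ω)

/-- Renewal theorem for subintervals of `[0, W]`, uniform in the interval and in the recentring
function. -/
theorem renewal_interval [IsProbabilityMeasure P] (hS : Sys q c D E ρ C) (hst : Stat q P)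
    (hχ0 : 0 < χ) (hχ : ∀ᵐ ω ∂P, Tendsto (fun m : ℕ => fwd c m ω / m) atTop (𝓝 χ))
    (hL : ∀ (B L : ℝ) (G : (ℕ → Fin n) → ℝ → ℝ), Harm q c ρ C B L G → ∃ k, ∀ ω s, G ω s = k)
    {W : ℝ} (hW : 0 ≤ W) {ε : ℝ} (hε : 0 < ε) :
    ∃ T : ℝ, ∀ g, Fam ρ C g → ∀ I : Set ℝ, I.OrdConnected → I ⊆ Icc 0 W → ∀ ω s, T ≤ s →
      |pot q c (indF I g) ω s - (volume I).toReal / χ| ≤ ε := by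
  obtain ⟨δ, hδ, hδε⟩ : ∃ δ, 0 < δ ∧ 2 * (δ / χ) = ε / 2 :=
    ⟨ε * χ / 4, by positivity, by field_simp; norm_num⟩
  set ε1 := ε / 2 / (W / δ + 2) with hε1
  have hε1_pos : 0 < ε1 := by positivity
  obtain ⟨T0, hT0⟩ := renewal_hat hS hst hχ0 hχ hL hδ hε1_pos
  refine ⟨T0 + W, fun g hg I hI hIW ω s hs => ?_⟩
  have hsupp : ∀ ω s, s < -C → indF I g ω s = 0 := by
    intro ω s hs
    unfold indF
    rw [indicator_of_notMem]
    intro hmem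
    have h1 := abs_le.mp (hg.bdd ω)
    linarith [(hIW hmem).1]
  have hplat : ∀ (N : ℕ) (b : ℝ), b ≤ W →
      |pot q c (plateau δ g N b) ω s - N * (δ / χ)| ≤ N * ε1 := by
    intro N b hb
    rw [pot_plateau hS hδ hg]
    have e1 : ∑ j ∈ Finset.range N, pot q c (hatF δ g) ω (s + (-b + j * δ)) - N * (δ / χ) =
        ∑ j ∈ Finset.range N, (pot q c (hatF δ g) ω (s + (-b + j * δ)) - δ / χ) := by
      rw [Finset.sum_sub_distrib, Finset.sum_const, Finset.card_range, nsmul_eq_mul]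
    rw [e1]
    refine (Finset.abs_sum_le_sum_abs _ _).trans ?_
    calc _ ≤ ∑ j ∈ Finset.range N, ε1 := Finset.sum_le_sum fun j _ => by
            apply hT0 g hg
            have : 0 ≤ (j : ℝ) * δ := by positivity
            linarith
      _ = _ := by simp
  rcases I.eq_empty_or_nonempty with rfl | hne
  · have : indF (∅ : Set ℝ) g = 0 := by
      funext ω s
      simp [indF]
    rw [this]
    simp [pot, hε.le]
  have hbb : BddBelow I := ⟨0, fun x hx => (hIW hx).1⟩
  have hba : BddAbove I := ⟨W, fun x hx => (hIW hx).2⟩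
  set α := sInf I with hα
  set β := sSup I with hβ
  have hα0 : 0 ≤ α := le_csInf hne fun x hx => (hIW hx).1
  have hβW : β ≤ W := csSup_le hne fun x hx => (hIW hx).2
  have hαβ : α ≤ β := csInf_le_csSup hne hbb hba
  have hout : I ⊆ Icc α β := fun x hx => ⟨csInf_le hbb hx, le_csSup hba hx⟩
  have hin : Ioo α β ⊆ I := by
    intro x hx
    obtain ⟨y, hy, hyx⟩ := exists_lt_of_csInf_lt hne hx.1
    obtain ⟨z, hz, hxz⟩ := exists_lt_of_lt_csSup hne hx.2
    exact hI.out hy hz ⟨hyx.le, hxz.le⟩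
  have hvol : (volume I).toReal = β - α := by
    have h1 : volume I = ENNReal.ofReal (β - α) := by
      refine le_antisymm ?_ ?_
      · rw [← Real.volume_Icc]; exact measure_mono hout
      · rw [← Real.volume_Ioo]; exact measure_mono hin
    rw [h1, ENNReal.toReal_ofReal (by linarith)]
  rw [hvol]
  have hdiv0 : 0 ≤ (β - α) / δ := div_nonneg (by linarith) hδ.le
  have hlen : (β - α) / δ ≤ W / δ := by gcongr; linarith
  have hlen2 : (β - α) / χ = (β - α) / δ * (δ / χ) := by field_simp
  have hδχ : 0 < δ / χ := by positivity
  have hN1 : ∀ N : ℕ, (N : ℝ) ≤ (β - α) / δ + 2 → N * ε1 ≤ ε / 2 := by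
    intro N hN
    calc N * ε1 ≤ (W / δ + 2) * ε1 := by gcongr; linarith
      _ = ε / 2 := by rw [hε1]; field_simp
  rw [abs_le]
  constructor
  · set N := ⌊(β - α) / δ⌋₊ - 1 with hN
    have hle : plateau δ g N (β - δ) ≤ indF I g := by
      intro ω s
      unfold plateau indF
      by_cases hmem : s - g ω ∈ I
      · rw [indicator_of_mem hmem]
        linarith [ramp_le_one δ (s - g ω - (β - δ) + N * δ), ramp_nonneg δ (s - g ω - (β - δ))]
      · rw [indicator_of_notMem hmem]
        rcases Nat.eq_zero_or_pos N with h0 | h0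
        · rw [h0]; simp
        · have h1 : ((N : ℝ) + 1) ≤ (β - α) / δ := by
            have : N + 1 ≤ ⌊(β - α) / δ⌋₊ := by omega
            have h2 := (Nat.le_floor_iff hdiv0).mp this
            exact_mod_cast h2
          rw [le_div_iff₀ hδ] at h1
          rcases le_or_gt (s - g ω) α with h2 | h2
          · rw [ramp_of_nonpos hδ (by linarith)]
            linarith [ramp_nonneg δ (s - g ω - (β - δ))]
          · have h3 : β ≤ s - g ω := by
              by_contra hcon
              exact hmem (hin ⟨h2, not_le.mp hcon⟩)
            rw [ramp_of_ge hδ (y := s - g ω - (β - δ)) (by linarith)]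
            linarith [ramp_le_one δ (s - g ω - (β - δ) + N * δ)]
    have h1 := pot_mono hS (plateau_supp hδ hg N (β - δ)) hsupp hle ω s
    have h2 := (abs_le.mp (hplat N (β - δ) (by linarith))).1
    have h3 : (β - α) / δ < (N : ℝ) + 2 := by
      have h4 := Nat.lt_floor_add_one ((β - α) / δ)
      have h5 : ⌊(β - α) / δ⌋₊ + 1 ≤ N + 2 := by omega
      have h6 : ((⌊(β - α) / δ⌋₊ : ℕ) : ℝ) + 1 ≤ (N : ℝ) + 2 := by exact_mod_cast h5
      linarith
    have h4 : (N : ℝ) ≤ (β - α) / δ := by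
      refine le_trans ?_ (Nat.floor_le hdiv0)
      exact_mod_cast Nat.sub_le _ _
    have h5 := hN1 N (by linarith)
    rw [hlen2]
    nlinarith
  · set N := ⌈(β - α) / δ⌉₊ + 1 with hN
    have hN' : (N : ℝ) = ⌈(β - α) / δ⌉₊ + 1 := by rw [hN]; push_cast; rfl
    have hNd : (β - α) + δ ≤ N * δ := by
      have := Nat.le_ceil ((β - α) / δ)
      rw [div_le_iff₀ hδ] at this
      rw [hN']
      linarith
    have hle : indF I g ≤ plateau δ g N β := by
      intro ω s
      unfold plateau indF
      by_cases hmem : s - g ω ∈ I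
      · rw [indicator_of_mem hmem]
        have h1 := hout hmem
        rw [ramp_of_ge hδ (by linarith [h1.1]), ramp_of_nonpos hδ (by linarith [h1.2]), sub_zero]
      · rw [indicator_of_notMem hmem, sub_nonneg]
        apply ramp_mono hδ
        have : 0 ≤ (N : ℝ) * δ := by positivity
        linarith
    have h1 := pot_mono hS hsupp (plateau_supp hδ hg N β) hle ω s
    have h2 := (abs_le.mp (hplat N β hβW)).2
    have h3 : (N : ℝ) ≤ (β - α) / δ + 2 := by
      have := Nat.ceil_lt_add_one hdiv0
      rw [hN']
      linarith
    have h5 := hN1 N h3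
    rw [hlen2]
    nlinarith

end Intervals

/-! ### First passage over a level -/

/-- The first time the forward walk reaches the level `t`. -/
def tau {n : ℕ} (c : Fin n → (ℕ → Fin n) → ℝ) (t : ℝ) (ω : ℕ → Fin n) : ℕ :=
  sInf {m : ℕ | t ≤ fwd c m ω}

/-- The first increment of the forward walk. -/
def step {n : ℕ} (c : Fin n → (ℕ → Fin n) → ℝ) (ω : ℕ → Fin n) : ℝ := c (ω 0) (shift ω)

/-- The set of distances `u` below the level `t` from which a jump of size `x` overshoots `t` and
lands in `J`. -/
def gate (t x : ℝ) (J : Set ℝ) : Set ℝ := {u | 0 < u ∧ u ≤ x ∧ t + x - u ∈ J}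

section Passage

variable {n : ℕ} {q : Fin n → ℝ} {c : Fin n → (ℕ → Fin n) → ℝ} {D E ρ C χ t : ℝ}
  {P : Measure (ℕ → Fin n)} {J : Set ℝ}

theorem gate_ordConnected (hJ : J.OrdConnected) (t x : ℝ) : (gate t x J).OrdConnected := by
  refine ⟨fun u hu v hv w hw => ⟨hu.1.trans_le hw.1, hw.2.trans hv.2.1, ?_⟩⟩
  exact hJ.out hv.2.2 hu.2.2 ⟨by linarith [hw.2], by linarith [hw.1]⟩

theorem gate_subset {x : ℝ} (hx : x ≤ E) (t : ℝ) (J : Set ℝ) : gate t x J ⊆ Icc 0 E :=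
  fun _ hu => ⟨hu.1.le, hu.2.1.trans hx⟩

theorem volume_gate (t x : ℝ) (J : Set ℝ) :
    volume (gate t x J) = volume (Icc t (t + x) ∩ J) := by
  have h1 : gate t x J = (fun u => t + x - u) ⁻¹' (Ico t (t + x) ∩ J) := by
    ext u
    simp only [gate, mem_ofPred_eq, mem_preimage, mem_inter_iff, mem_Ico]
    constructor
    · rintro ⟨h1, h2, h3⟩
      exact ⟨⟨by linarith, by linarith⟩, h3⟩
    · rintro ⟨⟨h1, h2⟩, h3⟩
      exact ⟨by linarith, by linarith, h3⟩
  rw [h1, (Measure.measurePreserving_sub_left volume (t + x)).measure_preimage_emb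
    (Homeomorph.subLeft (t + x)).measurableEmbedding]
  apply measure_congr
  exact Ico_ae_eq_Icc.inter (ae_eq_refl J)

theorem fwd_strictMono (hS : Sys q c D E ρ C) (ω : ℕ → Fin n) :
    StrictMono fun m => fwd c m ω := by
  apply strictMono_nat_of_lt_succ
  intro m
  rw [fwd_succ]
  linarith [hS.D_pos, hS.c_lb (shift^[m] ω 0) (shift (shift^[m] ω))]

theorem fwd_step (m : ℕ) (ω : ℕ → Fin n) :
    fwd c (m + 1) ω = fwd c m ω + step c (shift^[m] ω) := fwd_succ m ω

/-- The passage step is the unique index at which the walk crosses the level. -/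
theorem tau_spec (hS : Sys q c D E ρ C) {m N : ℕ} {ω : ℕ → Fin n} (hm : fwd c m ω < t)
    (hN : t ≤ fwd c N ω) : ∃ l, tau c t ω = l + 1 ∧ m ≤ l ∧ l < N ∧ fwd c l ω < t ∧
      t ≤ fwd c (l + 1) ω := by
  have hmono := fwd_strictMono hS ω
  have hne : {m : ℕ | t ≤ fwd c m ω}.Nonempty := ⟨N, hN⟩
  have h1 : t ≤ fwd c (tau c t ω) ω := Nat.sInf_mem hne
  have h2 : m < tau c t ω := by
    by_contra hcon
    have : fwd c (tau c t ω) ω ≤ fwd c m ω := hmono.monotone (not_lt.mp hcon)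
    linarith
  have h3 : tau c t ω ≤ N := Nat.sInf_le hN
  obtain ⟨l, hl⟩ : ∃ l, tau c t ω = l + 1 := ⟨tau c t ω - 1, by omega⟩
  refine ⟨l, hl, by omega, by omega, ?_, hl ▸ h1⟩
  by_contra hcon
  have : tau c t ω ≤ l := Nat.sInf_le (not_lt.mp hcon)
  omega

theorem mem_gate_iff (l : ℕ) (ω : ℕ → Fin n) :
    -fwd c l ω + t ∈ gate t (step c (shift^[l] ω)) J ↔
      fwd c l ω < t ∧ t ≤ fwd c (l + 1) ω ∧ fwd c (l + 1) ω ∈ J := by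
  have e : t + step c (shift^[l] ω) - (-fwd c l ω + t) = fwd c (l + 1) ω := by
    rw [fwd_step]; ring
  simp only [gate, mem_ofPred_eq]
  rw [e, fwd_step]
  constructor
  · rintro ⟨h1, h2, h3⟩
    exact ⟨by linarith, by linarith, h3⟩
  · rintro ⟨h1, h2, h3⟩
    exact ⟨by linarith, by linarith, h3⟩

/-- The event that the walk starts along the cylinder `A`, sits in `B` when it is about to cross
the level `t`, and lands in `J`. -/
def passage {n : ℕ} (c : Fin n → (ℕ → Fin n) → ℝ) (t : ℝ) (A B : Set (ℕ → Fin n)) (J : Set ℝ) :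
    Set (ℕ → Fin n) :=
  {ω | ω ∈ A ∧ shift^[tau c t ω - 1] ω ∈ B ∧ fwd c (tau c t ω) ω ∈ J}

/-- The integrand whose sum along the walk is the indicator of the passage event. -/
def passF {n : ℕ} (c : Fin n → (ℕ → Fin n) → ℝ) (t : ℝ) (A B : Set (ℕ → Fin n)) (J : Set ℝ)
    (ω : ℕ → Fin n) (s : ℝ) (ω' : ℕ → Fin n) : ℝ :=
  A.indicator (fun _ => B.indicator (fun _ => 1) ω' *
    (gate t (step c ω') J).indicator (fun _ => 1) (s + t)) ω

theorem passage_indicator (hS : Sys q c D E ρ C) {A B : Set (ℕ → Fin n)} {m K : ℕ}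
    (hm : ∀ ω ∈ A, fwd c m ω < t) (hK : ∀ ω ∈ A, t ≤ fwd c (K + m) ω) (ω : ℕ → Fin n) :
    (passage c t A B J).indicator (fun _ => (1 : ℝ)) ω =
      ∑ j ∈ Finset.range K, passF c t A B J ω (-fwd c (j + m) ω) (shift^[j + m] ω) := by
  by_cases hω : ω ∈ A
  · obtain ⟨l, hl, hml, hlK, hl1, hl2⟩ := tau_spec hS (hm ω hω) (hK ω hω)
    have hmono := fwd_strictMono hS ω
    rw [Finset.sum_eq_single (l - m)]
    · unfold passF
      rw [Nat.sub_add_cancel hml, indicator_of_mem hω]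
      have e1 : ω ∈ passage c t A B J ↔ shift^[l] ω ∈ B ∧ fwd c (l + 1) ω ∈ J := by
        simp only [passage, mem_ofPred_eq, hl, Nat.add_sub_cancel]
        exact ⟨fun h => h.2, fun h => ⟨hω, h⟩⟩
      have e2 := mem_gate_iff (c := c) (t := t) (J := J) l ω
      by_cases hB : shift^[l] ω ∈ B
      · by_cases hJ : fwd c (l + 1) ω ∈ J
        · rw [indicator_of_mem (e1.mpr ⟨hB, hJ⟩), indicator_of_mem hB,
            indicator_of_mem (e2.mpr ⟨hl1, hl2, hJ⟩), mul_one]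
        · rw [indicator_of_notMem (fun h => hJ (e1.mp h).2),
            indicator_of_notMem (s := gate t (step c (shift^[l] ω)) J)
              (fun h => hJ (e2.mp h).2.2), mul_zero]
      · rw [indicator_of_notMem (fun h => hB (e1.mp h).1), indicator_of_notMem hB, zero_mul]
    · intro j _ hj
      unfold passF
      rw [indicator_of_mem hω, indicator_of_notMem (s := gate t (step c (shift^[j + m] ω)) J),
        mul_zero]
      intro h
      obtain ⟨h1, h2, -⟩ := (mem_gate_iff (c := c) (j + m) ω).mp h
      apply hj
      have h3 : j + m < l + 1 := hmono.lt_iff_lt.mp (lt_of_lt_of_le h1 hl2)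
      have h4 : l < j + m + 1 := hmono.lt_iff_lt.mp (lt_of_lt_of_le hl1 h2)
      omega
    · intro h
      rw [Finset.mem_range] at h
      omega
  · rw [indicator_of_notMem (fun h => hω h.1)]
    symm
    apply Finset.sum_eq_zero
    intro j _
    unfold passF
    rw [indicator_of_notMem hω]

theorem measurable_passF (hS : Sys q c D E ρ C) {A B : Set (ℕ → Fin n)} (hA : MeasurableSet A)
    (hB : MeasurableSet B) (hJ : MeasurableSet J) :
    Measurable fun x : (ℕ → Fin n) × ℝ × (ℕ → Fin n) => passF c t A B J x.1 x.2.1 x.2.2 := by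
  have hX : Measurable fun x : (ℕ → Fin n) × ℝ × (ℕ → Fin n) => step c x.2.2 :=
    hS.meas_step.comp measurable_snd.snd
  have hs : Measurable fun x : (ℕ → Fin n) × ℝ × (ℕ → Fin n) => x.2.1 + t :=
    measurable_snd.fst.add_const t
  have hset : MeasurableSet {x : (ℕ → Fin n) × ℝ × (ℕ → Fin n) |
      x.2.1 + t ∈ gate t (step c x.2.2) J} :=
    (measurableSet_lt measurable_const hs).inter ((measurableSet_le hs hX).inter
      (((measurable_const.add hX).sub hs) hJ))
  have e : (fun x : (ℕ → Fin n) × ℝ × (ℕ → Fin n) => passF c t A B J x.1 x.2.1 x.2.2) =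
      fun x => (Prod.fst ⁻¹' A).indicator (fun x : (ℕ → Fin n) × ℝ × (ℕ → Fin n) =>
        ((fun x => x.2.2) ⁻¹' B).indicator (fun _ => (1 : ℝ)) x *
          {x : (ℕ → Fin n) × ℝ × (ℕ → Fin n) |
            x.2.1 + t ∈ gate t (step c x.2.2) J}.indicator (fun _ => (1 : ℝ)) x) x := by
    funext x
    unfold passF
    simp only [indicator, mem_preimage, mem_ofPred_eq]
    rfl
  rw [e]
  exact ((measurable_const.indicator (measurable_snd.snd hB)).mul
    (measurable_const.indicator hset)).indicator (measurable_fst hA)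

theorem passF_bdd {A B : Set (ℕ → Fin n)} (ω : ℕ → Fin n) (s : ℝ) (ω' : ℕ → Fin n) :
    |passF c t A B J ω s ω'| ≤ 1 := by
  unfold passF
  simp only [indicator]
  split_ifs <;> simp

theorem measurableSet_passage (hS : Sys q c D E ρ C) {A B : Set (ℕ → Fin n)} {m K : ℕ}
    (hA : MeasurableSet A) (hB : MeasurableSet B) (hJ : MeasurableSet J)
    (hm : ∀ ω ∈ A, fwd c m ω < t) (hK : ∀ ω ∈ A, t ≤ fwd c (K + m) ω) :
    MeasurableSet (passage c t A B J) := by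
  have h1 : Measurable ((passage c t A B J).indicator fun _ => (1 : ℝ)) := by
    have : ((passage c t A B J).indicator fun _ => (1 : ℝ)) = fun ω => ∑ j ∈ Finset.range K,
        passF c t A B J ω (-fwd c (j + m) ω) (shift^[j + m] ω) :=
      funext (passage_indicator hS hm hK)
    rw [this]
    refine Finset.measurable_sum _ fun j _ => ?_
    exact (measurable_passF hS hA hB hJ).comp (measurable_id.prodMk
      ((measurable_fwd hS _).neg.prodMk (measurable_shift.iterate _)))
  exact (measurable_indicator_const_iff (1 : ℝ)).mp h1

/-- The probability of a passage event as an integral of potentials: the letters of the walk after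
the prescribed initial word are read backwards from the crossing point. -/
theorem passage_measure [IsProbabilityMeasure P] (hS : Sys q c D E ρ C) (hst : Stat q P)
    {B : Set (ℕ → Fin n)} (hB : MeasurableSet B) (hJ : MeasurableSet J) {m : ℕ}
    {ξ x : ℕ → Fin n} {A : Set (ℕ → Fin n)} (hA : A = {ω : ℕ → Fin n | ∀ i < m, ω i = ξ i})
    (hAm : MeasurableSet A) (ht : C < t - wsum c (pre m ξ) x) :
    Measurable (fun ω => pot q c (indF (gate t (step c ω) J)
        (fun ω => wsum c (pre m ξ) ω - wsum c (pre m ξ) x)) ω (t - wsum c (pre m ξ) x)) ∧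
    (P (passage c t A B J)).toReal = (∏ i ∈ Finset.range m, q (ξ i)) *
      ∫ ω in B, pot q c (indF (gate t (step c ω) J)
        (fun ω => wsum c (pre m ξ) ω - wsum c (pre m ξ) x)) ω (t - wsum c (pre m ξ) x) ∂P := by
  set w0 := wsum c (pre m ξ) x with hw0
  set g : (ℕ → Fin n) → ℝ := fun ω => wsum c (pre m ξ) ω - w0 with hg
  set Q := ∏ i ∈ Finset.range m, q (ξ i) with hQ
  have hρ0 := hS.ρ_pos.le
  have hC := hS.C_nn
  have hD := hS.D_pos
  have hgb : ∀ ω, |g ω| ≤ C := by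
    intro ω
    refine (wsum_lip hS (pre m ξ) ω x).trans ?_
    exact mul_le_of_le_one_right hC (dMet_le_one hρ0 hS.ρ_lt.le _ _)
  obtain ⟨K, hKcut⟩ := exists_cut hS (-C) (max (t - w0) (t - C))
  have hK1 : t - w0 < -C + K * D := (le_max_left _ _).trans_lt hKcut
  have hK2 : t < K * D := by linarith [le_max_right (t - w0) (t - C)]
  have hm : ∀ ω ∈ A, fwd c m ω < t := by
    intro ω hω
    rw [hA] at hω
    unfold fwd
    rw [pre_congr m ξ ω hω]
    have := (abs_le.mp (hgb (shift^[m] ω))).2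
    simp only [hg] at this
    linarith
  have hK : ∀ ω ∈ A, t ≤ fwd c (K + m) ω := by
    intro ω _
    have h1 := fwd_lb hS (K + m) ω
    have h2 : 0 ≤ (m : ℝ) * D := by positivity
    push_cast at h1
    linarith
  have hsupp : ∀ ω' ω s, s < -C → indF (gate t (step c ω') J) g ω s = 0 := by
    intro ω' ω s hs
    unfold indF
    rw [indicator_of_notMem]
    intro hmem
    have h1 := abs_le.mp (hgb ω)
    linarith [hmem.1]
  have hTT : ∀ (j : ℕ) (ω' : ℕ → Fin n),
      (TT q c ^ (j + m)) (fun ω s => passF c t A B J ω s ω') ω' 0 =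
        Q * (B.indicator (fun _ => 1) ω' *
          (TT q c ^ j) (indF (gate t (step c ω') J) g) ω' (t - w0)) := by
    intro j ω'
    rw [pow_add, Module.End.mul_apply]
    have e1 : (TT q c ^ m) (fun ω s => passF c t A B J ω s ω') =
        (Q * B.indicator (fun _ => 1) ω') • (fun ω s =>
          indF (gate t (step c ω') J) g ω (s + (t - w0))) := by
      funext ω s
      unfold passF
      rw [hA, TT_pow_word m ξ (fun _ s => B.indicator (fun _ => 1) ω' *
        (gate t (step c ω') J).indicator (fun _ => 1) (s + t)) ω s]
      simp only [Pi.smul_apply, smul_eq_mul, indF, hg]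
      rw [mul_assoc, show s + (t - w0) - (wsum c (pre m ξ) ω - w0) =
        s - wsum c (pre m ξ) ω + t by ring]
    rw [e1, map_smul]
    simp only [Pi.smul_apply, smul_eq_mul]
    rw [TT_pow_trans, zero_add, mul_assoc]
  have hpot : ∀ ω', pot q c (indF (gate t (step c ω') J) g) ω' (t - w0) =
      ∑ j ∈ Finset.range K, (TT q c ^ j) (indF (gate t (step c ω') J) g) ω' (t - w0) :=
    fun ω' => pot_eq_sum hS (hsupp ω') hK1 ω'
  have hTm : ∀ (B' : Set (ℕ → Fin n)) (_ : MeasurableSet B') (j : ℕ), Measurable fun ω' =>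
      (TT q c ^ j) (fun ω s => passF c t A B' J ω s ω') ω' 0 := by
    intro B' hB' j
    exact (measurable_TT_pow hS (measurable_passF (t := t) hS hAm hB' hJ) j).comp
      (measurable_id.prodMk (measurable_const.prodMk measurable_id))
  have hQpos : 0 < Q := Finset.prod_pos fun i _ => hS.q_pos _
  constructor
  · have hgm : Measurable g := measurable_of_lip hρ0 hS.ρ_lt (L := C) (fun ω ω' => by
      simp only [hg]
      rw [sub_sub_sub_cancel_right]
      exact wsum_lip hS _ _ _)
    simp only [hpot]
    refine Finset.measurable_sum _ fun j _ => ?_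
    have hF : Measurable fun x : (ℕ → Fin n) × ℝ × (ℕ → Fin n) =>
        indF (gate t (step c x.2.2) J) g x.1 x.2.1 := by
      have h1 := (measurable_passF (t := t) hS MeasurableSet.univ MeasurableSet.univ hJ)
      have h2 : Measurable fun x : (ℕ → Fin n) × ℝ × (ℕ → Fin n) =>
          (x.1, x.2.1 - g x.1 - t, x.2.2) :=
        measurable_fst.prodMk
          (((measurable_snd.fst.sub (hgm.comp measurable_fst)).sub_const t).prodMk
            measurable_snd.snd)
      have h3 := h1.comp h2
      have e : ((fun x : (ℕ → Fin n) × ℝ × (ℕ → Fin n) =>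
          passF c t univ univ J x.1 x.2.1 x.2.2) ∘
          fun x : (ℕ → Fin n) × ℝ × (ℕ → Fin n) => (x.1, x.2.1 - g x.1 - t, x.2.2)) =
          fun x => indF (gate t (step c x.2.2) J) g x.1 x.2.1 := by
        funext x
        simp [passF, indF]
      rwa [e] at h3
    exact (measurable_TT_pow hS (F := fun ω s ω' => indF (gate t (step c ω') J) g ω s) hF j).comp
      (measurable_id.prodMk (measurable_const.prodMk measurable_id))
  · have hPm := measurableSet_passage hS hAm hB hJ hm hK
    have e0 : (P (passage c t A B J)).toReal =
        ∫ ω, (passage c t A B J).indicator (fun _ => (1 : ℝ)) ω ∂P := by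
      rw [integral_indicator_const _ hPm, smul_eq_mul, mul_one]
      rfl
    rw [e0]
    simp only [passage_indicator hS hm hK]
    rw [integral_finsetSum]
    · have e1 : ∀ j ∈ Finset.range K,
          ∫ ω, passF c t A B J ω (-fwd c (j + m) ω) (shift^[j + m] ω) ∂P =
          ∫ ω, (TT q c ^ (j + m)) (fun η s => passF c t A B J η s ω) ω 0 ∂P := fun j _ =>
        transfer hS hst (j + m) (measurable_passF hS hAm hB hJ) passF_bdd
      rw [Finset.sum_congr rfl e1, ← integral_finsetSum]
      · rw [← integral_indicator hB, ← integral_const_mul]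
        refine integral_congr_ae (Eventually.of_forall fun ω' => ?_)
        simp only [hTT]
        rw [← Finset.mul_sum, ← Finset.mul_sum, ← hpot]
        by_cases h : ω' ∈ B <;> simp [h]
      · intro j _
        exact integrable_bdd (hTm B hB (j + m)) (TT_pow_bdd hS (fun η s => passF_bdd η s _) _ · 0)
    · intro j _
      exact integrable_bdd ((measurable_passF hS hAm hB hJ).comp (measurable_id.prodMk
        ((measurable_fwd hS _).neg.prodMk (measurable_shift.iterate _)))) fun ω => passF_bdd _ _ _

/-- Limit law of the overshoot, conditionally on an initial word whose end is still at distance at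
least `T` below the level `t`, and on the set `B` containing the tail just before the crossing. -/
theorem overshoot [IsProbabilityMeasure P] (hS : Sys q c D E ρ C) (hst : Stat q P)
    (hχ0 : 0 < χ) (hχ : ∀ᵐ ω ∂P, Tendsto (fun m : ℕ => fwd c m ω / m) atTop (𝓝 χ))
    (hL : ∀ (B L : ℝ) (G : (ℕ → Fin n) → ℝ → ℝ), Harm q c ρ C B L G → ∃ k, ∀ ω s, G ω s = k)
    (hDE : D ≤ E) {ε : ℝ} (hε : 0 < ε) :
    ∃ T : ℝ, ∀ (t : ℝ) (m : ℕ) (ξ x : ℕ → Fin n) (A B : Set (ℕ → Fin n)),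
      A = {ω : ℕ → Fin n | ∀ i < m, ω i = ξ i} → T ≤ t - wsum c (pre m ξ) x →
      MeasurableSet A → MeasurableSet B → 0 < P B →
      0 < P {ω | ω ∈ A ∧ shift^[tau c t ω - 1] ω ∈ B} ∧
      ∀ J : Set ℝ, J ⊆ Icc t (t + E) → J.OrdConnected →
        |(P ({ω | ω ∈ A ∧ shift^[tau c t ω - 1] ω ∈ B} ∩ {ω | fwd c (tau c t ω) ω ∈ J})).toReal /
            (P {ω | ω ∈ A ∧ shift^[tau c t ω - 1] ω ∈ B}).toReal -
          (∫ ω in B, (volume (Icc t (t + step c ω) ∩ J)).toReal ∂P) / (∫ ω in B, step c ω ∂P)|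
          ≤ ε := by
  have hD := hS.D_pos
  have hC := hS.C_nn
  have hE : 0 < E := hD.trans_le hDE
  set ε' := min (D / (2 * χ)) (ε * D / (4 * χ)) with hε'
  have hε_pos' : 0 < ε' := by positivity
  obtain ⟨T0, hT0⟩ := renewal_interval hS hst hχ0 hχ hL hE.le hε_pos'
  refine ⟨max T0 (C + 1), fun t m ξ x A B hA ht hAm hB hPB => ?_⟩
  have ht0 : T0 ≤ t - wsum c (pre m ξ) x := (le_max_left _ _).trans ht
  have htC : C < t - wsum c (pre m ξ) x := by linarith [(le_max_right T0 (C + 1)).trans ht]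
  have hst1 : ∀ ω, D ≤ step c ω := fun ω => hS.c_lb _ _
  have hst2 : ∀ ω, step c ω ≤ E := fun ω => hS.c_ub _ _
  have hstm : Measurable (step c) := hS.meas_step
  set g : (ℕ → Fin n) → ℝ := fun ω => wsum c (pre m ξ) ω - wsum c (pre m ξ) x with hg
  have hFam : Fam ρ C g := by
    constructor
    · intro ω
      refine (wsum_lip hS (pre m ξ) ω x).trans ?_
      exact mul_le_of_le_one_right hC (dMet_le_one hS.ρ_pos.le hS.ρ_lt.le _ _)
    · intro ω ω'
      simp only [hg]
      rw [sub_sub_sub_cancel_right]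
      exact wsum_lip hS _ _ _
  set Q := ∏ i ∈ Finset.range m, q (ξ i) with hQ
  have hQpos : 0 < Q := Finset.prod_pos fun i _ => hS.q_pos _
  set b := (P B).toReal with hb
  have hbpos : 0 < b := ENNReal.toReal_pos hPB.ne' (measure_ne_top _ _)
  set V : Set ℝ → (ℕ → Fin n) → ℝ := fun J ω =>
    pot q c (indF (gate t (step c ω) J) g) ω (t - wsum c (pre m ξ) x) with hV
  set v : Set ℝ → (ℕ → Fin n) → ℝ := fun J ω =>
    (volume (Icc t (t + step c ω) ∩ J)).toReal with hv
  have hVv : ∀ J : Set ℝ, J.OrdConnected → ∀ ω, |V J ω - v J ω / χ| ≤ ε' := by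
    intro J hJ ω
    simp only [hV, hv]
    rw [← volume_gate]
    exact hT0 g hFam _ (gate_ordConnected hJ _ _) (gate_subset (hst2 ω) _ _) ω _ ht0
  have hv0 : ∀ J ω, 0 ≤ v J ω := fun J ω => ENNReal.toReal_nonneg
  have hv1 : ∀ J ω, v J ω ≤ step c ω := by
    intro J ω
    have h1 : volume (Icc t (t + step c ω) ∩ J) ≤ ENNReal.ofReal (step c ω) := by
      refine (measure_mono inter_subset_left).trans ?_
      rw [Real.volume_Icc, add_sub_cancel_left]
    exact ENNReal.toReal_le_of_le_ofReal (hD.le.trans (hst1 ω)) h1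
  have hvm : ∀ J, Measurable (v J) := by
    intro J
    have hmono : Monotone fun x : ℝ => (volume (Icc t (t + x) ∩ J)).toReal := by
      intro x y hxy
      refine ENNReal.toReal_mono ?_ (measure_mono (inter_subset_inter_left _
        (Icc_subset_Icc_right (by linarith))))
      exact ne_top_of_le_ne_top (by simp [Real.volume_Icc]) (measure_mono inter_subset_left)
    exact hmono.measurable.comp hstm
  have hvi : ∀ J, Integrable (v J) (P.restrict B) := fun J =>
    integrable_bdd (B := E) (hvm J) fun ω => by
      rw [abs_of_nonneg (hv0 J ω)]
      exact (hv1 J ω).trans (hst2 ω)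
  have hVm : ∀ J : Set ℝ, J.OrdConnected → Measurable (V J) := fun J hJ =>
    (passage_measure (P := P) hS hst hB hJ.measurableSet hA hAm htC).1
  have hVi : ∀ J : Set ℝ, J.OrdConnected → Integrable (V J) (P.restrict B) := fun J hJ =>
    integrable_bdd (B := ε' + E / χ) (hVm J hJ) fun ω => by
      have h1 := hVv J hJ ω
      have h2 : |v J ω / χ| ≤ E / χ := by
        rw [abs_of_nonneg (div_nonneg (hv0 J ω) hχ0.le)]
        gcongr
        exact (hv1 J ω).trans (hst2 ω)
      have h3 := abs_sub_abs_le_abs_sub (V J ω) (v J ω / χ)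
      linarith
  have hpm : ∀ J : Set ℝ, J.OrdConnected →
      (P (passage c t A B J)).toReal = Q * ∫ ω in B, V J ω ∂P := fun J hJ =>
    (passage_measure hS hst hB hJ.measurableSet hA hAm htC).2
  have hdiff : ∀ J : Set ℝ, J.OrdConnected →
      |∫ ω in B, V J ω ∂P - (∫ ω in B, v J ω ∂P) / χ| ≤ ε' * b := by
    intro J hJ
    rw [← integral_div, ← integral_sub (hVi J hJ) ((hvi J).div_const _)]
    refine abs_integral_le_integral_abs.trans ?_
    calc _ ≤ ∫ _ in B, ε' ∂P := integral_mono
            ((hVi J hJ).sub ((hvi J).div_const _)).abs (integrable_const _) fun ω => hVv J hJ ω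
      _ = ε' * b := by
          rw [setIntegral_const, smul_eq_mul, mul_comm]
          rfl
  have hcell : {ω | ω ∈ A ∧ shift^[tau c t ω - 1] ω ∈ B} = passage c t A B univ := by
    ext ω
    simp [passage]
  have hcellJ : ∀ J : Set ℝ,
      {ω | ω ∈ A ∧ shift^[tau c t ω - 1] ω ∈ B} ∩ {ω | fwd c (tau c t ω) ω ∈ J} =
        passage c t A B J := by
    intro J
    ext ω
    constructor
    · rintro ⟨⟨h1, h2⟩, h3⟩
      exact ⟨h1, h2, h3⟩
    · rintro ⟨h1, h2, h3⟩
      exact ⟨⟨h1, h2⟩, h3⟩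
  have hv_univ : ∀ ω, v univ ω = step c ω := by
    intro ω
    simp only [hv, inter_univ, Real.volume_Icc, add_sub_cancel_left]
    exact ENNReal.toReal_ofReal (hD.le.trans (hst1 ω))
  set I0 := ∫ ω in B, step c ω ∂P with hI0
  have hI0v : ∫ ω in B, v univ ω ∂P = I0 := by simp only [hv_univ, hI0]
  have hsi : Integrable (step c) (P.restrict B) := by
    have := hvi univ
    rwa [show v univ = step c from funext hv_univ] at this
  have hI0lb : D * b ≤ I0 := by
    calc D * b = ∫ _ in B, D ∂P := by
          rw [setIntegral_const, smul_eq_mul, mul_comm]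
          rfl
      _ ≤ I0 := integral_mono (integrable_const _) hsi hst1
  set N0 := ∫ ω in B, V univ ω ∂P with hN0
  have hd0 := hdiff univ ordConnected_univ
  rw [hI0v] at hd0
  have hN0lb : D / (2 * χ) * b ≤ N0 := by
    have h1 := (abs_le.mp hd0).1
    have h2 : D * b / χ ≤ I0 / χ := by gcongr
    have h3 : ε' * b ≤ D / (2 * χ) * b := by
      gcongr
      exact min_le_left _ _
    have h4 : D * b / χ = D / (2 * χ) * b + D / (2 * χ) * b := by field_simp; ring
    linarith
  have hN0pos : 0 < N0 := lt_of_lt_of_le (by positivity) hN0lb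
  have hI0pos : 0 < I0 := lt_of_lt_of_le (by positivity) hI0lb
  have hp0 := hpm univ ordConnected_univ
  constructor
  · rw [hcell]
    have h1 : 0 < (P (passage c t A B univ)).toReal := by
      rw [hp0]
      positivity
    exact (ENNReal.toReal_pos_iff.mp h1).1
  · intro J _ hJ
    rw [hcellJ, hcell, hp0, hpm J hJ, mul_div_mul_left _ _ hQpos.ne']
    have hdJ := hdiff J hJ
    set NJ := ∫ ω in B, V J ω ∂P
    set IJ := ∫ ω in B, v J ω ∂P with hIJ
    have hIJ0 : 0 ≤ IJ := integral_nonneg (hv0 J)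
    have hIJ1 : IJ ≤ I0 := integral_mono (hvi J) hsi (hv1 J)
    rw [div_sub_div _ _ hN0pos.ne' hI0pos.ne', abs_div, abs_of_pos (mul_pos hN0pos hI0pos),
      div_le_iff₀ (mul_pos hN0pos hI0pos)]
    have e1 : NJ * I0 - N0 * IJ = (NJ - IJ / χ) * I0 - IJ * (N0 - I0 / χ) := by ring
    rw [e1]
    have h1 : |(NJ - IJ / χ) * I0 - IJ * (N0 - I0 / χ)| ≤ ε' * b * I0 + I0 * (ε' * b) := by
      refine (abs_sub _ _).trans ?_
      rw [abs_mul, abs_mul, abs_of_pos hI0pos, abs_of_nonneg hIJ0]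
      gcongr
    refine h1.trans ?_
    have h2 : 2 * ε' * b ≤ ε * N0 := by
      calc 2 * ε' * b ≤ 2 * (ε * D / (4 * χ)) * b := by
            gcongr
            exact min_le_right _ _
        _ = ε * (D / (2 * χ) * b) := by field_simp; ring
        _ ≤ ε * N0 := by gcongr
    nlinarith

end Passage

/-! ### Smooth contracting iterated function systems -/

/-- A finite uniformly contracting `C^{1+γ}` iterated function system on `[a, b]`: the derivatives
are `γ`-Hölder with constant `H`, bounded below in modulus by `c0` and above by `r`. -/
structure ContrIFS {ι : Type*} (f : ι → ℝ → ℝ) (a b γ H c0 r : ℝ) : Prop where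
  hab : a < b
  hγ : 0 < γ
  maps : ∀ i, MapsTo (f i) (Icc a b) (Icc a b)
  smooth : ∀ i, ContDiff ℝ 1 (f i)
  H_pos : 0 < H
  holder : ∀ i, ∀ x ∈ Icc a b, ∀ y ∈ Icc a b, |deriv (f i) x - deriv (f i) y| ≤ H * |x - y| ^ γ
  c0_pos : 0 < c0
  r_pos : 0 < r
  r_lt : r < 1
  lb : ∀ i, ∀ x ∈ Icc a b, c0 ≤ |deriv (f i) x|
  ub : ∀ i, ∀ x ∈ Icc a b, |deriv (f i) x| ≤ r

theorem abs_log_sub_le {c0 u v : ℝ} (h0 : 0 < c0) (hu : c0 ≤ u) (hv : c0 ≤ v) :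
    |Real.log u - Real.log v| ≤ |u - v| / c0 := by
  have key : ∀ u v : ℝ, c0 ≤ u → c0 ≤ v → Real.log u - Real.log v ≤ |u - v| / c0 := by
    intro u v hu hv
    have hu0 : 0 < u := h0.trans_le hu
    have hv0 : 0 < v := h0.trans_le hv
    rw [← Real.log_div hu0.ne' hv0.ne']
    calc Real.log (u / v) ≤ u / v - 1 := Real.log_le_sub_one_of_pos (by positivity)
      _ = (u - v) / v := by field_simp
      _ ≤ |u - v| / v := by gcongr; exact le_abs_self _
      _ ≤ |u - v| / c0 := by gcongr
  rw [abs_le]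
  constructor
  · have := key v u hv hu
    rw [abs_sub_comm] at this
    linarith
  · exact key u v hu hv

section IFS

variable {ι : Type*} {f : ι → ℝ → ℝ} {a b γ H c0 r : ℝ}

theorem wordComp_prepend (f : ι → ℝ → ℝ) (i : ι) (ω : ℕ → ι) (m : ℕ) (x : ℝ) :
    wordComp f (prepend i ω) (m + 1) x = f i (wordComp f ω m x) := by
  induction m generalizing x with
  | zero => rfl
  | succ m ih => exact ih (f (ω m) x)

theorem wordComp_congr (f : ι → ℝ → ℝ) {ω ω' : ℕ → ι} {m : ℕ} (h : ∀ i < m, ω i = ω' i) :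
    wordComp f ω m = wordComp f ω' m := by
  induction m with
  | zero => rfl
  | succ m ih =>
    simp only [wordComp]
    rw [ih fun i hi => h i (by omega), h m (by omega)]

namespace ContrIFS

theorem rγ_pos (hf : ContrIFS f a b γ H c0 r) : 0 < r ^ γ := Real.rpow_pos_of_pos hf.r_pos _

theorem rγ_lt (hf : ContrIFS f a b γ H c0 r) : r ^ γ < 1 :=
  Real.rpow_lt_one hf.r_pos.le hf.r_lt hf.hγ

theorem lip (hf : ContrIFS f a b γ H c0 r) (i : ι) {x y : ℝ} (hx : x ∈ Icc a b)
    (hy : y ∈ Icc a b) : |f i x - f i y| ≤ r * |x - y| :=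
  (convex_Icc a b).norm_image_sub_le_of_norm_deriv_le
    (fun z _ => ((hf.smooth i).differentiable (by simp)) z) (fun z hz => hf.ub i z hz) hy hx

theorem log_deriv (hf : ContrIFS f a b γ H c0 r) (i : ι) {x y : ℝ} (hx : x ∈ Icc a b)
    (hy : y ∈ Icc a b) :
    |Real.log (|deriv (f i) x|) - Real.log (|deriv (f i) y|)| ≤ H / c0 * |x - y| ^ γ := by
  refine (abs_log_sub_le hf.c0_pos (hf.lb i x hx) (hf.lb i y hy)).trans ?_
  have h0 := hf.c0_pos
  calc _ ≤ |deriv (f i) x - deriv (f i) y| / c0 :=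
        div_le_div_of_nonneg_right (abs_abs_sub_abs_le _ _) h0.le
    _ ≤ H * |x - y| ^ γ / c0 := by
        gcongr
        exact hf.holder i x hx y hy
    _ = _ := by ring

theorem differentiable_wordComp (hf : ContrIFS f a b γ H c0 r) (ω : ℕ → ι) (m : ℕ) :
    Differentiable ℝ (wordComp f ω m) := by
  induction m with
  | zero => exact differentiable_id
  | succ m ih => exact ih.comp ((hf.smooth (ω m)).differentiable (by simp))

theorem deriv_wordComp_succ (hf : ContrIFS f a b γ H c0 r) (ω : ℕ → ι) (m : ℕ) (x : ℝ) :
    deriv (wordComp f ω (m + 1)) x =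
      deriv (wordComp f ω m) (f (ω m) x) * deriv (f (ω m)) x :=
  deriv_comp x (hf.differentiable_wordComp ω m _) ((hf.smooth (ω m)).differentiable (by simp) x)

theorem deriv_wordComp_bounds (hf : ContrIFS f a b γ H c0 r) (ω : ℕ → ι) (m : ℕ) {x : ℝ}
    (hx : x ∈ Icc a b) :
    0 < |deriv (wordComp f ω m) x| ∧ |deriv (wordComp f ω m) x| ≤ r ^ m := by
  induction m generalizing x with
  | zero => simp [wordComp]
  | succ m ih =>
    have h := ih (hf.maps (ω m) hx)
    have h1 := hf.ub (ω m) x hx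
    have h0 := hf.c0_pos.trans_le (hf.lb (ω m) x hx)
    rw [hf.deriv_wordComp_succ, abs_mul, pow_succ]
    have hr := hf.r_pos
    exact ⟨mul_pos h.1 h0, mul_le_mul h.2 h1 h0.le (by positivity)⟩

theorem log_deriv_wordComp_succ (hf : ContrIFS f a b γ H c0 r) (ω : ℕ → ι) (m : ℕ) {x : ℝ}
    (hx : x ∈ Icc a b) :
    Real.log |deriv (wordComp f ω (m + 1)) x| =
      Real.log |deriv (wordComp f ω m) (f (ω m) x)| + Real.log |deriv (f (ω m)) x| := by
  rw [hf.deriv_wordComp_succ, abs_mul, Real.log_mul]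
  · exact (hf.deriv_wordComp_bounds ω m (hf.maps (ω m) hx)).1.ne'
  · exact (hf.c0_pos.trans_le (hf.lb (ω m) x hx)).ne'

/-- Bounded distortion: the logarithm of the derivative of a composition is Hölder with a constant
independent of the word. -/
theorem distortion (hf : ContrIFS f a b γ H c0 r) (ω : ℕ → ι) (m : ℕ) {x y : ℝ}
    (hx : x ∈ Icc a b) (hy : y ∈ Icc a b) :
    |Real.log (|deriv (wordComp f ω m) x|) - Real.log (|deriv (wordComp f ω m) y|)| ≤
      H / c0 / (1 - r ^ γ) * |x - y| ^ γ := by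
  have h1 : 0 < 1 - r ^ γ := sub_pos.mpr hf.rγ_lt
  have hH := hf.H_pos
  have h0 := hf.c0_pos
  induction m generalizing x y with
  | zero =>
    simp only [wordComp, deriv_id', sub_self, abs_zero]
    positivity
  | succ m ih =>
    rw [hf.log_deriv_wordComp_succ ω m hx, hf.log_deriv_wordComp_succ ω m hy]
    have e1 := ih (hf.maps (ω m) hx) (hf.maps (ω m) hy)
    have e2 := hf.log_deriv (ω m) hx hy
    have e3 : |f (ω m) x - f (ω m) y| ^ γ ≤ r ^ γ * |x - y| ^ γ := by
      rw [← Real.mul_rpow hf.r_pos.le (abs_nonneg _)]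
      exact Real.rpow_le_rpow (abs_nonneg _) (hf.lip (ω m) hx hy) hf.hγ.le
    rw [add_sub_add_comm]
    calc _ ≤ _ := abs_add_le _ _
      _ ≤ H / c0 / (1 - r ^ γ) * (r ^ γ * |x - y| ^ γ) + H / c0 * |x - y| ^ γ :=
          add_le_add (e1.trans (by gcongr)) e2
      _ = _ := by field_simp; ring

theorem Swt_congr {ω ω' : ℕ → ι} {m : ℕ} (h : ∀ i < m, ω i = ω' i) :
    Swt f a b m ω = Swt f a b m ω' := by
  unfold Swt
  rw [wordComp_congr f h]

theorem Swt_lb (hf : ContrIFS f a b γ H c0 r) (ω : ℕ → ι) (m : ℕ) :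
    m * -Real.log r ≤ Swt f a b m ω := by
  have ha : a ∈ Icc a b := left_mem_Icc.mpr hf.hab.le
  have hub : ∀ s ∈ {s : ℝ | ∃ x ∈ Icc a b, s = |deriv (wordComp f ω m) x|}, s ≤ r ^ m := by
    rintro s ⟨x, hx, rfl⟩
    exact (hf.deriv_wordComp_bounds ω m hx).2
  have hpos := (hf.deriv_wordComp_bounds ω m ha).1.trans_le
    (le_csSup ⟨_, hub⟩ ⟨a, ha, rfl⟩)
  have h := Real.log_le_log hpos (csSup_le ⟨_, a, ha, rfl⟩ hub)
  rw [Real.log_pow] at h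
  unfold Swt
  linarith

/-- Up to the distortion constant, the supremum in `Swt` is attained at every point. -/
theorem neg_log_deriv_le_Swt (hf : ContrIFS f a b γ H c0 r) (ω : ℕ → ι) (m : ℕ) {x : ℝ}
    (hx : x ∈ Icc a b) :
    -Real.log |deriv (wordComp f ω m) x| ≤
      Swt f a b m ω + H / c0 / (1 - r ^ γ) * (b - a) ^ γ := by
  have h1 : 0 < 1 - r ^ γ := sub_pos.mpr hf.rγ_lt
  have hH := hf.H_pos
  have h0 := hf.c0_pos
  have hxp := (hf.deriv_wordComp_bounds ω m hx).1
  set K := H / c0 / (1 - r ^ γ) * (b - a) ^ γ with hK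
  have hub : ∀ s ∈ {s : ℝ | ∃ x ∈ Icc a b, s = |deriv (wordComp f ω m) x|},
      s ≤ Real.exp (Real.log |deriv (wordComp f ω m) x| + K) := by
    rintro s ⟨y, hy, rfl⟩
    rw [← Real.log_le_iff_le_exp (hf.deriv_wordComp_bounds ω m hy).1]
    have h2 : |y - x| ^ γ ≤ (b - a) ^ γ :=
      Real.rpow_le_rpow (abs_nonneg _)
        (abs_le.mpr ⟨by linarith [hx.2, hy.1], by linarith [hx.1, hy.2]⟩) hf.hγ.le
    have h3 : H / c0 / (1 - r ^ γ) * |y - x| ^ γ ≤ K := by rw [hK]; gcongr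
    linarith [(abs_le.mp (hf.distortion ω m hy hx)).2]
  have hpos := hxp.trans_le (le_csSup ⟨_, hub⟩ ⟨x, hx, rfl⟩)
  have h := (Real.log_le_iff_le_exp hpos).mpr (csSup_le ⟨_, x, hx, rfl⟩ hub)
  unfold Swt
  linarith

theorem tauT_spec (hf : ContrIFS f a b γ H c0 r) (χ h : ℝ) (ω : ℕ → ι) :
    h * χ ≤ Swt f a b (tauT f a b χ h ω) ω := by
  apply Nat.sInf_mem (s := {m : ℕ | h * χ ≤ Swt f a b m ω})
  have hl : 0 < -Real.log r := neg_pos.mpr (Real.log_neg hf.r_pos hf.r_lt)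
  obtain ⟨m, hm⟩ := exists_nat_ge (h * χ / -Real.log r)
  exact ⟨m, ((div_le_iff₀ hl).mp hm).trans (hf.Swt_lb ω m)⟩

theorem tauT_congr (hf : ContrIFS f a b γ H c0 r) {χ h : ℝ} {ξ ω : ℕ → ι}
    (hω : ω ∈ cellA f a b χ h ξ) : tauT f a b χ h ω = tauT f a b χ h ξ := by
  apply le_antisymm
  · apply Nat.sInf_le
    rw [mem_ofPred_eq, Swt_congr hω]
    exact hf.tauT_spec χ h ξ
  · by_contra hcon
    push Not at hcon
    have h1 := hf.tauT_spec χ h ω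
    rw [Swt_congr fun i hi => hω i (hi.trans hcon)] at h1
    exact Nat.notMem_of_lt_sInf hcon h1

theorem cellA_congr (hf : ContrIFS f a b γ H c0 r) {χ h : ℝ} {ξ ω : ℕ → ι}
    (hω : ω ∈ cellA f a b χ h ξ) : cellA f a b χ h ω = cellA f a b χ h ξ := by
  have e := hf.tauT_congr hω
  unfold cellA
  rw [e]
  ext z
  simp only [mem_ofPred_eq]
  refine forall₂_congr fun i hi => ?_
  rw [hω i hi]

end ContrIFS

/-! ### The coding map and the derivative cocycle -/

variable {x₀ : ℝ} {xc : (ℕ → ι) → ℝ}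

theorem xc_mem (hf : ContrIFS f a b γ H c0 r) (hx₀ : x₀ ∈ Icc a b)
    (hxc : ∀ ω, Tendsto (fun m => wordComp f ω m x₀) atTop (𝓝 (xc ω))) (ω : ℕ → ι) :
    xc ω ∈ Icc a b := by
  have h : ∀ m, ∀ x ∈ Icc a b, wordComp f ω m x ∈ Icc a b := by
    intro m
    induction m with
    | zero => exact fun x hx => hx
    | succ m ih => exact fun x hx => ih _ (hf.maps (ω m) hx)
  exact isClosed_Icc.mem_of_tendsto (hxc ω) (Eventually.of_forall fun m => h m x₀ hx₀)

theorem xc_prepend (hf : ContrIFS f a b γ H c0 r)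
    (hxc : ∀ ω, Tendsto (fun m => wordComp f ω m x₀) atTop (𝓝 (xc ω))) (i : ι) (ω : ℕ → ι) :
    xc (prepend i ω) = f i (xc ω) := by
  have h1 := (tendsto_add_atTop_iff_nat 1).mpr (hxc (prepend i ω))
  have h2 := ((hf.smooth i).continuous.tendsto _).comp (hxc ω)
  refine tendsto_nhds_unique h1 (h2.congr fun m => ?_)
  exact (wordComp_prepend f i ω m x₀).symm

theorem xc_dist (hf : ContrIFS f a b γ H c0 r) (hx₀ : x₀ ∈ Icc a b)
    (hxc : ∀ ω, Tendsto (fun m => wordComp f ω m x₀) atTop (𝓝 (xc ω))) (m : ℕ) {ω ω' : ℕ → ι}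
    (h : ∀ i < m, ω i = ω' i) : |xc ω - xc ω'| ≤ r ^ m * (b - a) := by
  induction m generalizing ω ω' with
  | zero =>
    have h1 := xc_mem hf hx₀ hxc ω
    have h2 := xc_mem hf hx₀ hxc ω'
    rw [pow_zero, one_mul]
    exact abs_le.mpr ⟨by linarith [h1.1, h2.2], by linarith [h1.2, h2.1]⟩
  | succ m ih =>
    rw [← prepend_shift ω, ← prepend_shift ω', h 0 (by omega), xc_prepend hf hxc,
      xc_prepend hf hxc]
    refine (hf.lip _ (xc_mem hf hx₀ hxc _) (xc_mem hf hx₀ hxc _)).trans ?_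
    rw [pow_succ', mul_assoc]
    exact mul_le_mul_of_nonneg_left (ih fun i hi => h (i + 1) (by omega)) hf.r_pos.le

theorem xc_holder (hf : ContrIFS f a b γ H c0 r) (hx₀ : x₀ ∈ Icc a b)
    (hxc : ∀ ω, Tendsto (fun m => wordComp f ω m x₀) atTop (𝓝 (xc ω))) (ω ω' : ℕ → ι) :
    |xc ω - xc ω'| ^ γ ≤ (b - a) ^ γ * dMet (r ^ γ) ω ω' := by
  by_cases he : ω = ω'
  · subst he
    simp [dMet, Real.zero_rpow hf.hγ.ne']
  · have hr : dMet (r ^ γ) ω ω' = (r ^ γ) ^ sInf {m : ℕ | ω m ≠ ω' m} := by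
      simp [dMet, he]
    have hba : 0 ≤ b - a := sub_nonneg.mpr hf.hab.le
    have h := xc_dist hf hx₀ hxc (sInf {m : ℕ | ω m ≠ ω' m}) (ω := ω) (ω' := ω') fun i hi => by
      by_contra hne
      exact Nat.notMem_of_lt_sInf hi hne
    rw [hr, ← Real.rpow_natCast (r ^ γ), ← Real.rpow_mul hf.r_pos.le, mul_comm γ,
      Real.rpow_mul hf.r_pos.le, Real.rpow_natCast, mul_comm,
      ← Real.mul_rpow (pow_nonneg hf.r_pos.le _) hba]
    exact Real.rpow_le_rpow (abs_nonneg _) h hf.hγ.le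

end IFS

section Cocycle

variable {n : ℕ} {f : Fin n → ℝ → ℝ} {a b γ H c0 r x₀ : ℝ} {xc : (ℕ → Fin n) → ℝ}

/-- The distortion constant of the system, which is also the Lipschitz constant of the Birkhoff
sums of the derivative cocycle. -/
def distC (a b γ H c0 r : ℝ) : ℝ := H / c0 / (1 - r ^ γ) * (b - a) ^ γ

theorem sys_of_ifs (hf : ContrIFS f a b γ H c0 r) (hx₀ : x₀ ∈ Icc a b)
    (hxc : ∀ ω, Tendsto (fun m => wordComp f ω m x₀) atTop (𝓝 (xc ω)))
    {q : Fin n → ℝ} (hq : ∀ i, 0 < q i) (hq1 : ∑ i, q i = 1) :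
    Sys q (derivCocycle f xc) (-Real.log r) (-Real.log c0) (r ^ γ) (distC a b γ H c0 r) := by
  have h1 : 0 < 1 - r ^ γ := sub_pos.mpr hf.rγ_lt
  have hH := hf.H_pos
  have h0 := hf.c0_pos
  have hba : 0 ≤ b - a := sub_nonneg.mpr hf.hab.le
  have hm := xc_mem hf hx₀ hxc
  refine ⟨hq, hq1, neg_pos.mpr (Real.log_neg hf.r_pos hf.r_lt), ?_, ?_, hf.rγ_pos, hf.rγ_lt, ?_, ?_⟩
  · intro i ω
    exact neg_le_neg (Real.log_le_log (h0.trans_le (hf.lb i _ (hm ω))) (hf.ub i _ (hm ω)))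
  · intro i ω
    exact neg_le_neg (Real.log_le_log h0 (hf.lb i _ (hm ω)))
  · unfold distC
    positivity
  · intro i ω ω'
    unfold derivCocycle
    rw [neg_sub_neg, abs_sub_comm]
    refine (hf.log_deriv i (hm ω) (hm ω')).trans ?_
    calc _ ≤ H / c0 * ((b - a) ^ γ * dMet (r ^ γ) ω ω') := by
          gcongr
          exact xc_holder hf hx₀ hxc ω ω'
      _ = _ := by unfold distC; field_simp

theorem Sw_eq_fwd (hf : ContrIFS f a b γ H c0 r) (hx₀ : x₀ ∈ Icc a b)
    (hxc : ∀ ω, Tendsto (fun m => wordComp f ω m x₀) atTop (𝓝 (xc ω))) (m : ℕ)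
    (ω : ℕ → Fin n) : Sw f xc m ω = fwd (derivCocycle f xc) m ω := by
  induction m with
  | zero => simp [Sw, wordComp, fwd_zero]
  | succ m ih =>
    have hl : shift^[m] ω 0 = ω m := by
      have : ∀ (m : ℕ) (ω : ℕ → Fin n) (i : ℕ), shift^[m] ω i = ω (m + i) := by
        intro m
        induction m with
        | zero => intro ω i; simp
        | succ m ih' =>
          intro ω i
          rw [Function.iterate_succ_apply, ih']
          exact congrArg ω (by omega)
      exact this m ω 0
    have e : f (ω m) (xc (shift^[m + 1] ω)) = xc (shift^[m] ω) := by
      rw [← xc_prepend hf hxc, ← hl, Function.iterate_succ_apply', prepend_shift]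
    rw [fwd_succ, ← ih, hl]
    unfold Sw derivCocycle
    rw [hf.log_deriv_wordComp_succ ω m (xc_mem hf hx₀ hxc _), e, Function.iterate_succ_apply']
    ring

/-- Along a cell of `𝒜^h` the walk has climbed to at most `hχ` plus a constant. -/
theorem fwd_tauT_le (hf : ContrIFS f a b γ H c0 r) (hx₀ : x₀ ∈ Icc a b)
    (hxc : ∀ ω, Tendsto (fun m => wordComp f ω m x₀) atTop (𝓝 (xc ω)))
    {χ h : ℝ} (hχ : 0 < χ) (hh : 0 < h) (ξ : ℕ → Fin n) :
    fwd (derivCocycle f xc) (tauT f a b χ h ξ) ξ ≤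
      h * χ + distC a b γ H c0 r + |Real.log c0| := by
  have h1 : 0 < 1 - r ^ γ := sub_pos.mpr hf.rγ_lt
  have hH := hf.H_pos
  have h0 := hf.c0_pos
  have hba : 0 ≤ b - a := sub_nonneg.mpr hf.hab.le
  have hC : 0 ≤ distC a b γ H c0 r := by unfold distC; positivity
  have hl := abs_nonneg (Real.log c0)
  rcases Nat.eq_zero_or_pos (tauT f a b χ h ξ) with h2 | h2
  · rw [h2, fwd_zero]
    positivity
  · obtain ⟨m, hm⟩ := Nat.exists_eq_add_of_lt h2
    rw [zero_add] at hm
    have h3 : Swt f a b m ξ < h * χ := by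
      by_contra hcon
      have : tauT f a b χ h ξ ≤ m := Nat.sInf_le (not_lt.mp hcon)
      omega
    have h4 := hf.neg_log_deriv_le_Swt ξ m (xc_mem hf hx₀ hxc (shift^[m] ξ))
    have h5 := Sw_eq_fwd hf hx₀ hxc m ξ
    have h6 : derivCocycle f xc (shift^[m] ξ 0) (shift (shift^[m] ξ)) ≤ |Real.log c0| :=
      (neg_le_neg (Real.log_le_log h0 (hf.lb _ _ (xc_mem hf hx₀ hxc _)))).trans (neg_le_abs _)
    rw [hm, fwd_succ, ← h5]
    unfold Sw
    unfold distC
    linarith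

/-- A Lipschitz solution of the cohomological equation modulo `2π/θ` makes `θ` an element of
`Λ_c`. -/
theorem mem_LambdaC {ρ κ θ C : ℝ} (hρ0 : 0 ≤ ρ) (hρ1 : ρ ≤ 1) (hκ : κ ∈ Ioc (0 : ℝ) 1)
    (hC : 0 ≤ C) {ψ : (ℕ → Fin n) → ℝ} (hψ : ∀ y z, |ψ y - ψ z| ≤ C * dMet ρ y z)
    (he : ∀ i y, Complex.exp ((θ * ψ (prepend i y) : ℝ) * Complex.I) =
      Complex.exp (-((θ * derivCocycle f xc i y : ℝ) : ℂ) * Complex.I) *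
        Complex.exp ((θ * ψ y : ℝ) * Complex.I)) : θ ∈ LambdaC f xc ρ κ := by
  refine ⟨fun y => Complex.exp ((θ * ψ y : ℝ) * Complex.I), 1, ⟨|θ| * C, ?_⟩,
    fun y => Complex.norm_exp_ofReal_mul_I _, norm_one, ?_⟩
  · intro y z
    have h1 : ‖Complex.exp ((θ * ψ y : ℝ) * Complex.I) - Complex.exp ((θ * ψ z : ℝ) * Complex.I)‖
        ≤ |θ * ψ y - θ * ψ z| := by
      have e : Complex.exp ((θ * ψ y : ℝ) * Complex.I) - Complex.exp ((θ * ψ z : ℝ) * Complex.I) =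
          Complex.exp ((θ * ψ z : ℝ) * Complex.I) *
            (Complex.exp (Complex.I * ((θ * ψ y - θ * ψ z : ℝ) : ℂ)) - 1) := by
        rw [mul_sub, ← Complex.exp_add, mul_one]
        congr 2
        push_cast
        ring
      rw [e, norm_mul, Complex.norm_exp_ofReal_mul_I, one_mul]
      exact Real.norm_exp_I_mul_ofReal_sub_one_le
    refine h1.trans ?_
    rw [← mul_sub, abs_mul, mul_assoc]
    refine mul_le_mul_of_nonneg_left ((hψ y z).trans ?_) (abs_nonneg _)
    refine mul_le_mul_of_nonneg_left ?_ hC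
    have hd0 := dMet_nonneg hρ0 y z
    rcases hd0.eq_or_lt with h | h
    · rw [← h, Real.zero_rpow hκ.1.ne']
    · calc dMet ρ y z = dMet ρ y z ^ (1 : ℝ) := (Real.rpow_one _).symm
        _ ≤ _ := Real.rpow_le_rpow_of_exponent_ge h (dMet_le_one hρ0 hρ1 y z) hκ.2
  · intro i y
    rw [one_mul]
    exact he i y

end Cocycle

/-! ### Conclusion -/

theorem stmt9 {n : ℕ} (hn : 2 ≤ n) (f : Fin n → ℝ → ℝ) (a b : ℝ) (hab : a < b)
    (γ : ℝ) (hγ : 0 < γ)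
    (hmaps : ∀ i, MapsTo (f i) (Icc a b) (Icc a b))
    (hsmooth : ∀ i, ContDiff ℝ 1 (f i))
    (hHolder : ∃ C : ℝ, 0 < C ∧ ∀ i, ∀ x ∈ Icc a b, ∀ y ∈ Icc a b,
      |deriv (f i) x - deriv (f i) y| ≤ C * |x - y| ^ γ)
    (c0 c1 : ℝ) (hc0 : 0 < c0) (hc1 : c1 < 1)
    (hcontr : ∀ i, ∀ x ∈ Icc a b, c0 ≤ |deriv (f i) x| ∧ |deriv (f i) x| ≤ c1)
    (hfix : ∃ i j : Fin n, ∃ y ∈ Icc a b, ∃ z ∈ Icc a b, f i y = y ∧ f j z = z ∧ y ≠ z)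
    (x₀ : ℝ) (hx₀ : x₀ ∈ Icc a b)
    (xc : (ℕ → Fin n) → ℝ)
    (hxc : ∀ ω, Tendsto (fun m => wordComp f ω m x₀) atTop (nhds (xc ω)))
    (ρ : ℝ) (hρ : ρ = (sSup {s : ℝ | ∃ i, ∃ x ∈ Icc a b, s = |deriv (f i) x|}) ^ γ)
    (κ : ℝ) (hκ : κ ∈ Ioc (0 : ℝ) 1)
    (hΛ : LambdaC f xc ρ κ = {0})
    (p : Fin n → ℝ≥0∞) (hp : ∀ i, 0 < p i) (hp1 : ∑ i, p i = 1)
    (P : Measure (ℕ → Fin n)) (hPprob : IsProbabilityMeasure P)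
    (hBern : ∀ (s : Finset ℕ) (w : ℕ → Fin n),
      P {ω | ∀ i ∈ s, ω i = w i} = ∏ i ∈ s, p (w i))
    (χ : ℝ) (hχpos : 0 < χ)
    (hχ : ∀ᵐ ω ∂P, Tendsto (fun m : ℕ => Sw f xc m ω / m) atTop (nhds χ))
    (D D' : ℝ)
    (hD : D = sInf {s : ℝ | ∃ i, ∃ x ∈ Icc a b, s = -Real.log |deriv (f i) x|})
    (hD' : D' = sSup {s : ℝ | ∃ i, ∃ x ∈ Icc a b, s = -Real.log |deriv (f i) x|})
    :
    ∀ ε : ℝ, 0 < ε → ∃ M : ℝ, ∀ k h h' : ℝ, 0 < k → 0 < h → 0 < h' →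
      M ≤ h → M ≤ k - h → ∀ ξ₀ : ℕ → Fin n,
        ∃ A : Set (ℕ → Fin n), MeasurableSet A ∧ A ⊆ cellA f a b χ h ξ₀ ∧
          (1 - ε) * (P (cellA f a b χ h ξ₀)).toReal ≤ (P A).toReal ∧
          ∀ ξ ∈ A, 0 < P (cell2 f xc a b χ k h h' ξ) ∧
            ∀ J : Set ℝ, J ⊆ Icc (k * χ) (k * χ + D') → J.OrdConnected →
              |condP P (cell2 f xc a b χ k h h' ξ)
                  {ω | Sw f xc (tauS f xc χ k ω) ω ∈ J} -
                GammaVal P f xc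
                  (cellA f a b χ h' (shift^[tauS f xc χ k ξ - 1] ξ)) χ k J| ≤ ε := by
  obtain ⟨H, hH, hHol⟩ := hHolder
  have haI : a ∈ Icc a b := left_mem_Icc.mpr hab.le
  let i₀ : Fin n := ⟨0, by omega⟩
  set r := sSup {s : ℝ | ∃ i, ∃ x ∈ Icc a b, s = |deriv (f i) x|} with hr
  have hub : ∀ s ∈ {s : ℝ | ∃ i, ∃ x ∈ Icc a b, s = |deriv (f i) x|}, s ≤ c1 := by
    rintro s ⟨i, x, hx, rfl⟩
    exact (hcontr i x hx).2
  have hler : ∀ i, ∀ x ∈ Icc a b, |deriv (f i) x| ≤ r := fun i x hx =>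
    le_csSup ⟨c1, hub⟩ ⟨i, x, hx, rfl⟩
  have hrc : r ≤ c1 := csSup_le ⟨_, i₀, a, haI, rfl⟩ hub
  have hc0r : c0 ≤ r := (hcontr i₀ a haI).1.trans (hler i₀ a haI)
  have hf : ContrIFS f a b γ H c0 r := ⟨hab, hγ, hmaps, hsmooth, hH, hHol, hc0, hc0.trans_le hc0r,
    hrc.trans_lt hc1, fun i x hx => (hcontr i x hx).1, hler⟩
  have hpt : ∀ i, p i ≠ ∞ := fun i =>
    ne_top_of_le_ne_top ENNReal.one_ne_top (hp1 ▸ Finset.single_le_sum (by simp) (Finset.mem_univ i))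
  have hq : ∀ i, 0 < (p i).toReal := fun i => ENNReal.toReal_pos (hp i).ne' (hpt i)
  have hq1 : ∑ i, (p i).toReal = 1 := by
    rw [← ENNReal.toReal_sum fun i _ => hpt i, hp1, ENNReal.toReal_one]
  have hS := sys_of_ifs hf hx₀ hxc hq hq1
  have hSw := Sw_eq_fwd hf hx₀ hxc
  have hL : ∀ (B L : ℝ) (G : (ℕ → Fin n) → ℝ → ℝ),
      Harm (fun i => (p i).toReal) (derivCocycle f xc) (r ^ γ) (distC a b γ H c0 r) B L G →
        ∃ k, ∀ ω s, G ω s = k := by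
    intro B L G hG
    refine liouville hS i₀ ?_ hG
    intro θ ψ hψ he
    have h1 := mem_LambdaC hf.rγ_pos.le hf.rγ_lt.le hκ hS.C_nn hψ he
    rw [← hρ, hΛ] at h1
    exact h1
  intro ε hε
  obtain ⟨T, hT⟩ := overshoot hS (stat_of_bern hp1 hBern) hχpos
    (by simpa only [hSw] using hχ) hL
    (neg_le_neg (Real.log_le_log hc0 hc0r)) hε
  have hcyl : ∀ (h : ℝ) (ξ : ℕ → Fin n), cellA f a b χ h ξ =
      {ω | ∀ i ∈ Finset.range (tauT f a b χ h ξ), ω i = ξ i} := by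
    intro h ξ
    simp only [cellA, Finset.mem_range]
  have hcm : ∀ (h : ℝ) (ξ : ℕ → Fin n), MeasurableSet (cellA f a b χ h ξ) := by
    intro h ξ
    rw [hcyl]
    exact measurableSet_cyl _ _
  have hcp : ∀ (h : ℝ) (ξ : ℕ → Fin n), 0 < P (cellA f a b χ h ξ) := by
    intro h ξ
    rw [hcyl, hBern]
    exact pos_iff_ne_zero.mpr (Finset.prod_ne_zero_iff.mpr fun i _ => (hp _).ne')
  have hDE : D' ≤ -Real.log c0 := by
    rw [hD']
    refine csSup_le ⟨_, i₀, a, haI, rfl⟩ ?_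
    rintro s ⟨i, x, hx, rfl⟩
    exact neg_le_neg (Real.log_le_log hc0 (hcontr i x hx).1)
  have htau : ∀ k ω, tauS f xc χ k ω = tau (derivCocycle f xc) (k * χ) ω := by
    intro k ω
    simp only [tauS, tau, hSw]
  -- This choice of `M` leaves the walk a distance at least `T` from the level `kχ` when it leaves
  -- the prefix of a cell of `𝒜^h`.
  refine ⟨(T + distC a b γ H c0 r + |Real.log c0|) / χ, ?_⟩
  intro k h h' _ hh _ _ hkh ξ₀
  refine ⟨cellA f a b χ h ξ₀, hcm h ξ₀, Subset.rfl, ?_, ?_⟩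
  · have : 0 ≤ (P (cellA f a b χ h ξ₀)).toReal := ENNReal.toReal_nonneg
    nlinarith
  intro ξ hξ
  have hTt : T ≤ k * χ - wsum (derivCocycle f xc) (pre (tauT f a b χ h ξ) ξ)
      (shift^[tauT f a b χ h ξ] ξ) := by
    have h1 := fwd_tauT_le hf hx₀ hxc hχpos hh ξ
    unfold fwd at h1
    rw [div_le_iff₀ hχpos] at hkh
    linarith
  obtain ⟨hpos, hJ⟩ := hT (k * χ) (tauT f a b χ h ξ) ξ (shift^[tauT f a b χ h ξ] ξ)
    (cellA f a b χ h ξ) (cellA f a b χ h' (shift^[tauS f xc χ k ξ - 1] ξ)) rfl hTt (hcm _ _)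
    (hcm _ _) (hcp _ _)
  have hcell : cell2 f xc a b χ k h h' ξ = {ω | ω ∈ cellA f a b χ h ξ ∧
      shift^[tau (derivCocycle f xc) (k * χ) ω - 1] ω ∈
        cellA f a b χ h' (shift^[tauS f xc χ k ξ - 1] ξ)} := by
    ext ω
    simp only [cell2, mem_ofPred_eq, htau]
  refine ⟨hcell ▸ hpos, fun J hJs hJo => ?_⟩
  have h1 := hJ J (hJs.trans (Icc_subset_Icc_right (by linarith))) hJo
  have hset : {ω | Sw f xc (tauS f xc χ k ω) ω ∈ J} =
      {ω | fwd (derivCocycle f xc) (tau (derivCocycle f xc) (k * χ) ω) ω ∈ J} := by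
    ext ω
    simp only [mem_ofPred_eq, htau, hSw]
  unfold condP GammaVal
  rw [hset, hcell]
  exact h1
end
end

section
/- Let Φ be a finite family of differentiable self-maps of a compact interval I such that there are 0 < κ' ≤ κ < 1 with κ' ≤ |f'(x)| ≤ κ for all f ∈ Φ, x ∈ I, and such that each f' is γ-Hölder with constant C (γ ∈ (0,1), C > 0). Then for every β ∈ (0,γ) there exists ε ∈ (0,1) such that for every n ≥ 1, every map g that is a composition of n members of Φ, and all x, y ∈ I with |x−y| < ε: |g(x) − g(y) − g'(y)·(x−y)| ≤ |g'(y)|·|x−y|^{1+β}. -/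
/-!
The proof is the classical bounded distortion argument. For `g = compList f w` with `w` of length
`n`, the ratio `g' z / g' y` is a product of ratios of the derivatives of single maps at points
whose distance is at most `κ ^ k * |z - y|`, `k < n`. Each ratio differs from `1` by at most
`(C / κ') * (κ ^ γ) ^ k * |z - y| ^ γ`, and these errors sum to a convergent geometric series.
Hence `|g' z - g' y| ≤ (exp (A * |z - y| ^ γ) - 1) * |g' y|` with `A = C / (κ' * (1 - κ ^ γ))`
independent of `w` (`compList_distortion`). Since `β < γ`, for small `|z - y|` the factor is at most
`|z - y| ^ β`, and the mean value inequality applied to `s ↦ g s - g' y * s` gives the claim.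
-/

open Set

noncomputable section

/-- Composition of the maps of an IFS along a finite word:
`compList f [i₁, …, i_ℓ] = f i₁ ∘ ⋯ ∘ f i_ℓ`. -/
def compList {ι : Type*} (f : ι → ℝ → ℝ) : List ι → ℝ → ℝ
  | [] => id
  | i :: l => f i ∘ compList f l

theorem compList_differentiable {ι : Type*} (f : ι → ℝ → ℝ)
    (hdiff : ∀ i, Differentiable ℝ (f i)) (w : List ι) : Differentiable ℝ (compList f w) := by
  induction w with
  | nil => exact differentiable_id
  | cons i l ih => exact (hdiff i).comp ih

theorem compList_mapsTo {ι : Type*} (f : ι → ℝ → ℝ) (s : Set ℝ)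
    (hmaps : ∀ i, MapsTo (f i) s s) (w : List ι) : MapsTo (compList f w) s s := by
  induction w with
  | nil => exact mapsTo_id s
  | cons i l ih => exact (hmaps i).comp ih

theorem compList_contract {ι : Type*} (f : ι → ℝ → ℝ) (a b κ : ℝ) (hκ0 : 0 ≤ κ)
    (hmaps : ∀ i, MapsTo (f i) (Icc a b) (Icc a b))
    (hdiff : ∀ i, Differentiable ℝ (f i))
    (hbound : ∀ i, ∀ x ∈ Icc a b, |deriv (f i) x| ≤ κ) (w : List ι)
    (z : ℝ) (hz : z ∈ Icc a b) (y : ℝ) (hy : y ∈ Icc a b) :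
    |compList f w z - compList f w y| ≤ κ ^ w.length * |z - y| := by
  induction w with
  | nil => simp [compList]
  | cons i l ih =>
    have h := (convex_Icc a b).norm_image_sub_le_of_norm_deriv_le (f := f i) (C := κ)
      (fun x _ => (hdiff i) x) (fun x hx => hbound i x hx)
      (compList_mapsTo f _ hmaps l hy) (compList_mapsTo f _ hmaps l hz)
    simp only [Real.norm_eq_abs] at h
    calc |compList f (i :: l) z - compList f (i :: l) y|
        ≤ κ * |compList f l z - compList f l y| := h
      _ ≤ κ * (κ ^ l.length * |z - y|) := by gcongr
      _ = κ ^ (i :: l).length * |z - y| := by rw [List.length_cons]; ring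

/-- Bounded distortion. The factor `1 - (κ ^ γ) ^ n` is the normalised partial geometric sum of the
errors of the `n` maps; keeping it makes the induction close with a constant independent of `n`. -/
theorem compList_distortion {ι : Type*} (f : ι → ℝ → ℝ) (a b κ' κ γ C A : ℝ)
    (hκ'0 : 0 < κ') (hκ0 : 0 ≤ κ) (hC : 0 < C)
    (hA : C / κ' = A * (1 - κ ^ γ)) (hγ0 : 0 < γ)
    (hmaps : ∀ i, MapsTo (f i) (Icc a b) (Icc a b))
    (hdiff : ∀ i, Differentiable ℝ (f i))
    (hbound : ∀ i, ∀ x ∈ Icc a b, κ' ≤ |deriv (f i) x| ∧ |deriv (f i) x| ≤ κ)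
    (hHolder : ∀ i, ∀ x ∈ Icc a b, ∀ y ∈ Icc a b,
      |deriv (f i) x - deriv (f i) y| ≤ C * |x - y| ^ γ) (w : List ι)
    (z : ℝ) (hz : z ∈ Icc a b) (y : ℝ) (hy : y ∈ Icc a b) :
    |deriv (compList f w) z - deriv (compList f w) y| ≤
      (Real.exp (A * (1 - (κ ^ γ) ^ w.length) * |z - y| ^ γ) - 1) * |deriv (compList f w) y| := by
  induction w with
  | nil => simp [compList]
  | cons i l ih =>
    have hder : ∀ x, deriv (compList f (i :: l)) x =
        deriv (f i) (compList f l x) * deriv (compList f l) x := fun x =>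
      deriv_comp x (hdiff i _) (compList_differentiable f hdiff l x)
    rw [hder, hder, List.length_cons, pow_succ]
    have hzl := compList_mapsTo f _ hmaps l hz
    have hyl := compList_mapsTo f _ hmaps l hy
    have hcon := compList_contract f a b κ hκ0 hmaps hdiff (fun i x hx => (hbound i x hx).2) l
      z hz y hy
    have hH := hHolder i _ hzl _ hyl
    have hlow := (hbound i _ hyl).1
    have hpow : |compList f l z - compList f l y| ^ γ ≤ (κ ^ γ) ^ l.length * |z - y| ^ γ := by
      calc |compList f l z - compList f l y| ^ γ ≤ (κ ^ l.length * |z - y|) ^ γ := by gcongr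
        _ = (κ ^ γ) ^ l.length * |z - y| ^ γ := by
          rw [Real.mul_rpow (by positivity) (abs_nonneg _), Real.rpow_pow_comm hκ0]
    set P := deriv (f i) (compList f l z)
    set Q := deriv (f i) (compList f l y)
    set R := deriv (compList f l) z
    set S := deriv (compList f l) y
    set q := (κ ^ γ) ^ l.length
    set u := |z - y| ^ γ
    set E := Real.exp (A * (1 - q) * u) with hE
    have hq : 0 ≤ q * u := by positivity
    have hPQ : |P - Q| ≤ C / κ' * (q * u) * |Q| := by
      calc |P - Q| ≤ C * (q * u) := hH.trans (by gcongr)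
        _ = C / κ' * (q * u) * κ' := by field_simp
        _ ≤ C / κ' * (q * u) * |Q| := by gcongr
    have hexp : E * (1 + C / κ' * (q * u)) ≤ Real.exp (A * (1 - q * κ ^ γ) * u) := by
      have h1 : A * (1 - q * κ ^ γ) * u = A * (1 - q) * u + C / κ' * (q * u) := by
        rw [hA]; ring
      rw [h1, Real.exp_add]
      have := Real.add_one_le_exp (C / κ' * (q * u))
      gcongr
      linarith
    have hR : |R| ≤ E * |S| := by
      have := abs_sub_abs_le_abs_sub R S
      linarith
    have hcQ : 0 ≤ C / κ' * (q * u) * |Q| := by positivity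
    calc |P * R - Q * S| = |(P - Q) * R + Q * (R - S)| := by ring_nf
      _ ≤ |P - Q| * |R| + |Q| * |R - S| := by
        rw [← abs_mul, ← abs_mul]; exact abs_add_le _ _
      _ ≤ (C / κ' * (q * u) * |Q|) * (E * |S|) + |Q| * ((E - 1) * |S|) := by gcongr
      _ = (E * (1 + C / κ' * (q * u)) - 1) * |Q * S| := by rw [abs_mul]; ring
      _ ≤ _ := by gcongr

theorem stmt10 {ι : Type*} [Fintype ι] (f : ι → ℝ → ℝ) (a b : ℝ) (hab : a < b)
    (κ' κ : ℝ) (hκ'0 : 0 < κ') (hκ'κ : κ' ≤ κ) (hκ1 : κ < 1)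
    (γ C : ℝ) (hγ0 : 0 < γ) (hγ1 : γ < 1) (hC : 0 < C)
    (hmaps : ∀ i, MapsTo (f i) (Icc a b) (Icc a b))
    (hdiff : ∀ i, Differentiable ℝ (f i))
    (hbound : ∀ i, ∀ x ∈ Icc a b, κ' ≤ |deriv (f i) x| ∧ |deriv (f i) x| ≤ κ)
    (hHolder : ∀ i, ∀ x ∈ Icc a b, ∀ y ∈ Icc a b,
      |deriv (f i) x - deriv (f i) y| ≤ C * |x - y| ^ γ)
    (β : ℝ) (hβ0 : 0 < β) (hβγ : β < γ) :
    ∃ ε : ℝ, 0 < ε ∧ ε < 1 ∧ ∀ w : List ι, w ≠ [] →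
      ∀ x ∈ Icc a b, ∀ y ∈ Icc a b, |x - y| < ε →
        |compList f w x - compList f w y - deriv (compList f w) y * (x - y)|
          ≤ |deriv (compList f w) y| * |x - y| ^ (1 + β) := by
  have hκ0 : 0 < κ := hκ'0.trans_le hκ'κ
  have hq1 : κ ^ γ < 1 := Real.rpow_lt_one hκ0.le hκ1 hγ0
  have hq0 : 0 < κ ^ γ := Real.rpow_pos_of_pos hκ0 γ
  have h1q : 0 < 1 - κ ^ γ := by linarith
  obtain ⟨A, hA⟩ : ∃ A, A = C / κ' / (1 - κ ^ γ) := ⟨_, rfl⟩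
  have hA0 : 0 < A := by rw [hA]; positivity
  have hAeq : C / κ' = A * (1 - κ ^ γ) := by rw [hA]; field_simp
  have hδ : 0 < γ - β := by linarith
  -- The second term of the minimum is the solution of `2 * A * ε ^ (γ - β) = 1`.
  refine ⟨min (1 / 2) ((1 / (2 * A)) ^ (1 / (γ - β))), by positivity,
    (min_le_left _ _).trans_lt (by norm_num), ?_⟩
  intro w _ x hx y hy hxy
  have ht1 : |x - y| < 1 / 2 := hxy.trans_le (min_le_left _ _)
  have ht2 : |x - y| < (1 / (2 * A)) ^ (1 / (γ - β)) := hxy.trans_le (min_le_right _ _)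
  set t := |x - y| with ht
  have ht0 : 0 ≤ t := abs_nonneg _
  have htd : t ^ (γ - β) ≤ 1 / (2 * A) := by
    calc t ^ (γ - β) ≤ ((1 / (2 * A)) ^ (1 / (γ - β))) ^ (γ - β) := by gcongr
      _ = 1 / (2 * A) := by
        rw [← Real.rpow_mul (by positivity), one_div_mul_cancel hδ.ne', Real.rpow_one]
  have htγ : 2 * (A * t ^ γ) ≤ t ^ β := by
    have h1 : t ^ γ = t ^ β * t ^ (γ - β) := by
      rw [← Real.rpow_add_of_nonneg ht0 hβ0.le hδ.le]; ring_nf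
    calc 2 * (A * t ^ γ) = 2 * (A * (t ^ β * t ^ (γ - β))) := by rw [h1]
      _ ≤ 2 * (A * (t ^ β * (1 / (2 * A)))) := by gcongr
      _ = t ^ β := by field_simp
  have htβ : t ^ β ≤ 1 := Real.rpow_le_one ht0 (by linarith) hβ0.le
  have hexp : Real.exp (A * t ^ γ) - 1 ≤ t ^ β := by
    have hnn : 0 ≤ A * t ^ γ := by positivity
    have h := Real.abs_exp_sub_one_le (x := A * t ^ γ) (by rw [abs_of_nonneg hnn]; linarith)
    rw [abs_of_nonneg hnn] at h
    exact (le_abs_self _).trans (h.trans htγ)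
  have hg := compList_differentiable f hdiff w
  set g := compList f w with hgdef
  have hdist : ∀ s ∈ uIcc y x, |deriv g s - deriv g y| ≤ t ^ β * |deriv g y| := by
    intro s hs
    have hsI : s ∈ Icc a b := ordConnected_Icc.uIcc_subset hy hx hs
    have hst : |s - y| ≤ t := abs_sub_left_of_mem_uIcc hs
    refine (compList_distortion f a b κ' κ γ C A hκ'0 hκ0.le hC hAeq hγ0 hmaps hdiff hbound
      hHolder w s hsI y hy).trans ?_
    refine mul_le_mul_of_nonneg_right (le_trans ?_ hexp) (abs_nonneg _)
    have hqn : 0 ≤ (κ ^ γ) ^ w.length := by positivity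
    have h1 : A * (1 - (κ ^ γ) ^ w.length) * |s - y| ^ γ ≤ A * t ^ γ := by
      calc A * (1 - (κ ^ γ) ^ w.length) * |s - y| ^ γ ≤ A * 1 * |s - y| ^ γ := by
            gcongr; linarith
        _ ≤ A * t ^ γ := by rw [mul_one]; gcongr
    gcongr
  have hFd : ∀ s, HasDerivAt (fun s => g s - deriv g y * s) (deriv g s - deriv g y) s := fun s => by
    have h := (hg s).hasDerivAt.fun_sub ((hasDerivAt_id s).const_mul (deriv g y))
    rw [mul_one] at h
    exact h
  have hmv := (convex_uIcc y x).norm_image_sub_le_of_norm_hasDerivWithin_le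
    (fun s _ => (hFd s).hasDerivWithinAt) hdist left_mem_uIcc right_mem_uIcc
  simp only [Real.norm_eq_abs] at hmv
  calc |g x - g y - deriv g y * (x - y)|
      = |g x - deriv g y * x - (g y - deriv g y * y)| := by ring_nf
    _ ≤ t ^ β * |deriv g y| * t := hmv
    _ = |deriv g y| * t ^ (1 + β) := by
      rw [Real.rpow_add_of_nonneg ht0 zero_le_one hβ0.le, Real.rpow_one]; ring
end
end

section
/- Let Φ be a finite family of differentiable self-maps of a compact interval I such that there are 0 < κ' ≤ κ < 1 with κ' ≤ |f'(x)| ≤ κ for all f ∈ Φ, x ∈ I, and such that each f' is γ-Hölder with constant C (γ ∈ (0,1), C > 0). Then there exists a constant C₀, depending only on κ', κ, C and γ, such that for every n ≥ 1, every map g that is a composition of n members of Φ, and all x, y ∈ I: |log|g'(x)| − log|g'(y)|| ≤ C₀·|x−y|^γ. -/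
/-!
By the chain rule, `log |g'|` for `g = f i₁ ∘ ⋯ ∘ f iₙ` is a sum of terms `log |f i'| ∘ h`, one for
each composition `h` along a proper suffix of the word. If `h` has length `k`, it contracts distances by
`κ ^ k` (`abs_compList_sub_le`). Since `log` is `1 / κ'`-Lipschitz on `[κ', ∞)`
(`abs_log_abs_sub_le`), the Hölder bound on `f i'` shows that this term varies by at most
`(C / κ') * (κ ^ γ) ^ k * |x - y| ^ γ` between `x` and `y`. Summing the geometric series gives the
constant `C / κ' / (1 - κ ^ γ)`, which does not depend on the length of the word.
-/

open Set

noncomputable section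

lemma abs_log_abs_sub_le {c u v : ℝ} (hc : 0 < c) (hu : c ≤ |u|) (hv : c ≤ |v|) :
    abs (Real.log |u| - Real.log |v|) ≤ |u - v| / c := by
  have key : ∀ s t : ℝ, c ≤ |s| → c ≤ |t| → Real.log |s| - Real.log |t| ≤ |s - t| / c := by
    intro s t hs ht
    have hs0 : 0 < |s| := hc.trans_le hs
    have ht0 : 0 < |t| := hc.trans_le ht
    rw [← Real.log_div hs0.ne' ht0.ne']
    calc Real.log (|s| / |t|) ≤ |s| / |t| - 1 := Real.log_le_sub_one_of_pos (by positivity)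
      _ = (|s| - |t|) / |t| := by field_simp
      _ ≤ |s - t| / |t| := by gcongr; exact abs_sub_abs_le_abs_sub s t
      _ ≤ |s - t| / c := by gcongr
  rw [abs_le]
  have h1 := key u v hu hv
  have h2 := key v u hv hu
  rw [abs_sub_comm v u] at h2
  constructor <;> linarith

lemma differentiable_compList {ι : Type*} {f : ι → ℝ → ℝ} (hd : ∀ i, Differentiable ℝ (f i))
    (w : List ι) : Differentiable ℝ (compList f w) := by
  induction w with
  | nil => exact differentiable_id
  | cons i l ih => exact (hd i).comp ih

lemma mapsTo_compList {ι : Type*} {f : ι → ℝ → ℝ} {s : Set ℝ} (hm : ∀ i, MapsTo (f i) s s)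
    (w : List ι) : MapsTo (compList f w) s s := by
  induction w with
  | nil => exact mapsTo_id s
  | cons i l ih => exact (hm i).comp ih

lemma abs_compList_sub_le {ι : Type*} {f : ι → ℝ → ℝ} {a b κ : ℝ} (hκ : 0 ≤ κ)
    (hm : ∀ i, MapsTo (f i) (Icc a b) (Icc a b)) (hd : ∀ i, Differentiable ℝ (f i))
    (hb : ∀ i, ∀ x ∈ Icc a b, |deriv (f i) x| ≤ κ) (w : List ι) {x y : ℝ}
    (hx : x ∈ Icc a b) (hy : y ∈ Icc a b) :
    |compList f w x - compList f w y| ≤ κ ^ w.length * |x - y| := by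
  induction w with
  | nil => simp [compList]
  | cons i l ih =>
    have h := (convex_Icc a b).norm_image_sub_le_of_norm_deriv_le
      (fun z _ => hd i z) (fun z hz => hb i z hz)
      (mapsTo_compList hm l hy) (mapsTo_compList hm l hx)
    calc |compList f (i :: l) x - compList f (i :: l) y|
        ≤ κ * |compList f l x - compList f l y| := h
      _ ≤ κ * (κ ^ l.length * |x - y|) := by gcongr
      _ = κ ^ (i :: l).length * |x - y| := by rw [List.length_cons]; ring

/-- The derivative of a composition does not vanish, so `log` turns the product in the chain
rule into a sum (`Real.log 0 = 0` would break this). -/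
lemma deriv_compList_ne_zero {ι : Type*} {f : ι → ℝ → ℝ} {s : Set ℝ}
    (hm : ∀ i, MapsTo (f i) s s) (hd : ∀ i, Differentiable ℝ (f i))
    (hb : ∀ i, ∀ x ∈ s, deriv (f i) x ≠ 0) (w : List ι) {x : ℝ} (hx : x ∈ s) :
    deriv (compList f w) x ≠ 0 := by
  induction w with
  | nil => simp [compList]
  | cons i l ih =>
    rw [compList, deriv_comp x (hd i _) (differentiable_compList hd l x)]
    exact mul_ne_zero (hb i _ (mapsTo_compList hm l hx)) ih

/-- Bounded distortion with the partial geometric sum as constant, the form that is inductive in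
the word. -/
lemma abs_log_deriv_compList_sub_le {ι : Type*} {f : ι → ℝ → ℝ} {a b κ' κ γ C : ℝ}
    (hκ' : 0 < κ') (hκ : 0 ≤ κ) (hγ : 0 < γ) (hC : 0 < C)
    (hm : ∀ i, MapsTo (f i) (Icc a b) (Icc a b)) (hd : ∀ i, Differentiable ℝ (f i))
    (hb : ∀ i, ∀ x ∈ Icc a b, κ' ≤ |deriv (f i) x| ∧ |deriv (f i) x| ≤ κ)
    (hh : ∀ i, ∀ x ∈ Icc a b, ∀ y ∈ Icc a b,
      |deriv (f i) x - deriv (f i) y| ≤ C * |x - y| ^ γ)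
    (w : List ι) {x y : ℝ} (hx : x ∈ Icc a b) (hy : y ∈ Icc a b) :
    abs (Real.log |deriv (compList f w) x| - Real.log |deriv (compList f w) y|)
      ≤ C / κ' * (∑ k ∈ Finset.range w.length, (κ ^ γ) ^ k) * |x - y| ^ γ := by
  have hne : ∀ i, ∀ z ∈ Icc a b, deriv (f i) z ≠ 0 := fun i z hz =>
    abs_pos.mp (hκ'.trans_le (hb i z hz).1)
  induction w with
  | nil => simp [compList]
  | cons i l ih =>
    have chain : ∀ z ∈ Icc a b, Real.log |deriv (compList f (i :: l)) z|
        = Real.log |deriv (f i) (compList f l z)| + Real.log |deriv (compList f l) z| := by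
      intro z hz
      rw [compList, deriv_comp z (hd i _) (differentiable_compList hd l z), abs_mul,
        Real.log_mul (abs_ne_zero.mpr (hne i _ (mapsTo_compList hm l hz)))
          (abs_ne_zero.mpr (deriv_compList_ne_zero hm hd hne l hz))]
    have hX := mapsTo_compList hm l hx
    have hY := mapsTo_compList hm l hy
    have outer : abs (Real.log |deriv (f i) (compList f l x)|
        - Real.log |deriv (f i) (compList f l y)|)
        ≤ C / κ' * (κ ^ γ) ^ l.length * |x - y| ^ γ :=
      calc _ ≤ |deriv (f i) (compList f l x) - deriv (f i) (compList f l y)| / κ' :=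
            abs_log_abs_sub_le hκ' (hb i _ hX).1 (hb i _ hY).1
        _ ≤ (C * |compList f l x - compList f l y| ^ γ) / κ' := by
            gcongr
            exact hh i _ hX _ hY
        _ ≤ (C * (κ ^ l.length * |x - y|) ^ γ) / κ' := by
            gcongr
            exact abs_compList_sub_le hκ hm hd (fun i z hz => (hb i z hz).2) l hx hy
        _ = C / κ' * (κ ^ γ) ^ l.length * |x - y| ^ γ := by
            rw [Real.mul_rpow (by positivity) (abs_nonneg _), Real.rpow_pow_comm hκ]
            ring
    rw [chain x hx, chain y hy, add_sub_add_comm, List.length_cons, Finset.sum_range_succ]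
    calc _ ≤ _ := abs_add_le _ _
      _ ≤ _ := add_le_add outer ih
      _ = _ := by ring

theorem stmt11 (κ' κ γ C : ℝ) (hκ'0 : 0 < κ') (hκ'κ : κ' ≤ κ) (hκ1 : κ < 1)
    (hγ0 : 0 < γ) (hγ1 : γ < 1) (hC : 0 < C) :
    ∃ C₀ : ℝ, 0 < C₀ ∧
      ∀ (ι : Type) [Fintype ι] (f : ι → ℝ → ℝ) (a b : ℝ), a < b →
        (∀ i, MapsTo (f i) (Icc a b) (Icc a b)) →
        (∀ i, Differentiable ℝ (f i)) →
        (∀ i, ∀ x ∈ Icc a b, κ' ≤ |deriv (f i) x| ∧ |deriv (f i) x| ≤ κ) →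
        (∀ i, ∀ x ∈ Icc a b, ∀ y ∈ Icc a b,
          |deriv (f i) x - deriv (f i) y| ≤ C * |x - y| ^ γ) →
        ∀ w : List ι, w ≠ [] → ∀ x ∈ Icc a b, ∀ y ∈ Icc a b,
          abs (Real.log |deriv (compList f w) x| - Real.log |deriv (compList f w) y|)
            ≤ C₀ * |x - y| ^ γ := by
  have hκ0 : 0 ≤ κ := hκ'0.le.trans hκ'κ
  have hr0 : 0 ≤ κ ^ γ := Real.rpow_nonneg hκ0 γ
  have hr1 : κ ^ γ < 1 := Real.rpow_lt_one hκ0 hκ1 hγ0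
  have hpos : 0 < (1 - κ ^ γ)⁻¹ := inv_pos.mpr (by linarith)
  refine ⟨C / κ' * (1 - κ ^ γ)⁻¹, by positivity, ?_⟩
  intro ι _ f a b _ hm hd hb hh w _ x hx y hy
  refine (abs_log_deriv_compList_sub_le hκ'0 hκ0 hγ0 hC hm hd hb hh w hx hy).trans ?_
  gcongr
  rw [← tsum_geometric_of_lt_one hr0 hr1]
  exact (summable_geometric_of_lt_one hr0 hr1).sum_le_tsum _ (fun k _ => by positivity)
end
end

section
/- Let (Ω, ℙ) be a probability space, let 0 < D ≤ D' be reals, let X : Ω → [D, D'] be measurable, let B ⊆ Ω be measurable with ℙ(B) > 0, and let a ∈ ℝ. Define, for Borel sets E ⊆ ℝ, Γ(E) = (∫_B λ([a, a+X(ω)] ∩ E) dℙ(ω)) / (∫_B X dℙ), where λ is Lebesgue measure. Then Γ is a Borel probability measure supported in [a, a+D'], Γ is absolutely continuous with respect to λ restricted to [a, a+D'], and its density is bounded almost everywhere by 1/D. -/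
/-!
Let `Q = P.restrict B` and `c = ∫_B X dP`. The measure `Γ` is built from its density, which is
`g x = c⁻¹ Q {ω | a ≤ x ≤ a + X ω}` on `[a, a + D']`. Tonelli's theorem applied to the region
`{(x, ω) | a ≤ x ≤ a + X ω}` turns `∫_E g` into the average of `λ([a, a + X ω] ∩ E)` over `B`
(`lintegral_slice_eq`); taking `E = ℝ` gives total mass `1`, since `λ [a, a + X ω] = X ω`.
The bound `g ≤ 1 / D` holds because the numerator is at most `P B` while `X ≥ D` gives
`c ≥ D * P B`.
-/

open MeasureTheory Set
open scoped ENNReal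

noncomputable section

theorem measurableSet_region {Ω : Type*} [MeasurableSpace Ω] {X : Ω → ℝ} (hX : Measurable X)
    (a : ℝ) : MeasurableSet {p : ℝ × Ω | p.1 ∈ Icc a (a + X p.2)} := by
  have h1 : MeasurableSet {p : ℝ × Ω | a ≤ p.1} :=
    measurableSet_le measurable_const measurable_fst
  have h2 : MeasurableSet {p : ℝ × Ω | p.1 ≤ a + X p.2} :=
    measurableSet_le measurable_fst (by fun_prop)
  exact h1.inter h2

/-- Tonelli for the region `{(x, ω) | a ≤ x ≤ a + X ω}`: the truncation to `[a, a + D']` is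
invisible because `X ≤ D'`. -/
theorem lintegral_slice_eq {Ω : Type*} [MeasurableSpace Ω] (Q : Measure Ω) [SFinite Q]
    {X : Ω → ℝ} (hX : Measurable X) {a D' : ℝ} (hXD : ∀ ω, X ω ≤ D')
    {E : Set ℝ} (hE : MeasurableSet E) :
    ∫⁻ x in E, Q {ω | x ∈ Icc a (a + X ω)} ∂(volume.restrict (Icc a (a + D'))) =
      ∫⁻ ω, volume (Icc a (a + X ω) ∩ E) ∂Q := by
  have hS := measurableSet_region hX a
  have h1 := Measure.prod_apply
    (μ := (volume.restrict (Icc a (a + D'))).restrict E) (ν := Q) hS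
  rw [Measure.prod_apply_symm hS] at h1
  refine h1.symm.trans (lintegral_congr fun ω => ?_)
  change ((volume.restrict (Icc a (a + D'))).restrict E) (Icc a (a + X ω)) = _
  rw [Measure.restrict_apply measurableSet_Icc,
    Measure.restrict_apply (measurableSet_Icc.inter hE)]
  congr 1
  apply inter_eq_left.2
  rintro x ⟨hx, -⟩
  exact ⟨hx.1, hx.2.trans (by linarith [hXD ω])⟩

theorem stmt13 {Ω : Type*} [MeasurableSpace Ω] (P : Measure Ω) (hP : IsProbabilityMeasure P)
    (D D' : ℝ) (hD : 0 < D) (hDD' : D ≤ D')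
    (X : Ω → ℝ) (hX : Measurable X) (hXr : ∀ ω, X ω ∈ Icc D D')
    (B : Set Ω) (hB : MeasurableSet B) (hBpos : 0 < P B) (a : ℝ) :
    ∃ Γ : Measure ℝ, IsProbabilityMeasure Γ ∧
      (∀ E : Set ℝ, MeasurableSet E →
        Γ E = ENNReal.ofReal
          ((∫ ω in B, (volume (Icc a (a + X ω) ∩ E)).toReal ∂P) / (∫ ω in B, X ω ∂P))) ∧
      Γ (Icc a (a + D'))ᶜ = 0 ∧
      Γ ≪ volume.restrict (Icc a (a + D')) ∧
      ∃ g : ℝ → ℝ≥0∞, Γ = (volume.restrict (Icc a (a + D'))).withDensity g ∧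
        ∀ᵐ x ∂(volume : Measure ℝ), g x ≤ ENNReal.ofReal (1 / D) := by
  set Q : Measure Ω := P.restrict B with hQ
  set I : Set ℝ := Icc a (a + D') with hI
  set c : ℝ := ∫ ω in B, X ω ∂P with hc
  have hQuniv : Q univ = P B := by simp [hQ]
  have hint : Integrable X Q := by
    refine Integrable.of_bound hX.aestronglyMeasurable D' (ae_of_all _ fun ω => ?_)
    rw [Real.norm_eq_abs, abs_of_nonneg (hD.le.trans (hXr ω).1)]
    exact (hXr ω).2
  have hcC : ENNReal.ofReal c = ∫⁻ ω, ENNReal.ofReal (X ω) ∂Q :=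
    ofReal_integral_eq_lintegral_ofReal hint (ae_of_all _ fun ω => hD.le.trans (hXr ω).1)
  have hlow : ENNReal.ofReal D * P B ≤ ENNReal.ofReal c := by
    rw [hcC, ← hQuniv, ← lintegral_const]
    exact lintegral_mono fun ω => ENNReal.ofReal_le_ofReal (hXr ω).1
  have hD0 : ENNReal.ofReal D ≠ 0 := by simpa using hD
  have hC0 : ENNReal.ofReal c ≠ 0 :=
    ne_of_gt (lt_of_lt_of_le (ENNReal.mul_pos hD0 hBpos.ne') hlow)
  have hcpos : 0 < c := by
    by_contra h
    exact hC0 (ENNReal.ofReal_of_nonpos (not_lt.1 h))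
  set g : ℝ → ℝ≥0∞ := fun x => (ENNReal.ofReal c)⁻¹ * Q {ω | x ∈ Icc a (a + X ω)} with hg
  have hmeas : Measurable fun x => Q {ω | x ∈ Icc a (a + X ω)} :=
    measurable_measure_prodMk_left (measurableSet_region hX a)
  have hform : ∀ E : Set ℝ, MeasurableSet E → ((volume.restrict I).withDensity g) E =
      (ENNReal.ofReal c)⁻¹ * ∫⁻ ω, volume (Icc a (a + X ω) ∩ E) ∂Q := by
    intro E hE
    rw [withDensity_apply _ hE, hg, lintegral_const_mul _ hmeas,
      lintegral_slice_eq Q hX (fun ω => (hXr ω).2) hE]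
  have hac : (volume.restrict I).withDensity g ≪ volume.restrict I :=
    withDensity_absolutelyContinuous _ _
  refine ⟨(volume.restrict I).withDensity g, ⟨?_⟩, ?_, ?_, hac, g, rfl, ?_⟩
  · rw [hform _ MeasurableSet.univ]
    simp only [inter_univ, Real.volume_Icc, add_sub_cancel_left]
    rw [← hcC, ENNReal.inv_mul_cancel hC0 ENNReal.ofReal_ne_top]
  · intro E hE
    have hmE : Measurable fun ω => volume (Icc a (a + X ω) ∩ E) := by
      have h := measurable_measure_prodMk_right (μ := (volume : Measure ℝ))
        ((measurableSet_region hX a).inter (measurable_fst hE))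
      exact h
    have hfin : ∀ ω, volume (Icc a (a + X ω) ∩ E) < ∞ := fun ω =>
      (measure_mono inter_subset_left).trans_lt measure_Icc_lt_top
    have hlfin : ∫⁻ ω, volume (Icc a (a + X ω) ∩ E) ∂Q ≠ ∞ := by
      refine ne_top_of_le_ne_top (b := ENNReal.ofReal c) ENNReal.ofReal_ne_top ?_
      rw [hcC]
      refine lintegral_mono fun ω => (measure_mono inter_subset_left).trans ?_
      simp
    rw [hform E hE, integral_toReal hmE.aemeasurable (ae_of_all _ hfin),
      ENNReal.ofReal_div_of_pos hcpos, ENNReal.ofReal_toReal hlfin, ENNReal.div_eq_inv_mul]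
  · apply hac
    rw [Measure.restrict_apply measurableSet_Icc.compl, compl_inter_self, measure_empty]
  · refine ae_of_all _ fun x => ?_
    have hle : Q {ω | x ∈ Icc a (a + X ω)} ≤ P B := hQuniv ▸ measure_mono (subset_univ _)
    rw [ENNReal.ofReal_div_of_pos hD, ENNReal.ofReal_one, one_div, hg]
    change (ENNReal.ofReal c)⁻¹ * _ ≤ _
    rw [← ENNReal.div_eq_inv_mul]
    refine ENNReal.div_le_of_le_mul (hle.trans ?_)
    calc P B = (ENNReal.ofReal D)⁻¹ * (ENNReal.ofReal D * P B) := by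
          rw [← mul_assoc, ENNReal.inv_mul_cancel hD0 ENNReal.ofReal_ne_top, one_mul]
      _ ≤ _ := by gcongr
end
end
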